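/- For any 0 < b < 𝓛₀ < ∞ there exists a bounded g : ℤ → ℝ with δ(g) = b and 𝓛(E) ≥ 𝓛₀ for every E ∈ ℝ, such that H_g has Anderson localization — that is, a complete orthonormal set of eigenfunctions {φ_s} in ℓ²(ℤ) and γ > 0, n_s ∈ ℤ, C_s < ∞ with |φ_s(n)| ≤ C_s·e^{−γ|n−n_s|} for all s, n — but H_g does not have SULE. -/

import Mathlib

noncomputable section

open Filter Real

def distToInt (x : ℝ) : ℝ := |x - round x|

def IsDiophantine (α : ℝ) : Prop :=
  ∃ κ τ : ℝ, 0 < κ ∧ 0 < τ ∧ ∀ k : ℤ, k ≠ 0 → τ / |(k : ℝ)| ^ κ ≤ distToInt (k * α)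

def deltaPhase (α θ : ℝ) : ℝ :=
  limsup (fun n : ℤ => -Real.log (distToInt (2 * θ + n * α)) / |(n : ℝ)|) cofinite

def amoPot (lam α θ : ℝ) : ℤ → ℝ := fun n => 2 * lam * Real.cos (2 * Real.pi * (θ + n * α))

def IsEigenfunction (g : ℤ → ℝ) (E : ℝ) (φ : ℤ → ℝ) : Prop :=
  ∀ n : ℤ, φ (n + 1) + φ (n - 1) + g n * φ n = E * φ n

def deltaPot (g : ℤ → ℝ) : ℝ :=
  limsup (fun n : ℤ => -Real.log (⨆ m : ℤ, |g (n - m) - g m|) / |(n : ℝ)|) cofinite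

def matNorm (M : Matrix (Fin 2) (Fin 2) ℝ) : ℝ := ⨆ p : Fin 2 × Fin 2, |M p.1 p.2|

def transfer (g : ℤ → ℝ) (E : ℝ) : ℕ → ℤ → Matrix (Fin 2) (Fin 2) ℝ
  | 0, _ => 1
  | n + 1, k => !![E - g (k + n), -1; 1, 0] * transfer g E n k

def LyapSup (g : ℤ → ℝ) (E : ℝ) : ℝ :=
  limsup (fun n : ℕ => ⨆ k : ℤ, Real.log (matNorm (transfer g E n k)) / n) atTop

def HasSULE (g : ℤ → ℝ) : Prop :=
  ∃ (Φ : HilbertBasis ℕ ℝ (lp (fun _ : ℤ => ℝ) 2)) (ns : ℕ → ℤ) (γ : ℝ),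
    0 < γ ∧
    (∀ s : ℕ, ∃ E : ℝ, IsEigenfunction g E (fun n => Φ s n)) ∧
    ∀ ε : ℝ, 0 < ε → ∃ C : ℝ,
      ∀ (s : ℕ) (n : ℤ),
        |Φ s n| ≤ C * Real.exp (ε * |(ns s : ℝ)|) * Real.exp (-γ * |(n : ℝ) - (ns s : ℝ)|)

def HasAndersonLocalization (g : ℤ → ℝ) : Prop :=
  ∃ (Φ : HilbertBasis ℕ ℝ (lp (fun _ : ℤ => ℝ) 2)) (ns : ℕ → ℤ) (γ : ℝ),
    0 < γ ∧
    (∀ s : ℕ, ∃ E : ℝ, IsEigenfunction g E (fun n => Φ s n)) ∧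
    ∀ s : ℕ, ∃ C : ℝ, ∀ n : ℤ,
      |Φ s n| ≤ C * Real.exp (-γ * |(n : ℝ) - (ns s : ℝ)|)

/-!
The potential `g` is a limit of approximations `g_j`. The approximation `g_{j+1}` is invariant
under the reflections exchanging neighbouring cells of length `Q_j`, where `Q_j` grows doubly
exponentially, and all later perturbations are so small that `g` itself is symmetric, up to an error
of order `exp (-b |n|)`, under a reflection `m ↦ n - m` for one `n = n_j` of each level, `n_j → ∞`.
The perturbation at level `j` is a staircase in each cell: by a union bound on its jumps it can be
chosen such that Dirichlet eigenvalues on disjoint subintervals of a cell are separated by a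
negative power of `Q_j` times its amplitude. The separation also bounds the defect of every
reflection from below, whence `δ(g) = b`.

An interval in which eigenvalues are separated has few of them close to a given energy, so a large
coupling at level `0` makes the Dirichlet determinants on one of any two disjoint intervals grow
almost optimally. This gives `𝓛(E) ≥ 𝓛₀` and, by the Poisson formula, a dichotomy for the
eigenfunctions of large boxes centred at `0`: they are exponentially small either near `0` or in an
annulus. Hence limits of box eigenfunctions are exponentially decaying eigenfunctions, and they are
complete.

If a reflection of centre `n / 2` is a symmetry up to `exp (-b |n|)`, then the Wronskian of an
eigenfunction with its reflection is of this size, so the eigenfunction is almost even or almost odd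
near `n / 2`. Under SULE it would therefore be exponentially small in `|n|` at a point `m` at
distance of order `|n|` from `n / 2`, uniformly over the basis, and this contradicts Parseval's
identity at `m`.
-/

/-! ### Dirichlet restrictions -/

/-- The formal action `H_g u` of the discrete Schrödinger operator on an arbitrary sequence. -/
def schrodinger (g u : ℤ → ℝ) (n : ℤ) : ℝ := u (n + 1) + u (n - 1) + g n * u n

/-- `E` is an eigenvalue of the Dirichlet restriction of `H_g` to the finite set `S`. Vectors on
`S` are encoded as sequences on `ℤ` vanishing off `S`. -/
def IsDirichletEigenvalue (g : ℤ → ℝ) (S : Finset ℤ) (E : ℝ) : Prop :=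
  ∃ u : ℤ → ℝ, (∀ n ∉ S, u n = 0) ∧ (∃ n, u n ≠ 0) ∧ ∀ n ∈ S, schrodinger g u n = E * u n

/-- At a maximum of `|u|` the eigenvalue equation bounds the eigenvalue. -/
lemma abs_le_add_two_of_forall_abs_le {g u : ℤ → ℝ} {E M : ℝ} {x : ℤ} (hg : ∀ n, |g n| ≤ M)
    (heq : schrodinger g u x = E * u x) (hmax : ∀ n, |u n| ≤ |u x|) (hx : u x ≠ 0) :
    |E| ≤ M + 2 := by
  refine le_of_mul_le_mul_right ?_ (abs_pos.2 hx)
  calc |E| * |u x| = |u (x + 1) + u (x - 1) + g x * u x| := by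
        rw [← abs_mul, ← heq, schrodinger]
    _ ≤ |u (x + 1)| + |u (x - 1)| + |g x| * |u x| := by
        rw [← abs_mul]; exact abs_add_three _ _ _
    _ ≤ |u x| + |u x| + M * |u x| := by
        have := mul_le_mul_of_nonneg_right (hg x) (abs_nonneg (u x))
        linarith [hmax (x + 1), hmax (x - 1)]
    _ = (M + 2) * |u x| := by ring

/-- The box of `l` consecutive sites whose leftmost site is `a`. -/
abbrev box (a : ℤ) (l : ℕ) : Finset ℤ := Finset.Ico a (a + l)

namespace IsDirichletEigenvalue

variable {g g' : ℤ → ℝ} {S T : Finset ℤ} {E : ℝ}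

lemma nonempty (h : IsDirichletEigenvalue g S E) : S.Nonempty := by
  obtain ⟨u, hu, ⟨n, hn⟩, -⟩ := h
  exact ⟨n, by_contra fun hc => hn (hu n hc)⟩

lemma congr (h : IsDirichletEigenvalue g S E) (hg : ∀ n ∈ S, g n = g' n) :
    IsDirichletEigenvalue g' S E := by
  obtain ⟨u, hu, hne, heq⟩ := h
  refine ⟨u, hu, hne, fun n hn => ?_⟩
  rw [← heq n hn, schrodinger, schrodinger, hg n hn]

lemma add_const (h : IsDirichletEigenvalue g S E) (t : ℝ) :
    IsDirichletEigenvalue (fun n => g n + t) S (E + t) := by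
  obtain ⟨u, hu, hne, heq⟩ := h
  refine ⟨u, hu, hne, fun n hn => ?_⟩
  have := heq n hn
  simp only [schrodinger] at this ⊢
  linear_combination this

lemma translate (h : IsDirichletEigenvalue g S E) (t : ℤ) (hT : ∀ n, n ∈ T ↔ n - t ∈ S) :
    IsDirichletEigenvalue (fun n => g (n - t)) T E := by
  obtain ⟨u, hu, ⟨m, hm⟩, heq⟩ := h
  refine ⟨fun n => u (n - t), fun n hn => hu _ (mt (hT n).2 hn), ⟨m + t, by simpa using hm⟩,
    fun n hn => ?_⟩
  have := heq (n - t) ((hT n).1 hn)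
  simp only [schrodinger] at this ⊢
  rw [← this, show n + 1 - t = n - t + 1 by ring, show n - 1 - t = n - t - 1 by ring]

lemma reflect (h : IsDirichletEigenvalue g S E) (t : ℤ) (hT : ∀ n, n ∈ T ↔ t - n ∈ S) :
    IsDirichletEigenvalue (fun n => g (t - n)) T E := by
  obtain ⟨u, hu, ⟨m, hm⟩, heq⟩ := h
  refine ⟨fun n => u (t - n), fun n hn => hu _ (mt (hT n).2 hn), ⟨t - m, by simpa using hm⟩,
    fun n hn => ?_⟩
  have := heq (t - n) ((hT n).1 hn)
  simp only [schrodinger] at this ⊢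
  rw [← this, show t - (n + 1) = t - n - 1 by ring, show t - (n - 1) = t - n + 1 by ring,
    add_comm (u (t - n - 1))]

lemma abs_le {M : ℝ} (h : IsDirichletEigenvalue g S E) (hg : ∀ n, |g n| ≤ M) : |E| ≤ M + 2 := by
  obtain ⟨u, hu, ⟨m, hm⟩, heq⟩ := h
  obtain ⟨x, hx, hmax⟩ := S.exists_max_image (fun n => |u n|)
    ⟨m, by_contra fun hc => hm (hu m hc)⟩
  have hall : ∀ n, |u n| ≤ |u x| := fun n => by
    by_cases hn : n ∈ S
    · exact hmax n hn
    · simp [hu n hn]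
  exact abs_le_add_two_of_forall_abs_le hg (heq x hx) hall
    (abs_pos.1 ((abs_pos.2 hm).trans_le (hall m)))

end IsDirichletEigenvalue

/-- The matrix of the Dirichlet restriction of `H_g` to `S`. -/
def dirichletMatrix (g : ℤ → ℝ) (S : Finset ℤ) : Matrix S S ℝ :=
  Matrix.of fun i j =>
    if j.1 = i.1 then g i.1 else if j.1 = i.1 + 1 ∨ j.1 = i.1 - 1 then 1 else 0

lemma isHermitian_dirichletMatrix (g : ℤ → ℝ) (S : Finset ℤ) :
    (dirichletMatrix g S).IsHermitian := by
  ext i j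
  rcases eq_or_ne i j with rfl | h
  · simp [dirichletMatrix]
  · have hsymm : (i.1 = j.1 + 1 ∨ i.1 = j.1 - 1) ↔ (j.1 = i.1 + 1 ∨ j.1 = i.1 - 1) := by omega
    simp [dirichletMatrix, h, h.symm, hsymm]

lemma sum_dirichletMatrix_mul (g : ℤ → ℝ) {S : Finset ℤ} {u : ℤ → ℝ} (hu : ∀ n ∉ S, u n = 0)
    (i : S) : ∑ j : S, dirichletMatrix g S i j * u j = schrodinger g u i := by
  have hentry : ∀ m, (if m = i.1 then g i else if m = i.1 + 1 ∨ m = i.1 - 1 then 1 else 0) * u m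
      = (if m = i.1 + 1 then u m else 0) + (if m = i.1 - 1 then u m else 0)
        + if m = i.1 then g i * u m else 0 := fun m => by
    split_ifs <;> first | omega | simp
  have hmem : ∀ m, (if m ∈ S then u m else 0) = u m := fun m => by
    split_ifs with h
    exacts [rfl, (hu m h).symm]
  simp only [dirichletMatrix, Matrix.of_apply]
  rw [Finset.sum_coe_sort S fun m =>
    (if m = i.1 then g i else if m = i.1 + 1 ∨ m = i.1 - 1 then 1 else 0) * u m]
  simp_rw [hentry, Finset.sum_add_distrib, Finset.sum_ite_eq', hmem, if_pos i.2, schrodinger]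

/-- The eigenvalues of the Dirichlet restriction of `H_g` to `S`, with multiplicity; the index set
`S` only provides the right number of labels. -/
def dirichletEigenvalue (g : ℤ → ℝ) (S : Finset ℤ) : S → ℝ :=
  (isHermitian_dirichletMatrix g S).eigenvalues

/-- An orthonormal basis of eigenvectors of the Dirichlet restriction of `H_g` to `S`, extended by
zero to `ℤ`. -/
def dirichletEigenvector (g : ℤ → ℝ) (S : Finset ℤ) (i : S) (n : ℤ) : ℝ :=
  if h : n ∈ S then (isHermitian_dirichletMatrix g S).eigenvectorBasis i ⟨n, h⟩ else 0

section DirichletSpectrum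

variable (g : ℤ → ℝ) {S : Finset ℤ}

lemma dirichletEigenvector_of_notMem (i : S) {n : ℤ} (hn : n ∉ S) :
    dirichletEigenvector g S i n = 0 := dif_neg hn

lemma dirichletEigenvector_coe (i n : S) : dirichletEigenvector g S i n =
    (isHermitian_dirichletMatrix g S).eigenvectorBasis i n := dif_pos n.2

lemma schrodinger_dirichletEigenvector (i : S) {n : ℤ} (hn : n ∈ S) :
    schrodinger g (dirichletEigenvector g S i) n =
      dirichletEigenvalue g S i * dirichletEigenvector g S i n := by
  have h := congrFun ((isHermitian_dirichletMatrix g S).mulVec_eigenvectorBasis i) ⟨n, hn⟩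
  rw [← sum_dirichletMatrix_mul g (fun m => dirichletEigenvector_of_notMem g i) ⟨n, hn⟩]
  simp_rw [dirichletEigenvector_coe]
  rw [dirichletEigenvector_coe g i ⟨n, hn⟩]
  exact h

lemma sum_dirichletEigenvector_mul_dirichletEigenvector (i k : S) :
    ∑ n ∈ S, dirichletEigenvector g S i n * dirichletEigenvector g S k n =
      if i = k then 1 else 0 := by
  rw [← orthonormal_iff_ite.1 (isHermitian_dirichletMatrix g S).eigenvectorBasis.orthonormal i k,
    ← Finset.sum_coe_sort, PiLp.inner_apply]
  simp_rw [dirichletEigenvector_coe]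
  simp [mul_comm]

lemma sum_dirichletEigenvector_apply_mul_apply {n m : ℤ} (hn : n ∈ S) (hm : m ∈ S) :
    ∑ i, dirichletEigenvector g S i n * dirichletEigenvector g S i m =
      if n = m then 1 else 0 := by
  have h := (isHermitian_dirichletMatrix g S).eigenvectorBasis.sum_inner_mul_inner
    (EuclideanSpace.single ⟨n, hn⟩ 1) (EuclideanSpace.single ⟨m, hm⟩ 1)
  simp only [EuclideanSpace.inner_single_left, EuclideanSpace.inner_single_right, map_one,
    one_mul, conj_trivial] at h
  simpa [dirichletEigenvector, hn, hm, Pi.single_apply, eq_comm (a := m)] using h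

lemma exists_dirichletEigenvector_ne_zero (i : S) : ∃ n, dirichletEigenvector g S i n ≠ 0 := by
  by_contra! hzero
  simpa [hzero] using sum_dirichletEigenvector_mul_dirichletEigenvector g i i

lemma isDirichletEigenvalue_dirichletEigenvalue (i : S) :
    IsDirichletEigenvalue g S (dirichletEigenvalue g S i) :=
  ⟨_, fun _ => dirichletEigenvector_of_notMem g i, exists_dirichletEigenvector_ne_zero g i,
    fun _ => schrodinger_dirichletEigenvector g i⟩

lemma sum_sq_sum_mul_dirichletEigenvector (c : S → ℝ) :
    ∑ n ∈ S, (∑ i, c i * dirichletEigenvector g S i n) ^ 2 = ∑ i, c i ^ 2 := by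
  have hexpand : ∀ n, (∑ i, c i * dirichletEigenvector g S i n) ^ 2 =
      ∑ i, ∑ k, c i * c k * (dirichletEigenvector g S i n * dirichletEigenvector g S k n) :=
    fun n => by simp_rw [sq, Finset.sum_mul_sum, mul_mul_mul_comm]
  simp_rw [hexpand]
  rw [Finset.sum_comm]
  refine Finset.sum_congr rfl fun i _ => ?_
  rw [Finset.sum_comm]
  simp_rw [← Finset.mul_sum, sum_dirichletEigenvector_mul_dirichletEigenvector]
  simp [sq]

lemma schrodinger_sum_mul_dirichletEigenvector (c : S → ℝ) (E : ℝ) {n : ℤ} (hn : n ∈ S) :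
    schrodinger g (fun n => ∑ i, c i * dirichletEigenvector g S i n) n -
        E * ∑ i, c i * dirichletEigenvector g S i n =
      ∑ i, c i * (dirichletEigenvalue g S i - E) * dirichletEigenvector g S i n := by
  simp only [schrodinger, Finset.mul_sum, ← Finset.sum_add_distrib, ← Finset.sum_sub_distrib]
  refine Finset.sum_congr rfl fun i _ => ?_
  have := schrodinger_dirichletEigenvector g i hn
  rw [schrodinger] at this
  linear_combination c i * this

/-- The coefficient of `u` along the `i`-th Dirichlet eigenvector on `S`. -/
def dirichletCoeff (g : ℤ → ℝ) (S : Finset ℤ) (u : ℤ → ℝ) (i : S) : ℝ :=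
  ∑ m ∈ S, dirichletEigenvector g S i m * u m

variable {g} {u : ℤ → ℝ}

lemma sum_dirichletCoeff_mul_dirichletEigenvector {n : ℤ} (hn : n ∈ S) :
    ∑ i, dirichletCoeff g S u i * dirichletEigenvector g S i n = u n :=
  calc ∑ i, dirichletCoeff g S u i * dirichletEigenvector g S i n
      = ∑ m ∈ S, u m * ∑ i, dirichletEigenvector g S i m * dirichletEigenvector g S i n := by
        simp_rw [dirichletCoeff, Finset.sum_mul, Finset.mul_sum]
        rw [Finset.sum_comm]
        exact Finset.sum_congr rfl fun _ _ => Finset.sum_congr rfl fun _ _ => by ring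
    _ = ∑ m ∈ S, u m * if m = n then 1 else 0 := Finset.sum_congr rfl fun m hm => by
        rw [sum_dirichletEigenvector_apply_mul_apply g hm hn]
    _ = u n := by simp [hn]

lemma sum_dirichletCoeff_mul_dirichletEigenvector_of_support (hu : ∀ n ∉ S, u n = 0) (n : ℤ) :
    ∑ i, dirichletCoeff g S u i * dirichletEigenvector g S i n = u n := by
  by_cases hn : n ∈ S
  · exact sum_dirichletCoeff_mul_dirichletEigenvector hn
  · simp [dirichletEigenvector_of_notMem g _ hn, hu n hn]

lemma sum_sq_eq_sum_dirichletCoeff_sq :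
    ∑ n ∈ S, u n ^ 2 = ∑ i, dirichletCoeff g S u i ^ 2 := by
  rw [← sum_sq_sum_mul_dirichletEigenvector g]
  exact Finset.sum_congr rfl fun n hn => by rw [sum_dirichletCoeff_mul_dirichletEigenvector hn]

lemma sum_schrodinger_sub_sq (hu : ∀ n ∉ S, u n = 0) (E : ℝ) :
    ∑ n ∈ S, (schrodinger g u n - E * u n) ^ 2 =
      ∑ i, (dirichletCoeff g S u i * (dirichletEigenvalue g S i - E)) ^ 2 := by
  rw [← sum_sq_sum_mul_dirichletEigenvector g]
  refine Finset.sum_congr rfl fun n hn => ?_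
  rw [← schrodinger_sum_mul_dirichletEigenvector g _ _ hn]
  simp_rw [sum_dirichletCoeff_mul_dirichletEigenvector_of_support hu]

/-- A unit vector with `‖(H - E) u‖ ≤ d` forces the spectrum of a self-adjoint matrix to meet
`[E - d, E + d]`. -/
lemma exists_abs_dirichletEigenvalue_sub_le (hu : ∀ n ∉ S, u n = 0) (hne : ∃ n, u n ≠ 0)
    {E d : ℝ} (hd : 0 ≤ d)
    (hr : ∑ n ∈ S, (schrodinger g u n - E * u n) ^ 2 ≤ d ^ 2 * ∑ n ∈ S, u n ^ 2) :
    ∃ i, |dirichletEigenvalue g S i - E| ≤ d := by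
  by_contra! hfar
  have hfar_sq : ∀ i, d ^ 2 < (dirichletEigenvalue g S i - E) ^ 2 := fun i =>
    sq_lt_sq.2 (by rw [abs_of_nonneg hd]; exact hfar i)
  obtain ⟨i, hi⟩ : ∃ i, dirichletCoeff g S u i ≠ 0 := by
    by_contra! hzero
    obtain ⟨n, hn⟩ := hne
    refine hn ?_
    simp [← sum_dirichletCoeff_mul_dirichletEigenvector_of_support (g := g) hu n, hzero]
  rw [sum_schrodinger_sub_sq hu, sum_sq_eq_sum_dirichletCoeff_sq (g := g), Finset.mul_sum] at hr
  refine hr.not_gt (Finset.sum_lt_sum (fun k _ => ?_) ⟨i, Finset.mem_univ i, ?_⟩)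
  · rw [mul_pow, mul_comm]
    exact mul_le_mul_of_nonneg_left (hfar_sq k).le (sq_nonneg _)
  · rw [mul_pow, mul_comm]
    exact mul_lt_mul_of_pos_left (hfar_sq i) (by positivity)

end DirichletSpectrum

namespace IsDirichletEigenvalue

variable {g g' : ℤ → ℝ} {S : Finset ℤ} {E : ℝ}

lemma exists_abs_dirichletEigenvalue_sub_le {d : ℝ} (hE : IsDirichletEigenvalue g' S E)
    (hd : 0 ≤ d) (hg : ∀ n ∈ S, |g n - g' n| ≤ d) : ∃ i, |dirichletEigenvalue g S i - E| ≤ d := by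
  obtain ⟨u, hu, hne, heq⟩ := hE
  refine _root_.exists_abs_dirichletEigenvalue_sub_le hu hne hd ?_
  rw [Finset.mul_sum]
  refine Finset.sum_le_sum fun n hn => ?_
  have hdiff : schrodinger g u n - E * u n = (g n - g' n) * u n := by
    rw [← heq n hn, schrodinger, schrodinger]; ring
  rw [hdiff, mul_pow]
  exact mul_le_mul_of_nonneg_right (sq_le_sq.2 (by rw [abs_of_nonneg hd]; exact hg n hn))
    (sq_nonneg _)

lemma exists_near_of_abs_sub_le {d : ℝ} (hE : IsDirichletEigenvalue g' S E) (hd : 0 ≤ d)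
    (hg : ∀ n ∈ S, |g n - g' n| ≤ d) : ∃ F, IsDirichletEigenvalue g S F ∧ |F - E| ≤ d :=
  let ⟨i, hi⟩ := hE.exists_abs_dirichletEigenvalue_sub_le hd hg
  ⟨_, isDirichletEigenvalue_dirichletEigenvalue g i, hi⟩

lemma exists_dirichletEigenvalue_eq (hE : IsDirichletEigenvalue g S E) :
    ∃ i, dirichletEigenvalue g S i = E := by
  obtain ⟨i, hi⟩ := hE.exists_abs_dirichletEigenvalue_sub_le le_rfl (g := g) (by simp)
  exact ⟨i, sub_eq_zero.1 (abs_nonpos_iff.1 hi)⟩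

end IsDirichletEigenvalue

lemma exists_finset_card_le_of_isDirichletEigenvalue (g : ℤ → ℝ) (S : Finset ℤ) :
    ∃ s : Finset ℝ, s.card ≤ S.card ∧ ∀ E, IsDirichletEigenvalue g S E → E ∈ s := by
  refine ⟨Finset.univ.image (dirichletEigenvalue g S), ?_, fun E hE => ?_⟩
  · simpa using Finset.card_image_le (s := Finset.univ) (f := dirichletEigenvalue g S)
  · simpa using hE.exists_dirichletEigenvalue_eq

/-! ### Counting eigenvalues near an energy -/

/-- The number of eigenvalues, with multiplicity, of the Dirichlet restriction of `H_g` to `S` at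
distance less than `η` from `E`. -/
def eigenvalueCount (g : ℤ → ℝ) (S : Finset ℤ) (E η : ℝ) : ℕ :=
  (Finset.univ.filter fun i => |dirichletEigenvalue g S i - E| < η).card

lemma exists_isDirichletEigenvalue_of_eigenvalueCount_pos {g : ℤ → ℝ} {S : Finset ℤ} {E η : ℝ}
    (h : 0 < eigenvalueCount g S E η) : ∃ F, IsDirichletEigenvalue g S F ∧ |F - E| < η :=
  let ⟨i, hi⟩ := Finset.card_pos.1 h
  ⟨_, isDirichletEigenvalue_dirichletEigenvalue g i, (Finset.mem_filter.1 hi).2⟩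

lemma sum_mul_dirichletEigenvalue_sub_sq_lt {g : ℤ → ℝ} {S : Finset ℤ} {E η : ℝ} {c : S → ℝ}
    (hc : ∃ i, c i ≠ 0) (hnear : ∀ i, c i ≠ 0 → |dirichletEigenvalue g S i - E| < η) :
    ∑ i, (c i * (dirichletEigenvalue g S i - E)) ^ 2 < η ^ 2 * ∑ i, c i ^ 2 := by
  have hlt : ∀ i, c i ≠ 0 →
      (c i * (dirichletEigenvalue g S i - E)) ^ 2 < η ^ 2 * c i ^ 2 := fun i hi => by
    rw [mul_pow, mul_comm]
    exact mul_lt_mul_of_pos_right (sq_lt_sq.2 ((hnear i hi).trans_le (le_abs_self η)))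
      (by positivity)
  obtain ⟨i₀, hi₀⟩ := hc
  rw [Finset.mul_sum]
  refine Finset.sum_lt_sum (fun i _ => ?_) ⟨i₀, Finset.mem_univ _, hlt i₀ hi₀⟩
  by_cases hi : c i = 0
  · simp [hi]
  · exact (hlt i hi).le

/-- Min-max: if `‖(H - E) u‖ ≥ η ‖u‖` on the common kernel of finitely many functionals, then there
are at most as many eigenvalues in `(E - η, E + η)` as functionals. -/
lemma eigenvalueCount_le_card {ι : Type*} [Fintype ι] {g : ℤ → ℝ} {S : Finset ℤ} {E η : ℝ}
    (L : ι → (ℤ → ℝ) →ₗ[ℝ] ℝ)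
    (hL : ∀ u : ℤ → ℝ, (∀ n ∉ S, u n = 0) → (∀ k, L k u = 0) →
      η ^ 2 * ∑ n ∈ S, u n ^ 2 ≤ ∑ n ∈ S, (schrodinger g u n - E * u n) ^ 2) :
    eigenvalueCount g S E η ≤ Fintype.card ι := by
  by_contra! hcard
  let T : (S → ℝ) →ₗ[ℝ] (ι → ℝ) × ({i // ¬|dirichletEigenvalue g S i - E| < η} → ℝ) :=
    (LinearMap.pi fun k => L k ∘ₗ Fintype.linearCombination ℝ (dirichletEigenvector g S)).prod
      (LinearMap.funLeft ℝ ℝ Subtype.val)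
  have hker : LinearMap.ker T ≠ ⊥ := by
    apply LinearMap.ker_ne_bot_of_finrank_lt
    have hle := Fintype.card_subtype_le fun i => |dirichletEigenvalue g S i - E| < η
    rw [eigenvalueCount, ← Fintype.card_subtype] at hcard
    rw [Module.finrank_prod, Module.finrank_fintype_fun_eq_card,
      Module.finrank_fintype_fun_eq_card, Module.finrank_fintype_fun_eq_card,
      Fintype.card_subtype_compl]
    omega
  obtain ⟨c, hTc, hc⟩ := (Submodule.ne_bot_iff _).1 hker
  obtain ⟨hLc, hfar⟩ := Prod.ext_iff.1 (LinearMap.mem_ker.1 hTc)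
  have hcomb : Fintype.linearCombination ℝ (dirichletEigenvector g S) c =
      fun n => ∑ i, c i * dirichletEigenvector g S i n := by
    ext n; simp [Fintype.linearCombination_apply]
  have hbound := hL (fun n => ∑ i, c i * dirichletEigenvector g S i n)
    (fun n hn => by simp [dirichletEigenvector_of_notMem g _ hn])
    (fun k => by rw [← hcomb]; exact congrFun hLc k)
  refine hbound.not_gt ?_
  rw [sum_sq_sum_mul_dirichletEigenvector,
    Finset.sum_congr rfl fun n hn => by rw [schrodinger_sum_mul_dirichletEigenvector g c E hn],
    sum_sq_sum_mul_dirichletEigenvector g fun i => c i * (dirichletEigenvalue g S i - E)]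
  exact sum_mul_dirichletEigenvalue_sub_sq_lt (Function.ne_iff.1 hc)
    fun i hi => by_contra fun hne => hi (congrFun hfar ⟨i, hne⟩)

/-- The operator on `T` does not see the values of `u` off `T` as long as they vanish at the sites
adjacent to `T`. -/
lemma mul_sum_sq_le_sum_schrodinger_sub_sq {g u : ℤ → ℝ} {T : Finset ℤ} {E η : ℝ} (hη : 0 ≤ η)
    (hright : ∀ n ∈ T, n + 1 ∉ T → u (n + 1) = 0) (hleft : ∀ n ∈ T, n - 1 ∉ T → u (n - 1) = 0)
    (hcoeff : ∀ i, |dirichletEigenvalue g T i - E| < η → dirichletCoeff g T u i = 0) :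
    η ^ 2 * ∑ n ∈ T, u n ^ 2 ≤ ∑ n ∈ T, (schrodinger g u n - E * u n) ^ 2 := by
  set w : ℤ → ℝ := fun n => if n ∈ T then u n else 0
  have hwT : ∀ n ∈ T, w n = u n := fun n hn => if_pos hn
  have hw0 : ∀ n ∉ T, w n = 0 := fun n hn => if_neg hn
  have hsq : ∑ n ∈ T, u n ^ 2 = ∑ n ∈ T, w n ^ 2 :=
    Finset.sum_congr rfl fun n hn => by rw [hwT n hn]
  have hres : ∑ n ∈ T, (schrodinger g u n - E * u n) ^ 2 =
      ∑ n ∈ T, (schrodinger g w n - E * w n) ^ 2 := Finset.sum_congr rfl fun n hn => by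
    have hplus : w (n + 1) = u (n + 1) := by
      by_cases h : n + 1 ∈ T
      · exact hwT _ h
      · rw [hw0 _ h, hright n hn h]
    have hminus : w (n - 1) = u (n - 1) := by
      by_cases h : n - 1 ∈ T
      · exact hwT _ h
      · rw [hw0 _ h, hleft n hn h]
    rw [schrodinger, schrodinger, hplus, hminus, hwT n hn]
  have hcoeff_eq : dirichletCoeff g T w = dirichletCoeff g T u :=
    funext fun i => Finset.sum_congr rfl fun n hn => by rw [hwT n hn]
  rw [hsq, hres, sum_schrodinger_sub_sq hw0, sum_sq_eq_sum_dirichletCoeff_sq (g := g),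
    Finset.mul_sum, hcoeff_eq]
  refine Finset.sum_le_sum fun i _ => ?_
  by_cases hi : |dirichletEigenvalue g T i - E| < η
  · simp [hcoeff i hi]
  · rw [mul_pow, mul_comm]
    exact mul_le_mul_of_nonneg_left
      (sq_le_sq.2 (by rw [abs_of_nonneg hη]; exact not_lt.1 hi)) (sq_nonneg _)

/-- The linear functional `u ↦ dirichletCoeff g S u i`. -/
def dirichletCoeffₗ (g : ℤ → ℝ) (S : Finset ℤ) (i : S) : (ℤ → ℝ) →ₗ[ℝ] ℝ :=
  ∑ m ∈ S, dirichletEigenvector g S i m • LinearMap.proj m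

@[simp]
lemma dirichletCoeffₗ_apply (g : ℤ → ℝ) (S : Finset ℤ) (i : S) (u : ℤ → ℝ) :
    dirichletCoeffₗ g S i u = dirichletCoeff g S u i := by
  simp [dirichletCoeffₗ, dirichletCoeff]

lemma eigenvalueCount_le_erase_add_one (g : ℤ → ℝ) (S : Finset ℤ) (x : ℤ) (E : ℝ) {η : ℝ}
    (hη : 0 ≤ η) : eigenvalueCount g S E η ≤ eigenvalueCount g (S.erase x) E η + 1 := by
  let near := {i // |dirichletEigenvalue g (S.erase x) i - E| < η}
  have hcard : Fintype.card (Option near) = eigenvalueCount g (S.erase x) E η + 1 := by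
    rw [Fintype.card_option, eigenvalueCount, ← Fintype.card_subtype]
  rw [← hcard]
  refine eigenvalueCount_le_card
    (fun k => k.elim (LinearMap.proj x) fun i : near => dirichletCoeffₗ g (S.erase x) i)
    fun u hu hL => ?_
  have hx : u x = 0 := hL none
  have hzero : ∀ n ∉ S.erase x, u n = 0 := fun n hn => by
    by_cases h : n = x
    · rw [h, hx]
    · exact hu n fun hS => hn (Finset.mem_erase.2 ⟨h, hS⟩)
  calc η ^ 2 * ∑ n ∈ S, u n ^ 2 = η ^ 2 * ∑ n ∈ S.erase x, u n ^ 2 := by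
        rw [Finset.sum_erase _ (by simp [hx])]
    _ ≤ ∑ n ∈ S.erase x, (schrodinger g u n - E * u n) ^ 2 :=
        mul_sum_sq_le_sum_schrodinger_sub_sq hη (fun _ _ => hzero _) (fun _ _ => hzero _)
          fun i hi => by simpa using hL (some ⟨i, hi⟩)
    _ ≤ ∑ n ∈ S, (schrodinger g u n - E * u n) ^ 2 :=
        Finset.sum_le_sum_of_subset_of_nonneg (Finset.erase_subset _ _) fun _ _ _ => sq_nonneg _

lemma eigenvalueCount_union_le (g : ℤ → ℝ) {S T : Finset ℤ} (E : ℝ) {η : ℝ} (hη : 0 ≤ η)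
    (hdisj : Disjoint S T) (hright : ∀ n ∈ S, n + 1 ∉ T) (hleft : ∀ n ∈ S, n - 1 ∉ T) :
    eigenvalueCount g (S ∪ T) E η ≤ eigenvalueCount g S E η + eigenvalueCount g T E η := by
  let near (R : Finset ℤ) := {i // |dirichletEigenvalue g R i - E| < η}
  have hcard : Fintype.card (near S ⊕ near T) =
      eigenvalueCount g S E η + eigenvalueCount g T E η := by
    rw [Fintype.card_sum, eigenvalueCount, eigenvalueCount, ← Fintype.card_subtype,
      ← Fintype.card_subtype]
  rw [← hcard]
  refine eigenvalueCount_le_card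
    (Sum.elim (fun i => dirichletCoeffₗ g S i.1) fun i => dirichletCoeffₗ g T i.1)
    fun u hu hL => ?_
  rw [Finset.sum_union hdisj, Finset.sum_union hdisj, mul_add]
  refine add_le_add
    (mul_sum_sq_le_sum_schrodinger_sub_sq hη (fun n hn hn' => hu _ ?_) (fun n hn hn' => hu _ ?_)
      fun i hi => by simpa using hL (Sum.inl ⟨i, hi⟩))
    (mul_sum_sq_le_sum_schrodinger_sub_sq hη (fun n hn hn' => hu _ ?_) (fun n hn hn' => hu _ ?_)
      fun i hi => by simpa using hL (Sum.inr ⟨i, hi⟩))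
  · exact Finset.notMem_union.2 ⟨hn', hright n hn⟩
  · exact Finset.notMem_union.2 ⟨hn', hleft n hn⟩
  · exact Finset.notMem_union.2 ⟨fun h => hleft _ h (by simpa using hn), hn'⟩
  · exact Finset.notMem_union.2 ⟨fun h => hright _ h (by simpa using hn), hn'⟩

lemma eigenvalueCount_box_le (g : ℤ → ℝ) (a : ℤ) (l₁ l₂ : ℕ) (E : ℝ) {η : ℝ} (hη : 0 ≤ η) :
    eigenvalueCount g (box a (l₁ + 1 + l₂)) E η ≤
      eigenvalueCount g (box a l₁) E η + eigenvalueCount g (box (a + l₁ + 1) l₂) E η + 1 := by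
  have herase : (box a (l₁ + 1 + l₂)).erase (a + l₁) = box a l₁ ∪ box (a + l₁ + 1) l₂ := by
    ext n; simp only [box, Finset.mem_erase, Finset.mem_union, Finset.mem_Ico]; omega
  refine (eigenvalueCount_le_erase_add_one g _ (a + l₁) E hη).trans ?_
  rw [herase]
  refine Nat.add_le_add_right (eigenvalueCount_union_le g E hη ?_ ?_ ?_) 1
  · exact Finset.disjoint_left.2 fun n => by simp only [box, Finset.mem_Ico]; omega
  all_goals intro n; simp only [box, Finset.mem_Ico]; omega

/-! ### Dirichlet determinants and the Poisson formula -/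

/-- The characteristic polynomial of the Dirichlet restriction of `H_g` to `box a k`, defined by
the three-term recursion for determinants of tridiagonal matrices. -/
def dirichletPoly (g : ℤ → ℝ) (a : ℤ) : ℕ → Polynomial ℝ
  | 0 => 1
  | 1 => Polynomial.X - Polynomial.C (g a)
  | k + 2 => (Polynomial.X - Polynomial.C (g (a + k + 1))) * dirichletPoly g a (k + 1) -
      dirichletPoly g a k

/-- The determinant `det (E - H_g)` on `box a k`. -/
def dirichletDet (g : ℤ → ℝ) (E : ℝ) (a : ℤ) (k : ℕ) : ℝ := (dirichletPoly g a k).eval E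

section DirichletDet

variable (g : ℤ → ℝ) (E : ℝ) (a : ℤ)

@[simp]
lemma dirichletDet_zero : dirichletDet g E a 0 = 1 := by simp [dirichletDet, dirichletPoly]

@[simp]
lemma dirichletDet_one : dirichletDet g E a 1 = E - g a := by simp [dirichletDet, dirichletPoly]

lemma dirichletDet_add_two (k : ℕ) : dirichletDet g E a (k + 2) =
    (E - g (a + k + 1)) * dirichletDet g E a (k + 1) - dirichletDet g E a k := by
  simp [dirichletDet, dirichletPoly]

lemma monic_dirichletPoly_and_degree :
    ∀ k, (dirichletPoly g a k).Monic ∧ (dirichletPoly g a k).degree = k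
  | 0 => by simp [dirichletPoly]
  | 1 => ⟨Polynomial.monic_X_sub_C _, (Polynomial.degree_X_sub_C (g a)).trans (by simp)⟩
  | k + 2 => by
    obtain ⟨hmonic₁, hdeg₁⟩ := monic_dirichletPoly_and_degree (k + 1)
    obtain ⟨-, hdeg₀⟩ := monic_dirichletPoly_and_degree k
    have hdeg : ((Polynomial.X - Polynomial.C (g (a + k + 1))) *
        dirichletPoly g a (k + 1)).degree = ((k + 2 : ℕ) : WithBot ℕ) := by
      rw [Polynomial.degree_mul, Polynomial.degree_X_sub_C, hdeg₁]
      push_cast; ring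
    have hlt : (dirichletPoly g a k).degree <
        ((Polynomial.X - Polynomial.C (g (a + k + 1))) * dirichletPoly g a (k + 1)).degree := by
      rw [hdeg, hdeg₀]; exact_mod_cast (by omega : k < k + 2)
    exact ⟨((Polynomial.monic_X_sub_C _).mul hmonic₁).sub_of_left hlt,
      (Polynomial.degree_sub_eq_left_of_degree_lt hlt).trans hdeg⟩

lemma transfer_apply_zero_zero :
    ∀ n, transfer g E n a 0 0 = dirichletDet g E a n
  | 0 => by simp [transfer]
  | 1 => by simp [transfer]
  | n + 2 => by
    have hshift : transfer g E (n + 1) a 1 0 = transfer g E n a 0 0 := by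
      simp [transfer, Matrix.mul_apply, Fin.sum_univ_two]
    have hrow : transfer g E (n + 2) a 0 0 = (E - g (a + (n + 1 : ℕ))) *
        transfer g E (n + 1) a 0 0 - transfer g E (n + 1) a 1 0 := by
      rw [transfer, Matrix.mul_apply, Fin.sum_univ_two]
      simp [sub_eq_add_neg]
    rw [hrow, hshift, transfer_apply_zero_zero (n + 1), transfer_apply_zero_zero n,
      dirichletDet_add_two, Nat.cast_succ, add_assoc]

variable {g E}

lemma abs_dirichletDet_le {D : ℝ} (hD : ∀ n, |E - g n| + 1 ≤ D) :
    ∀ k, |dirichletDet g E a k| ≤ D ^ k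
  | 0 => by simp
  | 1 => by simpa using (le_add_of_nonneg_right zero_le_one).trans (hD a)
  | k + 2 => by
    have hd := hD (a + k + 1)
    have hD1 : 1 ≤ D := by linarith [abs_nonneg (E - g (a + k + 1))]
    have hmono : D ^ k ≤ D ^ (k + 1) := pow_le_pow_right₀ hD1 k.le_succ
    calc |dirichletDet g E a (k + 2)|
        ≤ |E - g (a + k + 1)| * |dirichletDet g E a (k + 1)| + |dirichletDet g E a k| := by
          rw [dirichletDet_add_two, ← abs_mul]; exact abs_sub _ _
      _ ≤ (D - 1) * D ^ (k + 1) + D ^ k := by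
          gcongr
          exacts [by linarith, abs_dirichletDet_le hD _, abs_dirichletDet_le hD _]
      _ ≤ D ^ (k + 2) := by rw [pow_succ D (k + 1)]; linarith

variable {a} {u : ℤ → ℝ} {l : ℕ}

lemma eq_mul_dirichletDet_of_schrodinger_eq (ha : u (a - 1) = 0)
    (heq : ∀ n ∈ box a l, schrodinger g u n = E * u n) :
    ∀ k : ℕ, k ≤ l → u (a + k) = u a * dirichletDet g E a k
  | 0, _ => by simp
  | 1, hk => by
    have h := heq a (by simp; omega)
    rw [schrodinger, ha] at h
    rw [dirichletDet_one, Nat.cast_one]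
    linear_combination h
  | k + 2, hk => by
    have h₁ := eq_mul_dirichletDet_of_schrodinger_eq ha heq (k + 1) (by omega)
    have h₀ := eq_mul_dirichletDet_of_schrodinger_eq ha heq k (by omega)
    have h := heq (a + k + 1) (by simp; omega)
    rw [schrodinger, add_sub_cancel_right, add_assoc _ 1 1, one_add_one_eq_two, h₀] at h
    rw [dirichletDet_add_two, Nat.cast_add, Nat.cast_ofNat, ← add_assoc]
    rw [Nat.cast_succ, ← add_assoc] at h₁
    rw [h₁] at h
    linear_combination h

lemma apply_left_end_ne_zero (hu : ∀ n ∉ box a l, u n = 0) (hne : ∃ n, u n ≠ 0)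
    (heq : ∀ n ∈ box a l, schrodinger g u n = E * u n) : u a ≠ 0 := by
  intro hzero
  obtain ⟨n, hn⟩ := hne
  have hmem : n ∈ box a l := by_contra fun hc => hn (hu n hc)
  obtain ⟨k, rfl⟩ : ∃ k : ℕ, n = a + k :=
    ⟨(n - a).toNat, by rw [Finset.mem_Ico] at hmem; omega⟩
  refine hn ?_
  rw [eq_mul_dirichletDet_of_schrodinger_eq (hu _ (by simp)) heq k (by simp at hmem; omega),
    hzero, zero_mul]

/-- Two Dirichlet eigenvectors for the same eigenvalue are both multiples of the solution
`dirichletDet g E a`, so they cannot be orthogonal. -/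
lemma dirichletEigenvalue_box_injective (g : ℤ → ℝ) (a : ℤ) (l : ℕ) :
    Function.Injective (dirichletEigenvalue g (box a l)) := by
  intro i k hik
  by_contra hne
  have hleft (j) : dirichletEigenvector g (box a l) j a ≠ 0 :=
    apply_left_end_ne_zero (fun _ => dirichletEigenvector_of_notMem g j)
      (exists_dirichletEigenvector_ne_zero g j) fun _ => schrodinger_dirichletEigenvector g j
  have hmem : a ∈ box a l := by_contra fun hc => hleft i (dirichletEigenvector_of_notMem g i hc)
  have hform (j) : ∀ n ∈ box a l, dirichletEigenvector g (box a l) j n =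
      dirichletEigenvector g (box a l) j a *
        dirichletDet g (dirichletEigenvalue g (box a l) j) a (n - a).toNat := fun n hn => by
    rw [Finset.mem_Ico] at hn
    have h := eq_mul_dirichletDet_of_schrodinger_eq
      (dirichletEigenvector_of_notMem g j (n := a - 1) (by simp))
      (fun _ => schrodinger_dirichletEigenvector g j) (n - a).toNat (by omega)
    rwa [show a + ((n - a).toNat : ℤ) = n by omega] at h
  have horth := sum_dirichletEigenvector_mul_dirichletEigenvector g i k
  rw [if_neg hne, Finset.sum_congr rfl fun n hn => by
    rw [hform i n hn, hform k n hn, hik, mul_mul_mul_comm], ← Finset.mul_sum] at horth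
  have hpos : 0 < ∑ n ∈ box a l, dirichletDet g (dirichletEigenvalue g (box a l) k) a
      (n - a).toNat * dirichletDet g (dirichletEigenvalue g (box a l) k) a (n - a).toNat :=
    Finset.sum_pos' (fun _ _ => mul_self_nonneg _) ⟨a, hmem, by simp⟩
  exact mul_ne_zero (mul_ne_zero (hleft i) (hleft k)) hpos.ne' horth

lemma dirichletDet_eq_prod (g : ℤ → ℝ) (E : ℝ) (a : ℤ) (l : ℕ) :
    dirichletDet g E a l = ∏ i, (E - dirichletEigenvalue g (box a l) i) := by
  set lam := dirichletEigenvalue g (box a l)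
  have hdeg : (∏ i, (Polynomial.X - Polynomial.C (lam i))).degree = (l : WithBot ℕ) := by
    simp [Polynomial.degree_prod]
  have hmonic : (∏ i, (Polynomial.X - Polynomial.C (lam i))).Monic :=
    Polynomial.monic_prod_of_monic _ _ fun i _ => Polynomial.monic_X_sub_C _
  obtain ⟨hmonic', hdeg'⟩ := monic_dirichletPoly_and_degree g a l
  have hroot : ∀ i, (dirichletPoly g a l).eval (lam i) = 0 := fun i => by
    have h := eq_mul_dirichletDet_of_schrodinger_eq
      (dirichletEigenvector_of_notMem g i (n := a - 1) (by simp))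
      (fun _ => schrodinger_dirichletEigenvector g i) l le_rfl
    rw [dirichletEigenvector_of_notMem g i (by simp)] at h
    exact (mul_eq_zero.1 h.symm).resolve_left <|
      apply_left_end_ne_zero (fun _ => dirichletEigenvector_of_notMem g i)
        (exists_dirichletEigenvector_ne_zero g i) fun _ => schrodinger_dirichletEigenvector g i
  have hpoly : dirichletPoly g a l = ∏ i, (Polynomial.X - Polynomial.C (lam i)) := by
    refine Polynomial.eq_of_degree_sub_lt_of_eval_index_eq (v := lam) Finset.univ
      (dirichletEigenvalue_box_injective g a l).injOn ?_ fun i _ => ?_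
    · have hlt := Polynomial.degree_sub_lt_left (hdeg'.trans hdeg.symm) hmonic'.ne_zero
        (hmonic'.leadingCoeff.trans hmonic.leadingCoeff.symm)
      simpa [hdeg'] using hlt
    · rw [hroot, Polynomial.eval_prod, Finset.prod_eq_zero (Finset.mem_univ i) (by simp)]
  rw [dirichletDet, hpoly, Polynomial.eval_prod]
  simp

/-- Constancy of the Wronskian of `u` and `k ↦ dirichletDet g E a k`. -/
lemma mul_dirichletDet_succ_sub (heq : ∀ n ∈ box a l, schrodinger g u n = E * u n) :
    ∀ k < l, u (a + k) * dirichletDet g E a (k + 1) - u (a + k + 1) * dirichletDet g E a k =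
      u (a - 1)
  | 0, hk => by
    have h := heq a (by simp; omega)
    rw [schrodinger] at h
    simp only [zero_add, dirichletDet_one, dirichletDet_zero, Nat.cast_zero, add_zero]
    linear_combination -h
  | k + 1, hk => by
    have h := heq (a + k + 1) (by simp; omega)
    rw [schrodinger, add_sub_cancel_right] at h
    rw [← mul_dirichletDet_succ_sub heq k (by omega), dirichletDet_add_two, Nat.cast_succ,
      ← add_assoc]
    linear_combination (-dirichletDet g E a (k + 1)) * h

lemma mul_dirichletDet_eq (k : ℕ) :
    ∀ m : ℕ, (∀ n ∈ box a (k + 1 + m), schrodinger g u n = E * u n) →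
      u (a + k) * dirichletDet g E a (k + 1 + m) =
        u (a + k + 1 + m) * dirichletDet g E a k + u (a - 1) * dirichletDet g E (a + k + 1) m
  | 0, heq => by
    have h := mul_dirichletDet_succ_sub heq k (by omega)
    simp only [Nat.cast_zero, add_zero, dirichletDet_zero]
    linear_combination h
  | 1, heq => by
    have h₀ := mul_dirichletDet_succ_sub heq k (by omega)
    have h := heq (a + k + 1) (by simp; omega)
    rw [schrodinger, add_sub_cancel_right] at h
    rw [dirichletDet_add_two, dirichletDet_one, Nat.cast_one]
    linear_combination (E - g (a + k + 1)) * h₀ - dirichletDet g E a k * h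
  | m + 2, heq => by
    have hsub : ∀ j ≤ m + 2, ∀ n ∈ box a (k + 1 + j), schrodinger g u n = E * u n :=
      fun j hj n hn => heq n (by simp at hn ⊢; omega)
    have h₁ := mul_dirichletDet_eq k (m + 1) (hsub _ (by omega))
    have h₀ := mul_dirichletDet_eq k m (hsub _ (by omega))
    have h := heq (a + k + 1 + m + 1) (by simp; omega)
    rw [schrodinger, add_sub_cancel_right, add_assoc _ 1 1, one_add_one_eq_two] at h
    rw [show k + 1 + (m + 2) = (k + 1 + m) + 2 by ring, dirichletDet_add_two,
      dirichletDet_add_two g E (a + k + 1)]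
    push_cast at h₁ ⊢
    simp only [← add_assoc] at h h₁ ⊢
    linear_combination (E - g (a + k + 1 + m + 1)) * h₁ - h₀ - dirichletDet g E a k * h

lemma abs_mul_abs_dirichletDet_le {D : ℝ} (k m : ℕ) (hD : ∀ n, |E - g n| + 1 ≤ D)
    (heq : ∀ n ∈ box a (k + 1 + m), schrodinger g u n = E * u n) :
    |u (a + k)| * |dirichletDet g E a (k + 1 + m)| ≤
      |u (a + k + 1 + m)| * D ^ k + |u (a - 1)| * D ^ m := by
  rw [← abs_mul, mul_dirichletDet_eq k m heq]
  refine (abs_add_le _ _).trans ?_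
  rw [abs_mul, abs_mul]
  gcongr
  exacts [abs_dirichletDet_le a hD k, abs_dirichletDet_le _ hD m]

end DirichletDet

/-! ### Staircase perturbations -/

/-- Dirichlet eigenvalues of any two disjoint subintervals of `(c, d]` are at distance at
least `ε`. -/
def IsSeparatedOn (g : ℤ → ℝ) (c d : ℤ) (ε : ℝ) : Prop :=
  ∀ ⦃i k i' k' : ℤ⦄, c < i → k < i' → k' ≤ d → ∀ ⦃E F : ℝ⦄,
    IsDirichletEigenvalue g (Finset.Icc i k) E → IsDirichletEigenvalue g (Finset.Icc i' k') F →
    ε ≤ |E - F|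

/-- The step function whose jump at the right end of each site `y ∈ S` is `h * t y`. -/
def staircase (h : ℝ) {S : Finset ℤ} {R : ℕ} (t : S → Fin (R + 1)) (x : ℤ) : ℝ :=
  h * ∑ y : S, if y.1 < x then ((t y : ℕ) : ℝ) else 0

open Classical in
/-- The jumps for which the staircase perturbation of `g` has eigenvalues on `T` and `T'` closer
than half a step. -/
def stairResonances (g : ℤ → ℝ) (h : ℝ) (S : Finset ℤ) (R : ℕ) (T T' : Finset ℤ) :
    Finset (S → Fin (R + 1)) :=
  {t | ∃ E F, IsDirichletEigenvalue (fun x => g x + staircase h t x) T E ∧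
    IsDirichletEigenvalue (fun x => g x + staircase h t x) T' F ∧ |E - F| < h / 2}

section Staircase

variable {h : ℝ} {S : Finset ℤ} {R : ℕ}

lemma mem_stairResonances {g : ℤ → ℝ} {T T' : Finset ℤ} {t : S → Fin (R + 1)} :
    t ∈ stairResonances g h S R T T' ↔
      ∃ E F, IsDirichletEigenvalue (fun x => g x + staircase h t x) T E ∧
        IsDirichletEigenvalue (fun x => g x + staircase h t x) T' F ∧ |E - F| < h / 2 := by
  simp [stairResonances]

lemma staircase_nonneg (hh : 0 ≤ h) (t : S → Fin (R + 1)) (x : ℤ) : 0 ≤ staircase h t x :=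
  mul_nonneg hh <| Finset.sum_nonneg fun y _ => by split_ifs <;> positivity

lemma staircase_le (hh : 0 ≤ h) (t : S → Fin (R + 1)) (x : ℤ) :
    staircase h t x ≤ h * (S.card * R) := by
  have hterm (y : S) : (if y.1 < x then ((t y : ℕ) : ℝ) else 0) ≤ R := by
    split_ifs
    · exact_mod_cast Nat.lt_succ_iff.1 (t y).2
    · positivity
  simpa [staircase] using
    mul_le_mul_of_nonneg_left (Finset.sum_le_sum fun y (_ : y ∈ Finset.univ) => hterm y) hh

lemma staircase_eq_update_add (h : ℝ) (t : S → Fin (R + 1)) (b : S) (x : ℤ) :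
    staircase h t x =
      staircase h (Function.update t b 0) x + if b.1 < x then h * ((t b : ℕ) : ℝ) else 0 := by
  have hterm (y : S) : (if y.1 < x then ((t y : ℕ) : ℝ) else 0) =
      (if y.1 < x then (((Function.update t b 0) y : ℕ) : ℝ) else 0) +
        if y = b then (if b.1 < x then ((t b : ℕ) : ℝ) else 0) else 0 := by
    by_cases hy : y = b
    · subst hy; simp
    · simp [hy]
  rw [staircase, staircase, Finset.sum_congr rfl fun y _ => hterm y, Finset.sum_add_distrib,
    Finset.sum_ite_eq' Finset.univ b, if_pos (Finset.mem_univ _),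
    mul_add, mul_ite, mul_zero]

lemma fin_eq_of_abs_mul_sub_lt (hh : 0 < h) {v w : Fin (R + 1)} {z : ℝ}
    (hv : |z - h * ((v : ℕ) : ℝ)| < h / 2) (hw : |z - h * ((w : ℕ) : ℝ)| < h / 2) : v = w := by
  by_contra hne
  have hone : (1 : ℝ) ≤ |((v : ℕ) : ℝ) - ((w : ℕ) : ℝ)| := by
    exact_mod_cast Int.one_le_abs (sub_ne_zero.2 fun hc : ((v : ℕ) : ℤ) = (w : ℕ) =>
      hne (Fin.ext (by exact_mod_cast hc)))
  have hlt : |h * (((v : ℕ) : ℝ) - ((w : ℕ) : ℝ))| < h := by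
    rw [abs_lt] at *
    constructor <;> linarith [hv.1, hv.2, hw.1, hw.2]
  rw [abs_mul, abs_of_pos hh] at hlt
  nlinarith

variable {T T' : Finset ℤ}

/-- Changing the jump at `b` alone leaves the spectrum on `T` unchanged and translates the
spectrum on `T'` rigidly, so each pair of eigenvalues is resonant for at most one jump. -/
lemma card_stairResonances_fiber_le (g : ℤ → ℝ) (hh : 0 < h) (b : S) (hT : ∀ x ∈ T, x ≤ b.1)
    (hT' : ∀ x ∈ T', b.1 < x) (t₀ : S → Fin (R + 1)) :
    {t ∈ stairResonances g h S R T T' | Function.update t b 0 = t₀}.card ≤ T.card * T'.card := by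
  classical
  obtain ⟨s, hs, hmem⟩ :=
    exists_finset_card_le_of_isDirichletEigenvalue (fun x => g x + staircase h t₀ x) T
  obtain ⟨s', hs', hmem'⟩ :=
    exists_finset_card_le_of_isDirichletEigenvalue (fun x => g x + staircase h t₀ x) T'
  have hpair : ∀ t ∈ stairResonances g h S R T T', Function.update t b 0 = t₀ →
      ∃ p ∈ s ×ˢ s', |p.1 - p.2 - h * ((t b : ℕ) : ℝ)| < h / 2 := by
    rintro t ht rfl
    obtain ⟨E, F, hE, hF, hEF⟩ := mem_stairResonances.1 ht
    refine ⟨(E, F + -(h * ((t b : ℕ) : ℝ))), Finset.mem_product.2 ⟨hmem _ ?_, hmem' _ ?_⟩, ?_⟩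
    · refine hE.congr fun x hx => ?_
      rw [staircase_eq_update_add h t b x, if_neg (hT x hx).not_gt, add_zero]
    · refine (hF.add_const (-(h * ((t b : ℕ) : ℝ)))).congr fun x hx => ?_
      rw [staircase_eq_update_add h t b x, if_pos (hT' x hx)]; ring
    · convert hEF using 2; ring
  choose! p hp hdist using hpair
  have hinj : Set.InjOn p
      ({t ∈ stairResonances g h S R T T' | Function.update t b 0 = t₀} : Finset _) := by
    intro t₁ ht₁ t₂ ht₂ heq
    obtain ⟨ht₁, hu₁⟩ := Finset.mem_filter.1 ht₁
    obtain ⟨ht₂, hu₂⟩ := Finset.mem_filter.1 ht₂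
    have hb : t₁ b = t₂ b :=
      fin_eq_of_abs_mul_sub_lt hh (heq ▸ hdist t₁ ht₁ hu₁) (hdist t₂ ht₂ hu₂)
    rw [← Function.update_eq_self b t₁, hb, ← Function.update_idem, hu₁, ← hu₂,
      Function.update_idem, Function.update_eq_self]
  calc _ ≤ (s ×ˢ s').card := Finset.card_le_card_of_injOn p (fun t ht =>
        hp t (Finset.mem_filter.1 ht).1 (Finset.mem_filter.1 ht).2) hinj
    _ ≤ T.card * T'.card := by
        rw [Finset.card_product]; exact Nat.mul_le_mul hs hs'

lemma card_image_update_le (b : S) (A : Finset (S → Fin (R + 1))) :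
    (A.image fun t => Function.update t b 0).card ≤ (R + 1) ^ (S.card - 1) := by
  have hsub : A.image (fun t => Function.update t b 0) ⊆
      Fintype.piFinset (Function.update (fun _ => Finset.univ) b {0}) := fun t ht => by
    obtain ⟨s, -, rfl⟩ := Finset.mem_image.1 ht
    refine Fintype.mem_piFinset.2 fun y => ?_
    by_cases hy : y = b
    · subst hy; simp
    · simp [hy]
  refine (Finset.card_le_card hsub).trans ?_
  rw [Fintype.card_piFinset, ← Finset.mul_prod_erase _ _ (Finset.mem_univ b),
    Finset.prod_congr rfl (g := fun _ => R + 1) fun y hy => by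
      simp [Function.update_of_ne (Finset.ne_of_mem_erase hy)]]
  simp

lemma card_stairResonances_le (g : ℤ → ℝ) (hh : 0 < h) (b : S) (hT : ∀ x ∈ T, x ≤ b.1)
    (hT' : ∀ x ∈ T', b.1 < x) :
    (stairResonances g h S R T T').card ≤ T.card * T'.card * (R + 1) ^ (S.card - 1) :=
  (Finset.card_le_mul_card_image _ _ fun t₀ _ =>
    card_stairResonances_fiber_le g hh b hT hT' t₀).trans
    (Nat.mul_le_mul_left _ (card_image_update_le b _))

end Staircase

/-- Union bound over the `n ^ 4` pairs of disjoint subintervals of `(c, d]`. -/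
lemma exists_staircase_notMem_stairResonances (g : ℤ → ℝ) {c d : ℤ} {n : ℕ} (hn : 1 ≤ n)
    (hd : d = c + n) {h : ℝ} (hh : 0 < h) :
    ∃ t : Finset.Ioc c d → Fin (n ^ 6 + 1), ∀ i k i' k' : Finset.Ioc c d, k.1 < i'.1 →
      t ∉ stairResonances g h _ _ (Finset.Icc i.1 k.1) (Finset.Icc i'.1 k'.1) := by
  classical
  have hcard : (Finset.Ioc c d).card = n := by simp [hd]
  let ι := (Finset.Ioc c d × Finset.Ioc c d) × Finset.Ioc c d × Finset.Ioc c d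
  let bad (p : ι) : Finset (Finset.Ioc c d → Fin (n ^ 6 + 1)) :=
    if p.1.2.1 < p.2.1.1 then
      stairResonances g h _ _ (Finset.Icc p.1.1.1 p.1.2.1) (Finset.Icc p.2.1.1 p.2.2.1) else ∅
  have hIcc (i k : Finset.Ioc c d) : (Finset.Icc i.1 k.1).card ≤ n := by
    refine hcard ▸ Finset.card_le_card fun x hx => ?_
    have hi := Finset.mem_Ioc.1 i.2
    have hk := Finset.mem_Ioc.1 k.2
    rw [Finset.mem_Icc] at hx
    rw [Finset.mem_Ioc]; omega
  have hbad (p : ι) : (bad p).card ≤ n * n * (n ^ 6 + 1) ^ (n - 1) := by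
    by_cases hp : p.1.2.1 < p.2.1.1
    · simp only [bad, if_pos hp]
      refine (card_stairResonances_le g hh p.1.2 (fun x hx => (Finset.mem_Icc.1 hx).2)
        fun x hx => hp.trans_le (Finset.mem_Icc.1 hx).1).trans ?_
      rw [hcard]
      gcongr
      exacts [hIcc _ _, hIcc _ _]
    · simp only [bad, if_neg hp, Finset.card_empty, zero_le]
  have hlt : (Finset.univ.biUnion bad).card <
      (Finset.univ : Finset (Finset.Ioc c d → Fin (n ^ 6 + 1))).card := by
    refine (Finset.card_biUnion_le_card_mul _ _ _ fun p _ => hbad p).trans_lt ?_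
    have hι : (Finset.univ : Finset ι).card = (n * n) * (n * n) := by
      simp only [ι, Finset.card_univ, Fintype.card_prod, Fintype.card_coe, hcard]
    have hpow : (n ^ 6 + 1) ^ n = (n ^ 6 + 1) ^ (n - 1) * (n ^ 6 + 1) := by
      rw [← pow_succ, Nat.sub_add_cancel hn]
    rw [hι, Finset.card_univ, Fintype.card_fun, Fintype.card_coe, Fintype.card_fin, hcard, hpow]
    have : 0 < (n ^ 6 + 1) ^ (n - 1) := by positivity
    nlinarith
  obtain ⟨t, -, ht⟩ := Finset.exists_mem_notMem_of_card_lt_card hlt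
  refine ⟨t, fun i k i' k' hki hres => ht ?_⟩
  exact Finset.mem_biUnion.2 ⟨((i, k), i', k'), Finset.mem_univ _, by simpa only [bad, if_pos hki]⟩

theorem exists_isSeparatedOn_add (g : ℤ → ℝ) {c d : ℤ} {n : ℕ} (hn : 1 ≤ n) (hd : d = c + n)
    {σ : ℝ} (hσ : 0 < σ) :
    ∃ ω : ℤ → ℝ, (∀ x, 0 ≤ ω x ∧ ω x ≤ σ) ∧
      IsSeparatedOn (fun x => g x + ω x) c d (σ / (2 * (n : ℝ) ^ 7)) := by
  have : (0 : ℝ) < n := by exact_mod_cast hn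
  have hh : 0 < σ / (n : ℝ) ^ 7 := by positivity
  obtain ⟨t, ht⟩ := exists_staircase_notMem_stairResonances g hn hd hh
  refine ⟨staircase _ t, fun x => ⟨staircase_nonneg hh.le t x, ?_⟩,
    fun i k i' k' hci hki hkd E F hE hF => ?_⟩
  · refine (staircase_le hh.le t x).trans_eq ?_
    rw [Int.card_Ioc, hd, add_sub_cancel_left, Int.toNat_natCast]
    push_cast; field_simp
  · by_contra! hlt
    have hik := Finset.nonempty_Icc.1 hE.nonempty
    have hik' := Finset.nonempty_Icc.1 hF.nonempty
    refine ht ⟨i, Finset.mem_Ioc.2 (by omega)⟩ ⟨k, Finset.mem_Ioc.2 (by omega)⟩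
      ⟨i', Finset.mem_Ioc.2 (by omega)⟩ ⟨k', Finset.mem_Ioc.2 (by omega)⟩ hki
      (mem_stairResonances.2 ⟨E, F, hE, hF, hlt.trans_eq ?_⟩)
    field_simp

/-! ### Separated spectra and eigenvalue counting -/

namespace IsSeparatedOn

variable {g g' : ℤ → ℝ} {c d : ℤ} {ε : ℝ}

lemma translate (h : IsSeparatedOn g c d ε) (t : ℤ)
    (hg : ∀ x, c < x → x ≤ d → g' (x - t) = g x) : IsSeparatedOn g' (c - t) (d - t) ε := by
  intro i k i' k' hci hki hkd E F hE hF
  have hik := Finset.nonempty_Icc.1 hE.nonempty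
  have hik' := Finset.nonempty_Icc.1 hF.nonempty
  refine h (i := i + t) (k := k + t) (i' := i' + t) (k' := k' + t) (by omega) (by omega)
    (by omega) ((hE.translate t fun n => ?_).congr fun n hn => ?_)
    ((hF.translate t fun n => ?_).congr fun n hn => ?_)
  · simp only [Finset.mem_Icc]; omega
  · rw [Finset.mem_Icc] at hn; exact hg n (by omega) (by omega)
  · simp only [Finset.mem_Icc]; omega
  · rw [Finset.mem_Icc] at hn; exact hg n (by omega) (by omega)

lemma reflect (h : IsSeparatedOn g c d ε) (t : ℤ)
    (hg : ∀ x, c < x → x ≤ d → g' (t - x) = g x) :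
    IsSeparatedOn g' (t - d - 1) (t - c - 1) ε := by
  intro i k i' k' hci hki hkd E F hE hF
  have hik := Finset.nonempty_Icc.1 hE.nonempty
  have hik' := Finset.nonempty_Icc.1 hF.nonempty
  rw [abs_sub_comm]
  refine h (i := t - k') (k := t - i') (i' := t - k) (k' := t - i) (by omega) (by omega)
    (by omega) ((hF.reflect t fun n => ?_).congr fun n hn => ?_)
    ((hE.reflect t fun n => ?_).congr fun n hn => ?_)
  · simp only [Finset.mem_Icc]; omega
  · rw [Finset.mem_Icc] at hn; exact hg n (by omega) (by omega)
  · simp only [Finset.mem_Icc]; omega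
  · rw [Finset.mem_Icc] at hn; exact hg n (by omega) (by omega)

lemma congr (h : IsSeparatedOn g c d ε) (hg : ∀ x, c < x → x ≤ d → g' x = g x) :
    IsSeparatedOn g' c d ε := by
  simpa using h.translate (g' := g') 0 (by simpa using hg)

lemma of_abs_sub_le (h : IsSeparatedOn g c d ε) {δ : ℝ} (hg : ∀ x, |g' x - g x| ≤ δ) :
    IsSeparatedOn g' c d (ε - 2 * δ) := by
  intro i k i' k' hci hki hkd E F hE hF
  have hδ : 0 ≤ δ := (abs_nonneg _).trans (hg 0)
  obtain ⟨E', hE', hEE'⟩ := hE.exists_near_of_abs_sub_le hδ fun x _ => abs_sub_comm (g x) _ ▸ hg x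
  obtain ⟨F', hF', hFF'⟩ := hF.exists_near_of_abs_sub_le hδ fun x _ => abs_sub_comm (g x) _ ▸ hg x
  have hsep := h hci hki hkd hE' hF'
  have htri : |E' - F'| ≤ |E' - E| + |E - F| + |F - F'| := by
    calc |E' - F'| = |(E' - E) + (E - F) + (F - F')| := by ring_nf
      _ ≤ _ := abs_add_three _ _ _
  rw [abs_sub_comm F F'] at htri
  linarith

lemma le_abs_sub_of_box (h : IsSeparatedOn g c d ε) {a a' : ℤ} {l l' : ℕ} (hca : c < a)
    (haa : a + l ≤ a') (had : a' + l' ≤ d + 1) {E F : ℝ}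
    (hE : IsDirichletEigenvalue g (box a l) E) (hF : IsDirichletEigenvalue g (box a' l') F) :
    ε ≤ |E - F| := by
  have hbox (x : ℤ) (m : ℕ) : box x m = Finset.Icc x (x + m - 1) := by
    ext; simp only [Finset.mem_Ico, Finset.mem_Icc]; omega
  rw [hbox] at hE hF
  exact h hca (by omega) (by omega) hE hF

/-- If two eigenvalues were counted, cutting the box right after the shortest sub-box that has
an eigenvalue in the window would leave a second one in the remaining box. -/
lemma eigenvalueCount_le_one (h : IsSeparatedOn g c d ε) (hε : 0 ≤ ε) {a : ℤ} {l : ℕ}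
    (hca : c < a) (had : a + l ≤ d + 1) (E : ℝ) :
    eigenvalueCount g (box a l) E (ε / 2) ≤ 1 := by
  classical
  by_contra! hcon
  have hex : ∃ m, 0 < eigenvalueCount g (box a m) E (ε / 2) := ⟨l, by omega⟩
  obtain ⟨F, hF, hFE⟩ := exists_isDirichletEigenvalue_of_eigenvalueCount_pos (Nat.find_spec hex)
  have hle : Nat.find hex ≤ l := Nat.find_min' hex (by omega)
  obtain ⟨m, hm⟩ : ∃ m, Nat.find hex = m + 1 := Nat.exists_eq_succ_of_ne_zero fun h0 => by
    simpa [h0] using hF.nonempty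
  have hmin : ¬ 0 < eigenvalueCount g (box a m) E (ε / 2) := Nat.find_min hex (by omega)
  rw [hm] at hF hle
  obtain ⟨l₂, rfl⟩ := Nat.exists_eq_add_of_le hle
  have hcut := eigenvalueCount_box_le g a m l₂ E (by positivity : 0 ≤ ε / 2)
  obtain ⟨F', hF', hFE'⟩ := exists_isDirichletEigenvalue_of_eigenvalueCount_pos
    (show 0 < eigenvalueCount g (box (a + m + 1) l₂) E (ε / 2) by omega)
  have hsep := h.le_abs_sub_of_box hca (by push_cast; omega) (by push_cast at had; omega) hF hF'
  have htri := abs_sub_le F E F'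
  rw [abs_sub_comm E F'] at htri
  linarith

end IsSeparatedOn

lemma exists_cell {Q : ℤ} (hQ : 0 < Q) (B x : ℤ) : ∃ k, B - (k + 1) * Q < x ∧ x ≤ B - k * Q := by
  have hlt := Int.emod_lt_of_pos (B - x) hQ
  have hnonneg := Int.emod_nonneg (B - x) hQ.ne'
  have hdiv := Int.emod_add_mul_ediv (B - x) Q
  exact ⟨(B - x) / Q, by linarith, by linarith⟩

section CellCounting

variable {g : ℤ → ℝ} {B : ℤ} {Q : ℕ} {ε : ℝ}

lemma eigenvalueCount_le_of_le_cells (hε : 0 ≤ ε)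
    (hsep : ∀ k : ℤ, IsSeparatedOn g (B - (k + 1) * Q) (B - k * Q) ε) (E : ℝ) :
    ∀ (k : ℕ) (t a : ℤ) (l : ℕ), B - (t + 1) * Q < a → a + l ≤ B - t * Q + 1 + k * Q →
      eigenvalueCount g (box a l) E (ε / 2) ≤ 2 * k + 1
  | 0, t, a, l, hta, hal => by
    simpa using (hsep t).eigenvalueCount_le_one hε hta (by simpa using hal) E
  | k + 1, t, a, l, hta, hal => by
    push_cast at hal
    by_cases ha : B - t * Q < a
    · have := eigenvalueCount_le_of_le_cells hε hsep E k (t - 1) a l (by linarith) (by linarith)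
      omega
    by_cases hl : a + l ≤ B - t * Q + 1
    · have := (hsep t).eigenvalueCount_le_one hε hta hl E
      omega
    obtain ⟨l₁, hl₁⟩ := Int.eq_ofNat_of_zero_le (show 0 ≤ B - t * Q - a by omega)
    obtain ⟨l₂, rfl⟩ := Nat.exists_eq_add_of_le (show l₁ + 1 ≤ l by omega)
    push_cast at hal
    have hcut := eigenvalueCount_box_le g a l₁ l₂ E (by positivity : 0 ≤ ε / 2)
    have hfst := (hsep t).eigenvalueCount_le_one hε hta (l := l₁) (by omega) E
    have hsnd := eigenvalueCount_le_of_le_cells hε hsep E k (t - 1) (a + l₁ + 1) l₂ (by linarith)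
      (by linarith)
    omega

lemma eigenvalueCount_le_of_cells (hQ : 0 < Q) (hε : 0 ≤ ε)
    (hsep : ∀ k : ℤ, IsSeparatedOn g (B - (k + 1) * Q) (B - k * Q) ε) (E : ℝ) (a : ℤ) (l : ℕ) :
    (eigenvalueCount g (box a l) E (ε / 2) : ℝ) ≤ 2 * (l / Q) + 3 := by
  obtain ⟨t, hta, hat⟩ := exists_cell (show (0 : ℤ) < Q by omega) B a
  have hl : (l : ℤ) < ((l / Q + 1 : ℕ) : ℤ) * Q := by
    exact_mod_cast (by simpa [add_mul] using Nat.lt_div_mul_add hQ : l < (l / Q + 1) * Q)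
  have hcount := eigenvalueCount_le_of_le_cells hε hsep E (l / Q + 1) t a l hta (by linarith)
  calc (eigenvalueCount g (box a l) E (ε / 2) : ℝ) ≤ 2 * ((l / Q : ℕ) : ℝ) + 3 := by
        exact_mod_cast (by omega : _ ≤ 2 * (l / Q) + 3)
    _ ≤ 2 * (l / Q) + 3 := by gcongr; exact Nat.cast_div_le

end CellCounting

/-! ### The reflection hierarchy -/

/-- The representative in `(B - Q, B]` of `x` modulo translations by `2 * Q` and the reflection
`x ↦ 2 * B + 1 - x`. -/
def reflFold (B Q x : ℤ) : ℤ :=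
  B - (if (B - x) % (2 * Q) < Q then (B - x) % (2 * Q) else 2 * Q - 1 - (B - x) % (2 * Q))

section ReflFold

variable {B Q : ℤ}

lemma reflFold_mem (hQ : 0 < Q) (x : ℤ) : B - Q < reflFold B Q x ∧ reflFold B Q x ≤ B := by
  have hnonneg := Int.emod_nonneg (B - x) (show (2 * Q) ≠ 0 by omega)
  have hlt := Int.emod_lt_of_pos (B - x) (show 0 < 2 * Q by omega)
  unfold reflFold
  split_ifs <;> omega

lemma exists_reflFold_eq (x : ℤ) :
    (∃ c, reflFold B Q x = x + 2 * Q * c) ∨ ∃ c, reflFold B Q x = 2 * B + 1 - x + 2 * Q * c := by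
  have h := Int.emod_add_mul_ediv (B - x) (2 * Q)
  unfold reflFold
  split_ifs
  · exact .inl ⟨(B - x) / (2 * Q), by linarith⟩
  · exact .inr ⟨-1 - (B - x) / (2 * Q), by linarith⟩

lemma reflFold_eq_self {x : ℤ} (hx : B - Q < x) (hx' : x ≤ B) : reflFold B Q x = x := by
  rw [reflFold, Int.emod_eq_of_lt (by omega) (by omega), if_pos (by omega), sub_sub_cancel]

lemma reflFold_add_mul (x c : ℤ) : reflFold B Q (x + 2 * Q * c) = reflFold B Q x := by
  unfold reflFold
  rw [show B - (x + 2 * Q * c) = (B - x) + (2 * Q) * (-c) by ring, Int.add_mul_emod_self_left]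

lemma reflFold_reflect (hQ : 0 < Q) (x : ℤ) : reflFold B Q (2 * B + 1 - x) = reflFold B Q x := by
  have hnonneg := Int.emod_nonneg (B - x) (show (2 * Q) ≠ 0 by omega)
  have hlt := Int.emod_lt_of_pos (B - x) (show 0 < 2 * Q by omega)
  have hdiv := Int.emod_add_mul_ediv (B - x) (2 * Q)
  have hmod : (B - (2 * B + 1 - x)) % (2 * Q) = 2 * Q - 1 - (B - x) % (2 * Q) := by
    rw [show B - (2 * B + 1 - x) = (2 * Q - 1 - (B - x) % (2 * Q)) +
      (2 * Q) * (-1 - (B - x) / (2 * Q)) by linarith, Int.add_mul_emod_self_left,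
      Int.emod_eq_of_lt (by omega) (by omega)]
  unfold reflFold
  rw [hmod]
  split_ifs <;> omega

lemma reflFold_reflFold {B' Q' : ℤ} (hQ : 0 < Q) (hQQ' : Q ∣ Q') (hBB' : Q ∣ B' - B) (x : ℤ) :
    reflFold B Q (reflFold B' Q' x) = reflFold B Q x := by
  obtain ⟨d, rfl⟩ := hQQ'
  obtain ⟨e, he⟩ := hBB'
  rcases exists_reflFold_eq (B := B') (Q := Q * d) x with ⟨c, hc⟩ | ⟨c, hc⟩
  · rw [hc, show x + 2 * (Q * d) * c = x + 2 * Q * (d * c) by ring, reflFold_add_mul]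
  · rw [hc, show 2 * B' + 1 - x + 2 * (Q * d) * c = 2 * B + 1 - x + 2 * Q * (d * c + e) by
      linear_combination 2 * he, reflFold_add_mul, reflFold_reflect hQ]

end ReflFold

/-- The cell length at level `j` of the hierarchy. -/
def scale (q j : ℕ) : ℕ := q ^ 2 ^ j

/-- The level-`j` cells are the translates by multiples of `scale q j` of an interval whose right
endpoint is `pivot q j`, and the level-`j` reflections exchange neighbouring cells. -/
def pivot (q : ℕ) : ℕ → ℤ
  | 0 => 0
  | j + 1 => pivot q j + scale q j

section Scale

variable (q : ℕ)

lemma scale_zero : scale q 0 = q := by simp [scale]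

lemma scale_succ (j : ℕ) : scale q (j + 1) = scale q j ^ 2 := by
  rw [scale, scale, ← pow_mul, pow_succ]

lemma le_scale (j : ℕ) : q ≤ scale q j := Nat.le_self_pow (by positivity) _

lemma scale_dvd_scale (i k : ℕ) : scale q i ∣ scale q (i + k) :=
  pow_dvd_pow _ (Nat.pow_le_pow_right (by norm_num) (by omega))

lemma pivot_nonneg : ∀ j, 0 ≤ pivot q j
  | 0 => le_rfl
  | j + 1 => add_nonneg (pivot_nonneg j) (by positivity)

lemma scale_dvd_pivot_sub (i : ℕ) : ∀ k, (scale q i : ℤ) ∣ pivot q (i + k) - pivot q i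
  | 0 => by simp
  | k + 1 => by
    rw [← add_assoc, pivot, add_sub_right_comm]
    exact dvd_add (scale_dvd_pivot_sub i k) (by exact_mod_cast scale_dvd_scale q i k)

variable {q}

lemma hundred_mul_pivot_add_le (hq : 1000 ≤ q) : ∀ j, 100 * pivot q j + 100 ≤ scale q j
  | 0 => by simp only [pivot, scale_zero]; omega
  | j + 1 => by
    have ih := hundred_mul_pivot_add_le hq j
    have hscale : (1000 : ℤ) ≤ scale q j := by exact_mod_cast hq.trans (le_scale q j)
    rw [pivot, scale_succ]
    push_cast
    nlinarith

end Scale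

/-- The base `q` and the amplitudes `σ j` of the level-`j` perturbations of a reflection
hierarchy; the amplitudes decay fast enough for the spectral gaps created at level `j` to survive
all later perturbations. -/
structure AdmissibleScales (q : ℕ) (σ : ℕ → ℝ) : Prop where
  base_ge : 1000 ≤ q
  amp_pos : ∀ j, 0 < σ j
  amp_succ_le : ∀ j, 64 * (scale q j : ℝ) ^ 7 * σ (j + 1) ≤ σ j

/-- The separation of Dirichlet eigenvalues inside a level-`j` cell that a perturbation of size
`σ j` achieves. -/
def gap (q : ℕ) (σ : ℕ → ℝ) (j : ℕ) : ℝ := σ j / (2 * (scale q j : ℝ) ^ 7)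

namespace AdmissibleScales

variable {q : ℕ} {σ : ℕ → ℝ}

section Gap

variable (h : AdmissibleScales q σ)

include h

lemma thousand_le_scale (j : ℕ) : 1000 ≤ scale q j := h.base_ge.trans (le_scale q j)

lemma thousand_le_scale_real (j : ℕ) : (1000 : ℝ) ≤ scale q j := by
  exact_mod_cast h.thousand_le_scale j

lemma scale_pos (j : ℕ) : (0 : ℤ) < scale q j := by
  have := h.thousand_le_scale j
  omega

lemma gap_pos (j : ℕ) : 0 < gap q σ j := by
  have := h.thousand_le_scale_real j
  have := h.amp_pos j
  unfold gap; positivity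

lemma amp_succ_le_gap (j : ℕ) : σ (j + 1) ≤ gap q σ j / 32 := by
  have := h.thousand_le_scale_real j
  rw [gap, div_div, le_div_iff₀ (by positivity)]
  linarith [h.amp_succ_le j]

lemma gap_le_amp (j : ℕ) : gap q σ j ≤ σ j / 2 := by
  have hscale := h.thousand_le_scale_real j
  have hpow : (1 : ℝ) ≤ (scale q j : ℝ) ^ 7 := one_le_pow₀ (by linarith)
  exact div_le_div_of_nonneg_left (h.amp_pos j).le two_pos (by linarith)

lemma two_mul_amp_succ_le (j : ℕ) : 2 * σ (j + 1) ≤ σ j := by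
  linarith [h.amp_succ_le_gap j, h.gap_le_amp j, h.amp_pos j]

lemma gap_succ_le (j : ℕ) : gap q σ (j + 1) ≤ gap q σ j := by
  linarith [h.amp_succ_le_gap j, h.gap_le_amp (j + 1), h.amp_pos (j + 1), h.gap_pos j]

lemma exists_perturbation (g : ℤ → ℝ) (j : ℕ) :
    ∃ ω : ℤ → ℝ, (∀ x, 0 ≤ ω x ∧ ω x ≤ σ j) ∧
      IsSeparatedOn (fun x => g x + ω x) (pivot q j - scale q j) (pivot q j) (gap q σ j) :=
  exists_isSeparatedOn_add g (by have := h.thousand_le_scale j; omega) (by ring) (h.amp_pos j)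

end Gap

/-- The potential after `j` levels: level `j` adds a perturbation that separates the spectra in
one cell, copied to all other cells by reflection. -/
def approx (h : AdmissibleScales q σ) : ℕ → ℤ → ℝ
  | 0 => 0
  | j + 1 => fun x => h.approx j x +
      (h.exists_perturbation (h.approx j) j).choose (reflFold (pivot q j) (scale q j) x)

/-- The reflective-hierarchical potential, the increasing limit of `approx`. -/
def potential (h : AdmissibleScales q σ) (x : ℤ) : ℝ := ⨆ j, h.approx j x

variable (h : AdmissibleScales q σ)

lemma approx_succ_mem (j : ℕ) (x : ℤ) :
    h.approx j x ≤ h.approx (j + 1) x ∧ h.approx (j + 1) x ≤ h.approx j x + σ j := by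
  have hω := (h.exists_perturbation (h.approx j) j).choose_spec.1
    (reflFold (pivot q j) (scale q j) x)
  rw [approx]
  constructor <;> linarith [hω.1, hω.2]

lemma approx_le_approx_add (x : ℤ) (i j : ℕ) : h.approx i x ≤ h.approx j x + 2 * σ j := by
  have hmono : Monotone fun j => h.approx j x :=
    monotone_nat_of_le_succ fun j => (h.approx_succ_mem j x).1
  have hanti : Antitone fun j => h.approx j x + 2 * σ j := antitone_nat_of_succ_le fun j => by
    linarith [(h.approx_succ_mem j x).2, h.two_mul_amp_succ_le j]
  rcases le_total i j with hij | hij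
  · linarith [hmono hij, h.amp_pos j]
  · linarith [hanti hij, h.amp_pos i]

lemma abs_potential_sub_approx_le (x : ℤ) (j : ℕ) :
    |h.potential x - h.approx j x| ≤ 2 * σ j := by
  have hle : h.approx j x ≤ h.potential x :=
    le_ciSup (f := fun j => h.approx j x)
      ⟨_, by rintro _ ⟨i, rfl⟩; exact h.approx_le_approx_add x i j⟩ j
  have hge : h.potential x ≤ h.approx j x + 2 * σ j :=
    ciSup_le fun i => h.approx_le_approx_add x i j
  rw [abs_le]; constructor <;> linarith [h.amp_pos j]

lemma abs_potential_le (x : ℤ) : |h.potential x| ≤ 2 * σ 0 := by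
  simpa [approx] using h.abs_potential_sub_approx_le x 0

lemma approx_reflFold (j : ℕ) : ∀ i, i ≤ j + 1 → ∀ x,
    h.approx i (reflFold (pivot q j) (scale q j) x) = h.approx i x
  | 0, _, _ => rfl
  | i + 1, hi, x => by
    obtain ⟨k, rfl⟩ : ∃ k, j = i + k := ⟨j - i, by omega⟩
    simp only [approx]
    rw [approx_reflFold (i + k) i (by omega) x, reflFold_reflFold (h.scale_pos i)
      (by exact_mod_cast scale_dvd_scale q i k) (scale_dvd_pivot_sub q i k)]

lemma approx_succ_eq_of_reflFold_eq {j : ℕ} {x y : ℤ} (hxy : reflFold (pivot q j) (scale q j) x =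
    reflFold (pivot q j) (scale q j) y) : h.approx (j + 1) x = h.approx (j + 1) y := by
  rw [← h.approx_reflFold j _ le_rfl x, hxy, h.approx_reflFold j _ le_rfl]

lemma isSeparatedOn_approx (j : ℕ) (k : ℤ) : IsSeparatedOn (h.approx (j + 1))
    (pivot q j - (k + 1) * scale q j) (pivot q j - k * scale q j) (gap q σ j) := by
  have hcell : IsSeparatedOn (h.approx (j + 1)) (pivot q j - scale q j) (pivot q j) (gap q σ j) :=
    (h.exists_perturbation (h.approx j) j).choose_spec.2.congr fun x hx hx' => by
      simp only [approx, reflFold_eq_self hx hx']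
  rcases Int.even_or_odd' k with ⟨c, rfl | rfl⟩
  · convert hcell.translate (2 * scale q j * c) fun x _ _ =>
      h.approx_succ_eq_of_reflFold_eq ?_ using 1
    · ring
    · ring
    · rw [sub_eq_add_neg, ← mul_neg, reflFold_add_mul]
  · convert hcell.reflect (2 * pivot q j + 1 - 2 * scale q j * (c + 1)) fun x _ _ =>
      h.approx_succ_eq_of_reflFold_eq ?_ using 1
    · ring
    · ring
    · rw [show 2 * pivot q j + 1 - 2 * (scale q j : ℤ) * (c + 1) - x =
        2 * pivot q j + 1 - x + 2 * scale q j * -(c + 1) by ring, reflFold_add_mul,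
        reflFold_reflect (h.scale_pos j)]

lemma isSeparatedOn_potential (j : ℕ) (k : ℤ) : IsSeparatedOn h.potential
    (pivot q j - (k + 1) * scale q j) (pivot q j - k * scale q j) (gap q σ j / 2) := by
  intro i k i' k' hci hki hkd E F hE hF
  have hsep := (h.isSeparatedOn_approx j _).of_abs_sub_le
    (fun x => h.abs_potential_sub_approx_le x (j + 1)) hci hki hkd hE hF
  linarith [h.amp_succ_le_gap j, h.gap_pos j]

lemma eigenvalueCount_potential_le (j : ℕ) (E : ℝ) (a : ℤ) (l : ℕ) :
    (eigenvalueCount h.potential (box a l) E (gap q σ j / 4) : ℝ) ≤ 2 * (l / scale q j) + 3 := by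
  have hcount := eigenvalueCount_le_of_cells (by have := h.thousand_le_scale j; omega)
    (half_pos (h.gap_pos j)).le (h.isSeparatedOn_potential j) E a l
  rwa [div_div, show (2 : ℝ) * 2 = 4 by norm_num] at hcount

end AdmissibleScales

/-! ### The Lyapunov lower bound away from the Dirichlet spectrum -/

section LayerCake

variable {η : ℕ → ℝ} (hpos : ∀ j, 0 < η j) (hanti : Antitone η)

include hpos hanti

lemma log_zero_sub_sum_layers_le_log {x : ℝ} (hx : 0 < x) : ∀ J,
    log (η 0) - ∑ j ∈ Finset.range J, (if x < η j then log (η j) - log (η (j + 1)) else 0)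
      - (if x < η J then log (η J) - log x else 0) ≤ log x
  | 0 => by
    rw [Finset.sum_range_zero, sub_zero]
    split_ifs with hlt
    · linarith
    · linarith [log_le_log (hpos 0) (not_lt.1 hlt)]
  | J + 1 => by
    have ih := log_zero_sub_sum_layers_le_log hx J
    have hsplit : (if x < η J then log (η J) - log x else 0) ≤
        (if x < η J then log (η J) - log (η (J + 1)) else 0) +
        (if x < η (J + 1) then log (η (J + 1)) - log x else 0) := by
      by_cases hJ : x < η J
      · by_cases hJ' : x < η (J + 1)
        · simp [hJ, hJ']
        · simp only [hJ, hJ', if_true, if_false]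
          linarith [log_le_log (hpos (J + 1)) (not_lt.1 hJ')]
      · have hJ' : ¬ x < η (J + 1) := fun hlt => hJ (hlt.trans_le (hanti J.le_succ))
        simp [hJ, hJ']
    rw [Finset.sum_range_succ]
    linarith

/-- Layer-cake lower bound: each eigenvalue within `η j` of `E` costs at most
`log (η j) - log (η (j + 1))`, and an eigenvalue within `η J` costs at most what its distance `d`
to `E` allows. -/
lemma log_layers_le_log_abs_dirichletDet {g : ℤ → ℝ} {a : ℤ} {l : ℕ} {E d : ℝ} (hd : 0 < d)
    (hE : ∀ F, IsDirichletEigenvalue g (box a l) F → d ≤ |F - E|) (J : ℕ) :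
    l * log (η 0) - ∑ j ∈ Finset.range J,
        eigenvalueCount g (box a l) E (η j) * (log (η j) - log (η (j + 1)))
      - eigenvalueCount g (box a l) E (η J) * max 0 (log (η J) - log d) ≤
      log |dirichletDet g E a l| := by
  set ev := dirichletEigenvalue g (box a l)
  have hdist : ∀ i, d ≤ |ev i - E| := fun i => hE _ (isDirichletEigenvalue_dirichletEigenvalue g i)
  have hcount : ∀ t c : ℝ, ∑ i, (if |ev i - E| < t then c else 0) =
      eigenvalueCount g (box a l) E t * c := fun t c => by
    rw [← Finset.sum_filter, Finset.sum_const, nsmul_eq_mul]; rfl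
  have hterm : ∀ i ∈ Finset.univ, log (η 0) - ∑ j ∈ Finset.range J,
      (if |ev i - E| < η j then log (η j) - log (η (j + 1)) else 0)
      - (if |ev i - E| < η J then max 0 (log (η J) - log d) else 0) ≤ log |E - ev i| := by
    intro i _
    have hlayer := log_zero_sub_sum_layers_le_log hpos hanti (hd.trans_le (hdist i)) J
    have hlog := log_le_log hd (hdist i)
    have htail : (if |ev i - E| < η J then log (η J) - log |ev i - E| else 0) ≤
        if |ev i - E| < η J then max 0 (log (η J) - log d) else 0 := by
      split_ifs
      · exact le_max_of_le_right (by linarith)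
      · exact le_rfl
    rw [abs_sub_comm E]
    linarith
  rw [dirichletDet_eq_prod, Finset.abs_prod, log_prod fun i _ hzero => by
    linarith [hdist i, abs_sub_comm E (ev i)]]
  refine le_trans (le_of_eq ?_) (Finset.sum_le_sum hterm)
  rw [Finset.sum_sub_distrib, Finset.sum_sub_distrib, Finset.sum_comm]
  simp_rw [hcount]
  simp [box]

end LayerCake

/-- The amplitudes of the example: level `0` is large, which makes the Lyapunov exponent at least
of order `log K`, and level `j + 1` is exactly `exp (-b)` to the power of the reflection length
`2 * pivot q j + 1`, which produces `deltaPot = b`. -/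
def expAmp (b : ℝ) (q : ℕ) (K : ℝ) : ℕ → ℝ
  | 0 => 4 * (q : ℝ) ^ 7 * K
  | j + 1 => exp (-(b * (2 * (pivot q j : ℝ) + 1)))

lemma mul_pow_le_exp_mul {b x : ℝ} (hb : 0 < b) (hx : 64 * Nat.factorial 15 / (2 * b) ^ 15 ≤ x) :
    64 * x ^ 14 ≤ exp (2 * b * x) := by
  have hxpos : 0 < x := lt_of_lt_of_le (by positivity) hx
  rw [div_le_iff₀ (by positivity)] at hx
  calc 64 * x ^ 14 ≤ (2 * b * x) ^ 15 / Nat.factorial 15 := by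
        rw [le_div_iff₀ (by positivity)]
        calc 64 * x ^ 14 * Nat.factorial 15 = 64 * Nat.factorial 15 * x ^ 14 := by ring
          _ ≤ x * (2 * b) ^ 15 * x ^ 14 := by gcongr
          _ = (2 * b * x) ^ 15 := by ring
    _ ≤ exp (2 * b * x) := pow_div_factorial_le_exp _ (by positivity) 15

lemma exists_admissibleScales_expAmp {b : ℝ} (hb : 0 < b) :
    ∃ q : ℕ, ∀ K, 16 ≤ K → AdmissibleScales q (expAmp b q K) := by
  obtain ⟨q, hq⟩ := exists_nat_ge (max 1000 (64 * (Nat.factorial 15 : ℝ) / (2 * b) ^ 15))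
  have hq_ge : (1000 : ℝ) ≤ q := (le_max_left _ _).trans hq
  refine ⟨q, fun K hK => ⟨by exact_mod_cast hq_ge, ?_, ?_⟩⟩
  · rintro (_ | j)
    · simp only [expAmp]; positivity
    · exact exp_pos _
  · rintro (_ | j)
    · have hexp : exp (-(b * (2 * ((0 : ℤ) : ℝ) + 1))) ≤ 1 := by
        rw [exp_le_one_iff]; push_cast; linarith
      have hpow : (0 : ℝ) < (q : ℝ) ^ 7 := by positivity
      simp only [expAmp, pivot, scale_zero]
      nlinarith
    · set x : ℝ := (scale q j : ℝ) with hx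
      have hscale : (scale q (j + 1) : ℝ) = x ^ 2 := by rw [scale_succ]; push_cast; rfl
      have hpivot : (pivot q (j + 1) : ℝ) = pivot q j + x := by rw [pivot]; push_cast; rfl
      have hxq : (q : ℝ) ≤ x := hx ▸ Nat.cast_le.2 (le_scale q j)
      simp only [expAmp, hscale, hpivot]
      calc 64 * (x ^ 2) ^ 7 * exp (-(b * (2 * (pivot q j + x) + 1)))
          = 64 * x ^ 14 * exp (-(b * (2 * (pivot q j + x) + 1))) := by ring
        _ ≤ exp (2 * b * x) * exp (-(b * (2 * (pivot q j + x) + 1))) := by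
            gcongr
            exact mul_pow_le_exp_mul hb ((le_max_right _ _).trans (hq.trans hxq))
        _ = exp (-(b * (2 * (pivot q j : ℝ) + 1))) := by rw [← exp_add]; congr 1; ring

/-- Dirichlet eigenvalues of disjoint boxes near the origin, of size `N`, are separated by at
least `2 * exp (-(sepRate b q * N))`. -/
def sepRate (b : ℝ) (q : ℕ) : ℝ := 11 * b + 14 * log q + 150

namespace AdmissibleScales

section Growth

variable {q : ℕ} {σ : ℕ → ℝ} (h : AdmissibleScales q σ)

include h

lemma thousand_mul_four_pow_le_scale : ∀ j, 1000 * (4 : ℝ) ^ j ≤ scale q j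
  | 0 => by simpa using h.thousand_le_scale_real 0
  | j + 1 => by
    have ih := thousand_mul_four_pow_le_scale j
    have hscale := h.thousand_le_scale_real j
    rw [scale_succ, pow_succ]
    push_cast
    nlinarith

lemma mul_two_pow_le_sqrt_scale (j : ℕ) : 31 * (2 : ℝ) ^ j ≤ √(scale q j) := by
  refine le_sqrt_of_sq_le ?_
  calc (31 * (2 : ℝ) ^ j) ^ 2 = 961 * 4 ^ j := by
        rw [mul_pow, ← pow_mul, mul_comm j, pow_mul]; norm_num
    _ ≤ 1000 * 4 ^ j := by gcongr; norm_num
    _ ≤ scale q j := h.thousand_mul_four_pow_le_scale j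

lemma pivot_le_scale (j : ℕ) : pivot q j ≤ scale q j := by
  linarith [hundred_mul_pivot_add_le h.base_ge j, pivot_nonneg q j]

lemma pivot_le_two_mul_sqrt_scale : ∀ j, (pivot q j : ℝ) ≤ 2 * √(scale q j)
  | 0 => by simp [pivot]
  | i + 1 => by
    have hpivot : (pivot q i : ℝ) ≤ scale q i := by exact_mod_cast h.pivot_le_scale i
    rw [scale_succ, pivot]
    push_cast
    rw [sqrt_sq (by positivity)]
    linarith

lemma natCast_le_pivot : ∀ j : ℕ, (j : ℤ) ≤ pivot q j
  | 0 => by simp [pivot]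
  | j + 1 => by
    rw [pivot]
    push_cast
    linarith [natCast_le_pivot j, h.scale_pos j]

lemma exists_le_pivot (x : ℤ) : ∃ j, x ≤ pivot q j :=
  ⟨x.toNat, x.self_le_toNat.trans (h.natCast_le_pivot _)⟩

lemma exists_least_lt_scale (l : ℕ) : ∃ J, l < scale q J ∧ ∀ j < J, scale q j ≤ l := by
  have hex : ∃ J, l < scale q J := ⟨l, by
    have hpivot := h.natCast_le_pivot l
    have := hundred_mul_pivot_add_le h.base_ge l
    omega⟩
  exact ⟨Nat.find hex, Nat.find_spec hex, fun j hj => not_lt.1 (Nat.find_min hex hj)⟩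

lemma antitone_gap : Antitone (gap q σ) := antitone_nat_of_succ_le h.gap_succ_le

end Growth

section ExpAmp

variable {q : ℕ} {b K : ℝ} (h : AdmissibleScales q (expAmp b q K))

include h

lemma gap_zero : gap q (expAmp b q K) 0 = 2 * K := by
  have hscale := h.thousand_le_scale_real 0
  rw [scale_zero] at hscale
  rw [gap, expAmp, scale_zero]
  field_simp
  ring

lemma neg_log_gap_succ_le (hb : 0 < b) (j : ℕ) :
    -log (gap q (expAmp b q K) (j + 1) / 4) ≤ (5 * b + 30) * √(scale q j) := by
  set r := √(scale q j : ℝ)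
  have hr : 31 ≤ r := by
    linarith [h.mul_two_pow_le_sqrt_scale j, one_le_pow₀ (n := j) (one_le_two (α := ℝ))]
  have hgap : gap q (expAmp b q K) (j + 1) / 4 =
      exp (-(b * (2 * (pivot q j : ℝ) + 1))) / (8 * r ^ 28) := by
    have hscale : (scale q (j + 1) : ℝ) = (r ^ 2) ^ 2 := by
      rw [scale_succ, sq_sqrt (by positivity)]; push_cast; rfl
    rw [gap, expAmp, hscale, div_div]
    congr 1; ring
  have hlogr : log r ≤ r - 1 := log_le_sub_one_of_pos (by linarith)
  have hlog8 : log 8 ≤ 8 - 1 := log_le_sub_one_of_pos (by norm_num)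
  have hpivot := h.pivot_le_two_mul_sqrt_scale j
  rw [hgap, log_div (exp_pos _).ne' (by positivity), log_exp, log_mul (by norm_num)
    (by positivity), log_pow]
  push_cast
  nlinarith

lemma log_gap_le (hK : 1 < K) (j : ℕ) : log (gap q (expAmp b q K) j / 4) ≤ log K := by
  refine log_le_log (by linarith [h.gap_pos j]) ?_
  linarith [h.antitone_gap j.zero_le, h.gap_zero]

/-- The cost of the level-`j` layer in a box of length `l` at least the level-`j` scale; these
costs are summable in `j`. -/
lemma eigenvalueCount_mul_log_sub_log_le (hb : 0 < b) (hK : 1 < K) (E : ℝ) (a : ℤ) {l j : ℕ}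
    (hl : scale q j ≤ l) :
    (eigenvalueCount h.potential (box a l) E (gap q (expAmp b q K) j / 4) : ℝ) *
      (log (gap q (expAmp b q K) j / 4) - log (gap q (expAmp b q K) (j + 1) / 4)) ≤
      l * (log K / 200 + (5 * b + 30) * (5 / 31)) * (1 / 2) ^ j := by
  have hlogK : 0 < log K := log_pos hK
  have hl' : (scale q j : ℝ) ≤ l := by exact_mod_cast hl
  have hscale := h.thousand_mul_four_pow_le_scale j
  have hsqrt := h.mul_two_pow_le_sqrt_scale j
  have hscale_pos : (0 : ℝ) < scale q j := lt_of_lt_of_le (by positivity) hscale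
  have hcount : (eigenvalueCount h.potential (box a l) E (gap q (expAmp b q K) j / 4) : ℝ) ≤
      5 * (l / scale q j) := by
    linarith [h.eigenvalueCount_potential_le j E a l, (one_le_div hscale_pos).2 hl']
  have hlog_nonneg : 0 ≤ log (gap q (expAmp b q K) j / 4) -
      log (gap q (expAmp b q K) (j + 1) / 4) :=
    sub_nonneg.2 (log_le_log (by linarith [h.gap_pos (j + 1)]) (by linarith [h.gap_succ_le j]))
  have hlog_le : log (gap q (expAmp b q K) j / 4) - log (gap q (expAmp b q K) (j + 1) / 4) ≤
      log K + (5 * b + 30) * √(scale q j) := by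
    linarith [h.neg_log_gap_succ_le hb j, h.log_gap_le hK j]
  have hinv : 1 / (scale q j : ℝ) ≤ 1 / 1000 * (1 / 2) ^ j := by
    have hpow : (2 : ℝ) ^ j ≤ 4 ^ j := by gcongr; norm_num
    rw [div_pow, one_pow, div_mul_div_comm, one_mul]
    exact one_div_le_one_div_of_le (by positivity) (by linarith)
  have hinv_sqrt : 1 / √(scale q j : ℝ) ≤ 1 / 31 * (1 / 2) ^ j := by
    rw [div_pow, one_pow, div_mul_div_comm, one_mul]
    exact one_div_le_one_div_of_le (by positivity) hsqrt
  calc _ ≤ 5 * (l / scale q j) * (log K + (5 * b + 30) * √(scale q j)) :=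
        mul_le_mul hcount hlog_le hlog_nonneg (by positivity)
    _ = 5 * l * (log K * (1 / scale q j) + (5 * b + 30) * (1 / √(scale q j))) := by
        rw [← sqrt_div_self']; ring
    _ ≤ 5 * l * (log K * (1 / 1000 * (1 / 2) ^ j) + (5 * b + 30) * (1 / 31 * (1 / 2) ^ j)) := by
        gcongr
    _ = _ := by ring

lemma exp_le_abs_dirichletDet {D : ℝ} (hb : 0 < b) (hK : 1 < K) (hD : 0 ≤ D)
    (hKD : 1 + 2 * (5 * b + 30) + 5 * D ≤ 0.015 * log K) {a : ℤ} {l : ℕ} (hl : 1000 ≤ l) {E : ℝ}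
    (hE : ∀ F, IsDirichletEigenvalue h.potential (box a l) F → exp (-(D * l)) ≤ |F - E|) :
    exp (0.97 * l * log K) ≤ |dirichletDet h.potential E a l| := by
  set η : ℕ → ℝ := fun j => gap q (expAmp b q K) j / 4 with hη
  have hlogK : 0 < log K := log_pos hK
  have hl' : (1000 : ℝ) ≤ l := by exact_mod_cast hl
  obtain ⟨J, hJ, hmin⟩ := h.exists_least_lt_scale l
  have hlayers := log_layers_le_log_abs_dirichletDet (η := η)
    (fun j => by have := h.gap_pos j; positivity)
    (fun i j hij => by simp only [hη]; linarith [h.antitone_gap hij]) (exp_pos _) hE J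
  have htail : (eigenvalueCount h.potential (box a l) E (η J) : ℝ) *
      max 0 (log (η J) - log (exp (-(D * l)))) ≤ 5 * (log K + D * l) := by
    have hcount := h.eigenvalueCount_potential_le J E a l
    have hratio : (l : ℝ) / scale q J ≤ 1 := div_le_one_of_le₀ (by exact_mod_cast hJ.le)
      (by positivity)
    rw [log_exp]
    exact mul_le_mul (by linarith) (max_le (by positivity) (by linarith [h.log_gap_le hK J]))
      (le_max_left _ _) (by norm_num)
  have hsum : ∑ j ∈ Finset.range J, (eigenvalueCount h.potential (box a l) E (η j) : ℝ) *
      (log (η j) - log (η (j + 1))) ≤ l * (log K / 100 + (5 * b + 30)) := by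
    refine (Finset.sum_le_sum fun j hj => h.eigenvalueCount_mul_log_sub_log_le hb hK E a
      (hmin j (Finset.mem_range.1 hj))).trans ?_
    rw [← Finset.mul_sum]
    calc l * (log K / 200 + (5 * b + 30) * (5 / 31)) * ∑ j ∈ Finset.range J, ((1 : ℝ) / 2) ^ j
        ≤ l * (log K / 200 + (5 * b + 30) * (5 / 31)) * 2 := by
          gcongr; exact sum_geometric_two_le J
      _ ≤ _ := by nlinarith
  have hmain : (l : ℝ) * (log K - 1) ≤ l * log (η 0) := by
    have hlog2 : log 2 ≤ 2 - 1 := log_le_sub_one_of_pos (by norm_num)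
    have hη0 : η 0 = K / 2 := by simp only [hη, h.gap_zero]; ring
    rw [hη0, log_div (by linarith) (by norm_num)]
    gcongr
    linarith
  have hlog : 0.97 * l * log K ≤ log |dirichletDet h.potential E a l| := by
    nlinarith [mul_le_mul_of_nonneg_left hKD (show (0 : ℝ) ≤ l by linarith),
      mul_nonneg (show (0 : ℝ) ≤ l by linarith) (show 0 ≤ 5 * b + 30 by linarith)]
  have hdet : dirichletDet h.potential E a l ≠ 0 := fun hzero => by
    rw [hzero, abs_zero, log_zero] at hlog
    have : 0 < 0.97 * l * log K := by positivity
    linarith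
  exact (le_log_iff_exp_le (abs_pos.2 hdet)).1 hlog

lemma scale_succ_le_of_pivot_lt {N i : ℕ} (hN : 1 ≤ N) (hi : pivot q i < 5 * N) :
    (scale q (i + 1) : ℝ) ≤ 625 * (q : ℝ) ^ 2 * (N : ℝ) ^ 4 := by
  have hN' : (1 : ℝ) ≤ (N : ℝ) ^ 4 := one_le_pow₀ (by exact_mod_cast hN)
  have hq : (1 : ℝ) ≤ (q : ℝ) ^ 2 := one_le_pow₀ (by exact_mod_cast h.base_ge.trans' (by norm_num))
  rcases i with _ | i
  · rw [scale_succ, scale_zero]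
    push_cast
    nlinarith
  · have hscale : (scale q i : ℝ) ≤ 5 * N := by
      rw [pivot] at hi
      exact_mod_cast (by linarith [pivot_nonneg q i] : (scale q i : ℤ) ≤ 5 * N)
    rw [scale_succ, scale_succ]
    push_cast
    calc (((scale q i : ℝ) ^ 2) ^ 2) ≤ ((5 * N) ^ 2) ^ 2 := by gcongr
      _ = 625 * 1 * (N : ℝ) ^ 4 := by ring
      _ ≤ 625 * (q : ℝ) ^ 2 * (N : ℝ) ^ 4 := by gcongr

lemma mul_scale_pow_le_exp {N i : ℕ} (hN : 1 ≤ N) (hi : pivot q i < 5 * N) :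
    8 * (scale q (i + 1) : ℝ) ^ 7 ≤ exp ((14 * log q + 150) * N) := by
  have hN' : (1 : ℝ) ≤ N := by exact_mod_cast hN
  have hq : (1000 : ℝ) ≤ q := by exact_mod_cast h.base_ge
  have hlogq : 0 ≤ log q := log_nonneg (by linarith)
  have hexp16 : (625 : ℝ) ≤ exp 16 := by
    calc (625 : ℝ) = 5 ^ 4 := by norm_num
      _ ≤ (exp 4) ^ 4 := by gcongr; linarith [add_one_le_exp (4 : ℝ)]
      _ = exp 16 := by rw [← exp_nat_mul]; norm_num
  calc 8 * (scale q (i + 1) : ℝ) ^ 7 ≤ 8 * (625 * (q : ℝ) ^ 2 * (N : ℝ) ^ 4) ^ 7 := by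
        gcongr; exact h.scale_succ_le_of_pivot_lt hN hi
    _ ≤ exp 7 * (exp 16 * (exp (log q)) ^ 2 * (exp N) ^ 4) ^ 7 := by
        rw [exp_log (by linarith)]
        gcongr <;> linarith [add_one_le_exp (7 : ℝ), add_one_le_exp (N : ℝ)]
    _ = exp (7 + 7 * (16 + 2 * log q + 4 * N)) := by
        rw [← exp_nat_mul, ← exp_nat_mul, ← exp_add, ← exp_add, ← exp_nat_mul, ← exp_add]
        rfl
    _ ≤ _ := exp_le_exp.2 (by nlinarith)

lemma exp_le_abs_sub_of_disjoint_boxes (hb : 0 < b) {N : ℕ} (hN : 1 ≤ N) {a a' : ℤ} {l l' : ℕ}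
    (ha : -(5 * N : ℤ) ≤ a) (haa' : a + l ≤ a') (ha' : a' + l' ≤ 5 * N + 1) {E F : ℝ}
    (hE : IsDirichletEigenvalue h.potential (box a l) E)
    (hF : IsDirichletEigenvalue h.potential (box a' l') F) :
    2 * exp (-(sepRate b q * N)) ≤ |E - F| := by
  have hex := h.exists_le_pivot (5 * N)
  obtain ⟨j, hj, hmin⟩ : ∃ j, 5 * N ≤ pivot q j ∧ ∀ i < j, pivot q i < 5 * N :=
    ⟨Nat.find hex, Nat.find_spec hex, fun i hi => not_le.1 (Nat.find_min hex hi)⟩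
  rcases j with _ | i
  · rw [pivot] at hj; omega
  have hi := hmin i i.lt_succ_self
  have hcell := hundred_mul_pivot_add_le h.base_ge (i + 1)
  refine le_trans ?_ ((h.isSeparatedOn_potential (i + 1) 0).le_abs_sub_of_box
    (by linarith) haa' (by linarith) hE hF)
  have hN' : (1 : ℝ) ≤ N := by exact_mod_cast hN
  have hpivot : (pivot q i : ℝ) ≤ 5 * N := by exact_mod_cast hi.le
  have hscale := h.thousand_le_scale_real (i + 1)
  rw [gap, expAmp, div_div, le_div_iff₀ (by positivity)]
  calc 2 * exp (-(sepRate b q * N)) * (2 * (scale q (i + 1) : ℝ) ^ 7 * 2)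
      = exp (-(sepRate b q * N)) * (8 * (scale q (i + 1) : ℝ) ^ 7) := by ring
    _ ≤ exp (-(sepRate b q * N)) * exp ((14 * log q + 150) * N) := by
        gcongr; exact h.mul_scale_pow_le_exp hN hi
    _ = exp (-(11 * b * N)) := by rw [← exp_add, sepRate]; congr 1; ring
    _ ≤ exp (-(b * (2 * (pivot q i : ℝ) + 1))) := exp_le_exp.2 (by nlinarith)

end ExpAmp

end AdmissibleScales

/-! ### The reflection exponent -/

lemma limsup_eq_of_eventually_le_of_frequently_le {ι : Type*} {f : Filter ι} {u : ι → ℝ} {b : ℝ}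
    (hle : ∀ ε > 0, ∀ᶠ n in f, u n ≤ b + ε) (hge : ∀ ε > 0, ∃ᶠ n in f, b - ε ≤ u n) :
    limsup u f = b := by
  have hcobdd : f.IsCoboundedUnder (· ≤ ·) u := .of_frequently_ge (hge 1 one_pos)
  have hbdd : f.IsBoundedUnder (· ≤ ·) u := isBoundedUnder_of_eventually_le (hle 1 one_pos)
  refine le_antisymm (le_of_forall_pos_le_add fun ε hε => limsup_le_of_le hcobdd (hle ε hε))
    (le_of_forall_pos_le_add fun ε hε => ?_)
  linarith [le_limsup_of_frequently_le (hge ε hε) hbdd]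

lemma tendsto_abs_intCast_cofinite : Tendsto (fun n : ℤ => |(n : ℝ)|) cofinite atTop := by
  rw [← cocompact_eq_cofinite]
  exact tendsto_norm_cocompact_atTop (E := ℤ)

lemma isDirichletEigenvalue_singleton (g : ℤ → ℝ) (x : ℤ) :
    IsDirichletEigenvalue g {x} (g x) := by
  refine ⟨fun n => if n = x then 1 else 0, fun n hn => ?_, ⟨x, by simp⟩, fun n hn => ?_⟩
  · simpa using hn
  · rw [Finset.mem_singleton] at hn
    simp [schrodinger, hn]

lemma two_mul_add_one_le_abs_of_reflFold_sub_eq {B Q n : ℤ} (hB : 0 ≤ B) (hQ : 2 * B + 2 ≤ Q)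
    (hfold : ∀ m, reflFold B Q (n - m) = reflFold B Q m) : 2 * B + 1 ≤ |n| := by
  have hzero := hfold 0
  have hneg := hfold (-1)
  rw [reflFold_eq_self (x := 0) (by linarith) (by linarith)] at hzero
  rw [reflFold_eq_self (x := -1) (by linarith) (by linarith)] at hneg
  obtain ⟨c, hc⟩ : ∃ c, n = 2 * B + 1 + 2 * (Q * c) := by
    rcases exists_reflFold_eq (B := B) (Q := Q) (n - 0) with ⟨c, hc⟩ | ⟨c, hc⟩
    · rcases exists_reflFold_eq (B := B) (Q := Q) (n - -1) with ⟨d, hd⟩ | ⟨d, hd⟩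
      · have hunit : Q * (c - d) = 1 := by linarith [mul_sub Q c d]
        have := Int.eq_one_or_neg_one_of_mul_eq_one hunit
        omega
      · exact ⟨d, by linarith⟩
    · exact ⟨c, by linarith⟩
  rcases le_or_gt 0 c with hc_nonneg | hc_neg
  · exact le_abs.2 (.inl (by nlinarith))
  · exact le_abs.2 (.inr (by nlinarith))

/-- The failure of the reflection `m ↦ n - m` to be a symmetry of `g`. -/
def reflDefect (g : ℤ → ℝ) (n : ℤ) : ℝ := ⨆ m : ℤ, |g (n - m) - g m|

lemma abs_sub_le_reflDefect {g : ℤ → ℝ} {M : ℝ} (hg : ∀ n, |g n| ≤ M) (n m : ℤ) :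
    |g (n - m) - g m| ≤ reflDefect g n :=
  le_ciSup (f := fun m => |g (n - m) - g m|)
    ⟨M + M, Set.forall_mem_range.2 fun m => (abs_sub _ _).trans (add_le_add (hg _) (hg m))⟩ m

namespace AdmissibleScales

section Defect

variable {q : ℕ} {σ : ℕ → ℝ} (h : AdmissibleScales q σ)

lemma gap_le_abs_approx_sub {j : ℕ} {x y : ℤ} (hxy : reflFold (pivot q j) (scale q j) x <
    reflFold (pivot q j) (scale q j) y) :
    gap q σ j ≤ |h.approx (j + 1) x - h.approx (j + 1) y| := by
  have hx := reflFold_mem (B := pivot q j) (h.scale_pos j) x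
  have hy := reflFold_mem (B := pivot q j) (h.scale_pos j) y
  rw [← h.approx_reflFold j _ le_rfl x, ← h.approx_reflFold j _ le_rfl y]
  have heigen : ∀ z, IsDirichletEigenvalue (h.approx (j + 1)) (Finset.Icc z z)
      (h.approx (j + 1) z) := fun z => by
    rw [Finset.Icc_self]; exact isDirichletEigenvalue_singleton _ z
  exact h.isSeparatedOn_approx j 0 (by linarith) hxy (by linarith) (heigen _) (heigen _)

lemma half_gap_le_abs_potential_sub {j : ℕ} {x y : ℤ} (hxy : reflFold (pivot q j) (scale q j) x ≠
    reflFold (pivot q j) (scale q j) y) : gap q σ j / 2 ≤ |h.potential x - h.potential y| := by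
  have hgap : gap q σ j ≤ |h.approx (j + 1) x - h.approx (j + 1) y| := by
    rcases hxy.lt_or_gt with hlt | hlt
    · exact h.gap_le_abs_approx_sub hlt
    · exact (h.gap_le_abs_approx_sub hlt).trans_eq (abs_sub_comm _ _)
  have hx := abs_le.1 (h.abs_potential_sub_approx_le x (j + 1))
  have hy := abs_le.1 (h.abs_potential_sub_approx_le y (j + 1))
  have hamp := h.amp_succ_le_gap j
  have hpos := h.gap_pos j
  rcases le_abs.1 hgap with hge | hge
  · exact le_abs.2 (.inl (by linarith))
  · exact le_abs.2 (.inr (by linarith))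


lemma reflDefect_two_mul_pivot_add_one_le (j : ℕ) :
    reflDefect h.potential (2 * pivot q j + 1) ≤ 4 * σ (j + 1) := by
  refine ciSup_le fun m => ?_
  have happrox : h.approx (j + 1) (2 * pivot q j + 1 - m) = h.approx (j + 1) m :=
    h.approx_succ_eq_of_reflFold_eq (reflFold_reflect (h.scale_pos j) m)
  have hrefl := abs_le.1 (h.abs_potential_sub_approx_le (2 * pivot q j + 1 - m) (j + 1))
  have hself := abs_le.1 (h.abs_potential_sub_approx_le m (j + 1))
  exact abs_le.2 ⟨by linarith, by linarith⟩

lemma exists_half_gap_le_reflDefect {n : ℤ} (hn : n ≠ 0) :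
    ∃ i, gap q σ i / 2 ≤ reflDefect h.potential n ∧
      ∀ j, i = j + 1 → 2 * pivot q j + 1 ≤ |n| := by
  have hself : ∀ j x, |x| ≤ pivot q j → reflFold (pivot q j) (scale q j) x = x := fun j x hx => by
    have := abs_le.1 hx
    have := hundred_mul_pivot_add_le h.base_ge j
    exact reflFold_eq_self (by omega) (by omega)
  have hex : ∃ i, ∃ m, reflFold (pivot q i) (scale q i) (n - m) ≠
      reflFold (pivot q i) (scale q i) m := by
    obtain ⟨i, hi⟩ := h.exists_le_pivot |n|
    refine ⟨i, 0, ?_⟩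
    rwa [sub_zero, hself i n hi, hself i 0 (by simpa using pivot_nonneg q i)]
  classical
  obtain ⟨m, hm⟩ := Nat.find_spec hex
  refine ⟨Nat.find hex, (h.half_gap_le_abs_potential_sub hm).trans
    (abs_sub_le_reflDefect h.abs_potential_le n m), fun j hj => ?_⟩
  have hmin := Nat.find_min hex (m := j) (by omega)
  push Not at hmin
  have := hundred_mul_pivot_add_le h.base_ge j
  have := pivot_nonneg q j
  exact two_mul_add_one_le_abs_of_reflFold_sub_eq (by omega) (by omega) hmin

lemma reflDefect_pos {n : ℤ} (hn : n ≠ 0) : 0 < reflDefect h.potential n := by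
  obtain ⟨i, hi, -⟩ := h.exists_half_gap_le_reflDefect hn
  linarith [h.gap_pos i]

include h in
lemma log_scale_le {j : ℕ} {x : ℝ} (hj : 2 * (pivot q j : ℝ) + 1 ≤ x) :
    log (scale q j) ≤ log q + 2 * log x := by
  have hq : (1 : ℝ) ≤ q := by exact_mod_cast h.base_ge.trans' (by norm_num)
  have hpivot : (0 : ℝ) ≤ pivot q j := by exact_mod_cast pivot_nonneg q j
  rcases j with _ | j
  · rw [scale_zero]
    linarith [log_nonneg (show 1 ≤ x by linarith)]
  · have hscale : (scale q j : ℝ) ≤ x := by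
      have := pivot_nonneg q j
      rw [pivot] at hj
      push_cast at hj
      linarith [(Int.cast_nonneg this : (0 : ℝ) ≤ pivot q j),
        (Nat.cast_nonneg _ : (0 : ℝ) ≤ scale q j)]
    have hlog := log_le_log (by linarith [h.thousand_le_scale_real j]) hscale
    rw [scale_succ, Nat.cast_pow, log_pow]
    push_cast
    linarith [log_nonneg hq]

end Defect

section ExpAmp

variable {q : ℕ} {b K : ℝ} (h : AdmissibleScales q (expAmp b q K))

include h in
lemma log_half_gap_succ (j : ℕ) : log (gap q (expAmp b q K) (j + 1) / 2) =
    -(b * (2 * (pivot q j : ℝ) + 1)) - (log 4 + 14 * log (scale q j)) := by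
  have hscale := h.thousand_le_scale_real j
  rw [gap, expAmp, scale_succ, div_div, Nat.cast_pow,
    show 2 * (((scale q j : ℝ) ^ 2) ^ 7) * 2 = 4 * (scale q j : ℝ) ^ 14 by ring,
    log_div (exp_pos _).ne' (by positivity), log_exp, log_mul (by norm_num) (by positivity),
    log_pow]
  push_cast; ring

lemma exists_neg_log_reflDefect_le (hb : 0 < b) : ∃ C : ℝ, ∀ n : ℤ, n ≠ 0 →
    -log (reflDefect h.potential n) ≤ b * |(n : ℝ)| + (C + 28 * log |(n : ℝ)|) := by
  refine ⟨log 4 + 14 * log q + |log (gap q (expAmp b q K) 0 / 2)|, fun n hn => ?_⟩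
  obtain ⟨i, hi, hlevel⟩ := h.exists_half_gap_le_reflDefect hn
  have hlog := log_le_log (half_pos (h.gap_pos i)) hi
  have hn' : (1 : ℝ) ≤ |(n : ℝ)| := by exact_mod_cast Int.one_le_abs hn
  have hlogn := log_nonneg hn'
  have hlog4 : 0 ≤ log 4 := log_nonneg (by norm_num)
  have hq : (1 : ℝ) ≤ q := by exact_mod_cast h.base_ge.trans' (by norm_num)
  have hlogq := log_nonneg hq
  rcases i with _ | j
  · linarith [neg_abs_le (log (gap q (expAmp b q K) 0 / 2)), mul_nonneg hb.le (abs_nonneg (n : ℝ))]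
  · have hj : 2 * (pivot q j : ℝ) + 1 ≤ |(n : ℝ)| := by exact_mod_cast hlevel j rfl
    rw [h.log_half_gap_succ] at hlog
    linarith [h.log_scale_le hj, mul_le_mul_of_nonneg_left hj hb.le,
      abs_nonneg (log (gap q (expAmp b q K) 0 / 2))]

include h in
lemma tendsto_two_mul_pivot_add_one :
    Tendsto (fun j : ℕ => (2 * pivot q j + 1 : ℤ)) atTop atTop :=
  tendsto_atTop_mono (fun j => by linarith [h.natCast_le_pivot j, pivot_nonneg q j])
    tendsto_natCast_atTop_atTop

lemma eventually_neg_log_reflDefect_div_le (hb : 0 < b) {ε : ℝ} (hε : 0 < ε) :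
    ∀ᶠ n : ℤ in cofinite, -log (reflDefect h.potential n) / |(n : ℝ)| ≤ b + ε := by
  obtain ⟨C, hC⟩ := h.exists_neg_log_reflDefect_le hb
  have hlim : Tendsto (fun x : ℝ => (C + 28 * log x) / x) atTop (nhds 0) := by
    have hconst : Tendsto (fun x : ℝ => C / x) atTop (nhds 0) :=
      tendsto_const_nhds.div_atTop tendsto_id
    have hlog : Tendsto (fun x : ℝ => log x / x) atTop (nhds 0) :=
      isLittleO_log_id_atTop.tendsto_div_nhds_zero
    simpa [add_div, mul_div_assoc] using hconst.add (hlog.const_mul 28)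
  filter_upwards [(hlim.comp tendsto_abs_intCast_cofinite).eventually (gt_mem_nhds hε),
    eventually_cofinite_ne 0] with n hsmall hn
  have hn' : 0 < |(n : ℝ)| := by positivity
  rw [Function.comp_apply, div_lt_iff₀ hn'] at hsmall
  rw [div_le_iff₀ hn']
  linarith [hC n hn]

lemma frequently_le_neg_log_reflDefect_div {ε : ℝ} (hε : 0 < ε) :
    ∃ᶠ n : ℤ in cofinite, b - ε ≤ -log (reflDefect h.potential n) / |(n : ℝ)| := by
  refine (h.tendsto_two_mul_pivot_add_one.mono_right atTop_le_cofinite).frequently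
    (Eventually.frequently ?_)
  filter_upwards [(tendsto_intCast_atTop_atTop.comp
    h.tendsto_two_mul_pivot_add_one).eventually_ge_atTop (log 4 / ε)] with j hj
  have hpivot := pivot_nonneg q j
  have hn : (0 : ℝ) < (2 * pivot q j + 1 : ℤ) := by exact_mod_cast (by omega)
  have hlog := log_le_log (h.reflDefect_pos (n := 2 * pivot q j + 1) (by omega))
    (h.reflDefect_two_mul_pivot_add_one_le j)
  rw [expAmp, log_mul (by norm_num) (exp_pos _).ne', log_exp] at hlog
  rw [Function.comp_apply, div_le_iff₀ hε] at hj
  rw [abs_of_pos hn, le_div_iff₀ hn]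
  push_cast at hj ⊢
  linarith

lemma deltaPot_potential (hb : 0 < b) : deltaPot h.potential = b :=
  limsup_eq_of_eventually_le_of_frequently_le
    (fun _ hε => h.eventually_neg_log_reflDefect_div_le hb hε)
    fun _ hε => h.frequently_le_neg_log_reflDefect_div hε

end ExpAmp

end AdmissibleScales

/-! ### Positive Lyapunov exponent and localization in boxes -/

lemma abs_apply_le_matNorm (M : Matrix (Fin 2) (Fin 2) ℝ) (i j : Fin 2) : |M i j| ≤ matNorm M :=
  le_ciSup (f := fun p : Fin 2 × Fin 2 => |M p.1 p.2|) (Set.finite_range _).bddAbove (i, j)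

section Lyapunov

variable {g : ℤ → ℝ} {E D : ℝ} (hD : ∀ n, |E - g n| + 1 ≤ D)

include hD

lemma abs_transfer_apply_le (k : ℤ) : ∀ (n : ℕ) (i j), |transfer g E n k i j| ≤ D ^ n
  | 0, i, j => by
    fin_cases i <;> fin_cases j <;> simp [transfer]
  | n + 1, i, j => by
    have ih := abs_transfer_apply_le k n
    have hD' := hD (k + n)
    have hpow : D ^ n ≤ D ^ (n + 1) :=
      pow_le_pow_right₀ (by linarith [abs_nonneg (E - g (k + n))]) n.le_succ
    have hpow_nonneg : 0 ≤ D ^ n := (abs_nonneg _).trans (ih 0 0)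
    fin_cases i
    · calc |transfer g E (n + 1) k 0 j|
          = |(E - g (k + n)) * transfer g E n k 0 j - transfer g E n k 1 j| := by
            simp [transfer, Matrix.mul_apply, Fin.sum_univ_two, sub_eq_add_neg]
        _ ≤ |E - g (k + n)| * |transfer g E n k 0 j| + |transfer g E n k 1 j| := by
            rw [← abs_mul]; exact abs_sub _ _
        _ ≤ |E - g (k + n)| * D ^ n + D ^ n := by gcongr <;> exact ih _ j
        _ ≤ D ^ (n + 1) := by rw [pow_succ']; nlinarith
    · simpa [transfer, Matrix.mul_apply, Fin.sum_univ_two] using (ih 0 j).trans hpow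

lemma log_matNorm_transfer_div_le {n : ℕ} (hn : 1 ≤ n) (k : ℤ) :
    log (matNorm (transfer g E n k)) / n ≤ log D := by
  have hn' : (0 : ℝ) < n := by exact_mod_cast hn
  have hlogD : 0 ≤ log D := log_nonneg (by linarith [hD 0, abs_nonneg (E - g 0)])
  have hle : matNorm (transfer g E n k) ≤ D ^ n :=
    ciSup_le fun p => abs_transfer_apply_le hD k n p.1 p.2
  have hnonneg : 0 ≤ matNorm (transfer g E n k) :=
    (abs_nonneg _).trans (abs_apply_le_matNorm _ 0 0)
  rw [div_le_iff₀ hn', mul_comm, ← log_pow]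
  rcases hnonneg.eq_or_lt with hzero | hpos
  · rw [← hzero, log_zero, log_pow]; positivity
  · exact log_le_log hpos hle

lemma le_lyapSup_of_exp_le_abs_dirichletDet {L : ℝ}
    (hdet : ∀ᶠ n : ℕ in atTop, ∃ k, exp (L * n) ≤ |dirichletDet g E k n|) :
    L ≤ LyapSup g E := by
  refine le_limsup_of_frequently_le (Eventually.frequently ?_)
    (isBoundedUnder_of_eventually_le (a := log D) ?_)
  · filter_upwards [hdet, eventually_ge_atTop 1] with n ⟨k, hk⟩ hn
    have hn' : (0 : ℝ) < n := by exact_mod_cast hn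
    refine le_ciSup_of_le ⟨log D, ?_⟩ k ?_
    · rintro _ ⟨k, rfl⟩
      exact log_matNorm_transfer_div_le hD hn k
    · rw [← transfer_apply_zero_zero] at hk
      have hle := hk.trans (abs_apply_le_matNorm _ 0 0)
      rw [le_div_iff₀ hn']
      exact (le_log_iff_exp_le ((exp_pos _).trans_le hle)).2 hle
  · filter_upwards [eventually_ge_atTop 1] with n hn
    exact ciSup_le fun k => log_matNorm_transfer_div_le hD hn k

end Lyapunov

/-- An eigenfunction, normalized to be bounded by `1`, of the Dirichlet restriction to the box
`|n| ≤ R`. -/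
structure IsBoxEigenfunction (g : ℤ → ℝ) (R : ℕ) (E : ℝ) (ψ : ℤ → ℝ) : Prop where
  support : ∀ n : ℤ, (R : ℤ) < |n| → ψ n = 0
  eqn : ∀ n : ℤ, |n| ≤ (R : ℤ) → schrodinger g ψ n = E * ψ n
  abs_le_one : ∀ n, |ψ n| ≤ 1

/-- By the Poisson formula, a large determinant on an interval around `x` makes `ψ x` small, as
long as each end point of the interval is either far from `x` or outside the box. -/
lemma IsBoxEigenfunction.abs_apply_le_exp {g ψ : ℤ → ℝ} {R : ℕ} {E D τ : ℝ}
    (hψ : IsBoxEigenfunction g R E ψ) (hD : ∀ n, |E - g n| + 1 ≤ D) (hτ : 1000 ≤ τ)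
    (hDτ : log D ≤ 1.01 * τ) {x : ℤ} {k m N : ℕ} (hN : 1 ≤ N)
    (hR : ∀ n ∈ box (x - k) (k + 1 + m), |n| ≤ R)
    (hdet : exp (0.97 * (k + 1 + m : ℕ) * τ) ≤ |dirichletDet g E (x - k) (k + 1 + m)|)
    (hright : R < |x + 1 + m| ∨ 1.01 * (k : ℝ) + 0.1 * N ≤ 0.97 * (k + 1 + m : ℕ))
    (hleft : R < |x - k - 1| ∨ 1.01 * (m : ℝ) + 0.1 * N ≤ 0.97 * (k + 1 + m : ℕ)) :
    |ψ x| ≤ exp (-(4 * N)) := by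
  have hN' : (1 : ℝ) ≤ N := by exact_mod_cast hN
  have hDpos : 0 < D := by linarith [hD 0, abs_nonneg (E - g 0)]
  have hpoisson := abs_mul_abs_dirichletDet_le k m hD fun n hn => hψ.eqn n (hR n hn)
  rw [sub_add_cancel] at hpoisson
  set p := |dirichletDet g E (x - k) (k + 1 + m)|
  have hend : ∀ (y : ℤ) (c : ℕ),
      (R < |y| ∨ 1.01 * (c : ℝ) + 0.1 * N ≤ 0.97 * (k + 1 + m : ℕ)) →
      |ψ y| * D ^ c ≤ exp (-(5 * N)) * p := by
    rintro y c (hy | hc)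
    · rw [hψ.support y hy, abs_zero, zero_mul]; positivity
    · calc |ψ y| * D ^ c ≤ 1 * exp (log D * c) := by
            rw [mul_comm (log D), exp_nat_mul, exp_log hDpos]
            gcongr
            exact hψ.abs_le_one y
        _ ≤ exp (-(5 * N) + 0.97 * (k + 1 + m : ℕ) * τ) := by
            rw [one_mul]
            refine exp_le_exp.2 ?_
            have hmul := mul_le_mul_of_nonneg_right hc (show 0 ≤ τ by linarith)
            have hDc := mul_le_mul_of_nonneg_right hDτ (Nat.cast_nonneg c)
            nlinarith
        _ ≤ exp (-(5 * N)) * p := by rw [exp_add]; gcongr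
  have hp : 0 < p := (exp_pos _).trans_le hdet
  have hle : |ψ x| ≤ 2 * exp (-(5 * N)) :=
    le_of_mul_le_mul_right (by linarith [hend _ k hright, hend _ m hleft]) hp
  refine hle.trans ?_
  rw [show -(4 * (N : ℝ)) = N + -(5 * N) by ring, exp_add]
  gcongr
  linarith [add_one_le_exp (N : ℝ)]

/-- A coupling constant `K` large enough, for the given `b` and `q`, for localization. The last
condition makes the growth rate of the transfer matrices nearly optimal with respect to their
norms. -/
structure LargeCoupling (b : ℝ) (q : ℕ) (K : ℝ) : Prop where
  admissible : AdmissibleScales q (expAmp b q K)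
  rate_pos : 0 < b
  coupling_ge : 16 ≤ K
  log_coupling_ge : 1 + 2 * (5 * b + 30) + 5 * sepRate b q ≤ 0.015 * log K
  log_norm_le : log (16 * (q : ℝ) ^ 7 * K + 3) ≤ 1.01 * log K

lemma exists_largeCoupling {b : ℝ} (hb : 0 < b) (L : ℝ) :
    ∃ q K, LargeCoupling b q K ∧ L ≤ 0.97 * log K := by
  obtain ⟨q, hq⟩ := exists_admissibleScales_expAmp hb
  have hlarge := tendsto_log_atTop.eventually_ge_atTop
  obtain ⟨K, hK, hsep, hL, hnorm⟩ := ((eventually_ge_atTop 16).and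
    ((hlarge ((1 + 2 * (5 * b + 30) + 5 * sepRate b q) / 0.015)).and
      ((hlarge (L / 0.97)).and (hlarge (log (17 * (q : ℝ) ^ 7) / 0.01))))).exists
  rw [div_le_iff₀ (by norm_num)] at hsep hL hnorm
  refine ⟨q, K, ⟨hq K hK, hb, hK, by linarith, ?_⟩, by linarith⟩
  have hq_ge : (1 : ℝ) ≤ (q : ℝ) ^ 7 :=
    one_le_pow₀ (by exact_mod_cast (hq K hK).base_ge.trans' (by norm_num))
  calc log (16 * (q : ℝ) ^ 7 * K + 3) ≤ log (17 * (q : ℝ) ^ 7 * K) :=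
        log_le_log (by positivity) (by nlinarith)
    _ = log (17 * (q : ℝ) ^ 7) + log K := log_mul (by positivity) (by positivity)
    _ ≤ 1.01 * log K := by linarith

/-- Around `x` with `|x| ≤ R` there is an interval of length at least `N`, inside `|n| ≤ R` and
off `|n| ≤ N`, reaching distance `N` from `x` on each side unless it hits the end of the box. -/
lemma exists_interval_off_core {x : ℤ} {R N : ℕ} (hN : 1 ≤ N) (hx : 2 * N ≤ |x|) (hxR : |x| ≤ R) :
    ∃ k m : ℕ, k < N ∧ m < N ∧ N ≤ k + 1 + m ∧
      (R < |x + 1 + m| ∨ m + 1 = N) ∧ (R < |x - k - 1| ∨ k + 1 = N) ∧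
      (∀ n ∈ box (x - k) (k + 1 + m), |n| ≤ R) ∧ (N < x - k ∨ x + m < -N) := by
  rcases abs_cases x with ⟨habs, -⟩ | ⟨habs, -⟩
  · refine ⟨N - 1, (min ((N : ℤ) - 1) (R - x)).toNat, by omega, by omega, by omega, ?_,
      .inr (by omega), fun n hn => ?_, by omega⟩
    · rw [lt_abs]; omega
    · simp only [box, Finset.mem_Ico] at hn
      exact abs_le.2 (by omega)
  · refine ⟨(min ((N : ℤ) - 1) (R + x)).toNat, N - 1, by omega, by omega, by omega,
      .inr (by omega), ?_, fun n hn => ?_, by omega⟩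
    · rw [lt_abs]; omega
    · simp only [box, Finset.mem_Ico] at hn
      exact abs_le.2 (by omega)

namespace LargeCoupling

variable {b K : ℝ} {q : ℕ} (h : LargeCoupling b q K)

/-- The potential of the example. -/
abbrev potential : ℤ → ℝ := h.admissible.potential

include h in
lemma sepRate_nonneg : 0 ≤ sepRate b q := by
  have : 0 ≤ log q := log_natCast_nonneg q
  have := h.rate_pos
  unfold sepRate; positivity

include h in
lemma thousand_le_log_coupling : 1000 ≤ log K := by
  have hq : 0 ≤ log q := log_natCast_nonneg q
  have hK := h.log_coupling_ge
  have hb := h.rate_pos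
  rw [sepRate] at hK
  linarith

lemma abs_sub_potential_add_one_le {E : ℝ} (hE : |E| ≤ 2 * expAmp b q K 0 + 2) (n : ℤ) :
    |E - h.potential n| + 1 ≤ 16 * (q : ℝ) ^ 7 * K + 3 := by
  have hg := h.admissible.abs_potential_le n
  rw [expAmp] at hE hg
  linarith [abs_sub E (h.potential n)]

lemma exp_le_abs_dirichletDet_or {N : ℕ} (hN : 1000 ≤ N) {a a' : ℤ} {l l' : ℕ} (hl : N ≤ l)
    (hl' : N ≤ l') (ha : -(5 * N : ℤ) ≤ a) (haa' : a + l ≤ a') (ha' : a' + l' ≤ 5 * N + 1)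
    (E : ℝ) :
    exp (0.97 * l * log K) ≤ |dirichletDet h.potential E a l| ∨
      exp (0.97 * l' * log K) ≤ |dirichletDet h.potential E a' l'| := by
  by_contra! hsmall
  have hnear : ∀ (a : ℤ) (l : ℕ), N ≤ l →
      |dirichletDet h.potential E a l| < exp (0.97 * l * log K) →
      ∃ F, IsDirichletEigenvalue h.potential (box a l) F ∧
        |F - E| < exp (-(sepRate b q * N)) := by
    intro a l hl hlt
    by_contra! hfar
    refine hlt.not_ge (h.admissible.exp_le_abs_dirichletDet h.rate_pos
      (by linarith [h.coupling_ge]) h.sepRate_nonneg h.log_coupling_ge (by omega)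
      fun F hF => le_trans (exp_le_exp.2 ?_) (hfar F hF))
    have hl' : (N : ℝ) ≤ l := by exact_mod_cast hl
    linarith [mul_le_mul_of_nonneg_left hl' h.sepRate_nonneg]
  obtain ⟨F, hF, hFE⟩ := hnear a l hl hsmall.1
  obtain ⟨F', hF', hFE'⟩ := hnear a' l' hl' hsmall.2
  rw [abs_sub_comm] at hFE'
  linarith [h.admissible.exp_le_abs_sub_of_disjoint_boxes h.rate_pos (by omega) ha haa' ha' hF hF',
    abs_sub_le F E F']

lemma le_lyapSup {L : ℝ} (hL : L ≤ 0.97 * log K) (E : ℝ) : L ≤ LyapSup h.potential E := by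
  refine le_lyapSup_of_exp_le_abs_dirichletDet (D := |E| + 2 * expAmp b q K 0 + 1) (fun n => ?_) ?_
  · linarith [abs_sub E (h.potential n), h.admissible.abs_potential_le n]
  · filter_upwards [eventually_ge_atTop 1000] with n hn
    have hexp : exp (L * n) ≤ exp (0.97 * n * log K) :=
      exp_le_exp.2 (by linarith [mul_le_mul_of_nonneg_right hL (Nat.cast_nonneg n)])
    rcases h.exp_le_abs_dirichletDet_or hn (a := 0) (a' := n) le_rfl le_rfl (by omega) (by omega)
      (by omega) E with hdet | hdet
    · exact ⟨0, hexp.trans hdet⟩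
    · exact ⟨n, hexp.trans hdet⟩

section BoxEigenfunction

variable {R N : ℕ} {E : ℝ} {ψ : ℤ → ℝ} (hN : 1000 ≤ N) (hE : |E| ≤ 2 * expAmp b q K 0 + 2)
  (hψ : IsBoxEigenfunction h.potential R E ψ)

include hN hE hψ

lemma abs_apply_le_exp_of_core (hNR : 2 * N ≤ R)
    (hdet : exp (0.97 * (2 * N + 1 : ℕ) * log K) ≤ |dirichletDet h.potential E (-N) (2 * N + 1)|)
    {m : ℤ} (hm : 2 * |m| ≤ N) : |ψ m| ≤ exp (-(4 * N)) := by
  obtain ⟨k, hk⟩ := Int.eq_ofNat_of_zero_le (show 0 ≤ m + N by have := neg_abs_le m; omega)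
  obtain ⟨c, hc⟩ := Int.eq_ofNat_of_zero_le (show 0 ≤ N - m by have := le_abs_self m; omega)
  have hlen : k + 1 + c = 2 * N + 1 := by omega
  have hshort : ∀ j : ℕ, 2 * j ≤ 3 * N →
      1.01 * (j : ℝ) + 0.1 * N ≤ 0.97 * (k + 1 + c : ℕ) := fun j hj => by
    have hj' : 2 * (j : ℝ) ≤ 3 * N := by exact_mod_cast hj
    have hN' : (1000 : ℝ) ≤ N := by exact_mod_cast hN
    rw [hlen]; push_cast; linarith
  refine hψ.abs_apply_le_exp (h.abs_sub_potential_add_one_le hE) h.thousand_le_log_coupling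
    h.log_norm_le (k := k) (m := c) (by omega) (fun n hn => ?_) ?_
    (.inr (hshort k ?_)) (.inr (hshort c ?_))
  · simp only [box, Finset.mem_Ico] at hn
    exact abs_le.2 (by omega)
  · rwa [hlen, show m - k = -N by omega]
  · have := le_abs_self m; omega
  · have := neg_abs_le m; omega

lemma abs_apply_le_exp_of_not_core
    (hdet : |dirichletDet h.potential E (-N) (2 * N + 1)| < exp (0.97 * (2 * N + 1 : ℕ) * log K))
    {x : ℤ} (hx : 2 * N ≤ |x|) (hx' : |x| ≤ 4 * N) (hxR : |x| ≤ R) :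
    |ψ x| ≤ exp (-(4 * N)) := by
  obtain ⟨k, m, hk, hm, hkm, hright, hleft, hR, hoff⟩ :=
    exists_interval_off_core (by omega) hx hxR
  have hbounds := abs_le.1 hx'
  have hdet' : exp (0.97 * (k + 1 + m : ℕ) * log K) ≤
      |dirichletDet h.potential E (x - k) (k + 1 + m)| := by
    rcases hoff with hoff | hoff
    · exact (h.exp_le_abs_dirichletDet_or hN (a := -N) (l := 2 * N + 1) (by omega) hkm (by omega)
        (by push_cast; omega) (by push_cast; omega) E).resolve_left hdet.not_ge
    · exact (h.exp_le_abs_dirichletDet_or hN (a' := -N) (l' := 2 * N + 1) hkm (by omega)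
        (by omega) (by push_cast; omega) (by push_cast; omega) E).resolve_right hdet.not_ge
  have hlong : ∀ i j : ℕ, i < N → j + 1 = N →
      1.01 * (i : ℝ) + 0.1 * N ≤ 0.97 * (i + 1 + j) := fun i j hi hj => by
    have hi' : (i : ℝ) ≤ N := by exact_mod_cast hi.le
    have hj' : (j : ℝ) + 1 = N := by exact_mod_cast hj
    linarith
  refine hψ.abs_apply_le_exp (h.abs_sub_potential_add_one_le hE) h.thousand_le_log_coupling
    h.log_norm_le (by omega) hR hdet' (hright.imp_right fun hmN => ?_)
    (hleft.imp_right fun hkN => ?_)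
  · push_cast; exact hlong k m hk hmN
  · push_cast; linarith [hlong m k hm hkN]

lemma abs_apply_le_exp_or :
    (∀ m : ℤ, 2 * |m| ≤ N → |ψ m| ≤ exp (-(N : ℝ))) ∨
      ∀ x : ℤ, 2 * N ≤ |x| → |x| ≤ 4 * N → |ψ x| ≤ exp (-|(x : ℝ)|) := by
  by_cases hcore : 2 * N ≤ R ∧
      exp (0.97 * (2 * N + 1 : ℕ) * log K) ≤ |dirichletDet h.potential E (-N) (2 * N + 1)|
  · refine .inl fun m hm => ?_
    refine (h.abs_apply_le_exp_of_core hN hE hψ hcore.1 hcore.2 hm).trans (exp_le_exp.2 ?_)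
    linarith [(Nat.cast_nonneg N : (0 : ℝ) ≤ N)]
  · refine .inr fun x hx hx' => ?_
    rcases lt_or_ge (R : ℤ) |x| with hxR | hxR
    · rw [hψ.support x hxR, abs_zero]; positivity
    · have hdet := not_le.1 fun hle => hcore ⟨by omega, hle⟩
      refine (h.abs_apply_le_exp_of_not_core hN hE hψ hdet hx hx' hxR).trans (exp_le_exp.2 ?_)
      have : |(x : ℝ)| ≤ 4 * N := by exact_mod_cast hx'
      linarith

end BoxEigenfunction

end LargeCoupling

/-! ### Exponentially decaying eigenfunctions -/

lemma summable_exp_neg_mul_abs {c : ℝ} (hc : 0 < c) :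
    Summable fun n : ℤ => exp (-(c * |(n : ℝ)|)) := by
  have hnat : Summable fun n : ℕ => exp (-(c * n)) :=
    (Real.summable_exp_nat_mul_iff.2 (neg_lt_zero.2 hc)).congr fun n => by
      rw [mul_neg, mul_comm]
  exact .of_nat_of_neg (by simpa using hnat) (by simpa using hnat)

lemma summable_exp_neg_abs : Summable fun n : ℤ => exp (-|(n : ℝ)|) := by
  simpa using summable_exp_neg_mul_abs one_pos

lemma isBoxEigenfunction_dirichletEigenvector (g : ℤ → ℝ) (R : ℕ) (i : Finset.Icc (-(R : ℤ)) R) :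
    IsBoxEigenfunction g R (dirichletEigenvalue g _ i) (dirichletEigenvector g _ i) where
  support n hn := dirichletEigenvector_of_notMem g i fun hmem =>
    hn.not_ge (abs_le.2 (Finset.mem_Icc.1 hmem))
  eqn n hn := schrodinger_dirichletEigenvector g i (Finset.mem_Icc.2 (abs_le.1 hn))
  abs_le_one n := by
    by_cases hn : n ∈ Finset.Icc (-(R : ℤ)) R
    · have hle :=
        Finset.single_le_sum (fun n _ => mul_self_nonneg (dirichletEigenvector g _ i n)) hn
      rw [sum_dirichletEigenvector_mul_dirichletEigenvector, if_pos rfl, ← sq] at hle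
      exact (sq_le_one_iff_abs_le_one _).1 hle
    · simp [dirichletEigenvector_of_notMem g i hn]

/-- At every scale `N > N₀`, a box eigenfunction with energy in `[-M, M]` is either small in the
core `|m| ≤ N / 2`, or exponentially small at distance comparable to `N` from the origin. -/
def HasCoreDichotomy (g : ℤ → ℝ) (M : ℝ) (N₀ : ℕ) : Prop :=
  ∀ R N : ℕ, N₀ < N → ∀ (E : ℝ) (ψ : ℤ → ℝ), |E| ≤ M → IsBoxEigenfunction g R E ψ →
    (∀ m : ℤ, 2 * |m| ≤ N → |ψ m| ≤ exp (-(N : ℝ))) ∨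
      ∀ x : ℤ, 2 * N ≤ |x| → |x| ≤ 4 * N → |ψ x| ≤ exp (-|(x : ℝ)|)

lemma LargeCoupling.hasCoreDichotomy {b K : ℝ} {q : ℕ} (h : LargeCoupling b q K) :
    HasCoreDichotomy h.potential (2 * expAmp b q K 0 + 2) 1000 :=
  fun _ _ hN _ _ hE hψ => h.abs_apply_le_exp_or hN.le hE hψ

/-- Splitting at `|n| = 2 N`: the tail carries at most half of the mass of `φ`. -/
lemma exp_neg_div_two_le_sum_exp_mul_sq {φ : ℤ → ℝ} {s : Finset ℤ} {N : ℕ}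
    (hN : ∑' n : ℤ, exp (-|(n : ℝ)|) ≤ N)
    (hφ : ∀ x : ℤ, 2 * N ≤ |x| → |φ x| ≤ exp (-|(x : ℝ)|)) (hs : ∑ n ∈ s, φ n ^ 2 = 1) :
    exp (-(N : ℝ)) / 2 ≤ ∑ n ∈ s, exp (-(|(n : ℝ)| / 2)) * φ n ^ 2 := by
  have htail : ∑ n ∈ s with 2 * (N : ℤ) ≤ |n|, φ n ^ 2 ≤ 1 / 2 :=
    calc ∑ n ∈ s with 2 * (N : ℤ) ≤ |n|, φ n ^ 2
        ≤ ∑ n ∈ s with 2 * (N : ℤ) ≤ |n|, exp (-(2 * N)) * exp (-|(n : ℝ)|) := by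
          refine Finset.sum_le_sum fun n hn => ?_
          have hn := (Finset.mem_filter.1 hn).2
          have hn' : (2 * N : ℝ) ≤ |(n : ℝ)| := by exact_mod_cast hn
          rw [← sq_abs, sq]
          refine mul_le_mul ((hφ n hn).trans ?_) (hφ n hn) (abs_nonneg _) (exp_pos _).le
          gcongr
      _ ≤ exp (-(2 * N)) * ∑' n : ℤ, exp (-|(n : ℝ)|) := by
          rw [← Finset.mul_sum]
          gcongr
          exact summable_exp_neg_abs.sum_le_tsum _ fun n _ => (exp_pos _).le
      _ ≤ 1 / 2 := by
          rw [exp_neg, inv_mul_eq_div, div_le_div_iff₀ (exp_pos _) two_pos]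
          linarith [add_one_le_exp (2 * N : ℝ)]
  have hcore : 1 / 2 ≤ ∑ n ∈ s with ¬ 2 * (N : ℤ) ≤ |n|, φ n ^ 2 := by
    linarith [Finset.sum_filter_add_sum_filter_not s (fun n : ℤ => 2 * (N : ℤ) ≤ |n|) (φ · ^ 2)]
  calc exp (-(N : ℝ)) / 2 ≤ exp (-(N : ℝ)) * ∑ n ∈ s with ¬ 2 * (N : ℤ) ≤ |n|, φ n ^ 2 := by
        rw [div_eq_mul_one_div]; gcongr
    _ ≤ ∑ n ∈ s with ¬ 2 * (N : ℤ) ≤ |n|, exp (-(|(n : ℝ)| / 2)) * φ n ^ 2 := by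
        rw [Finset.mul_sum]
        refine Finset.sum_le_sum fun n hn => ?_
        have hn' : |(n : ℝ)| ≤ 2 * N := by
          exact_mod_cast (not_le.1 (Finset.mem_filter.1 hn).2).le
        gcongr
        linarith
    _ ≤ _ := Finset.sum_le_sum_of_subset_of_nonneg (Finset.filter_subset _ _) fun n _ _ => by
        positivity

lemma exists_nat_exp_neg_lt_le {a : ℝ} (ha : 0 < a) (ha1 : a ≤ 1) :
    ∃ T : ℕ, exp (-(T : ℝ)) < a ∧ a ≤ exp (1 - T) := by
  refine ⟨⌊-log a⌋₊ + 1, (lt_log_iff_exp_lt ha).1 ?_, (log_le_iff_le_exp ha).1 ?_⟩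
  · push_cast
    linarith [Nat.lt_floor_add_one (-log a)]
  · push_cast
    linarith [Nat.floor_le (neg_nonneg.2 (log_nonpos ha.le ha1))]

namespace HasCoreDichotomy

variable {g : ℤ → ℝ} {M : ℝ} {N₀ : ℕ}

section BoxEigenfunction

variable {R N : ℕ} {E : ℝ} {ψ : ℤ → ℝ} {m : ℤ}

/-- Once `ψ m` is visible at scale `N`, the first alternative fails at every larger scale. -/
lemma abs_apply_le_exp_of_far (h : HasCoreDichotomy g M N₀) (hE : |E| ≤ M)
    (hψ : IsBoxEigenfunction g R E ψ) (hN : N₀ < N) (hm : 2 * |m| ≤ N)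
    (hlt : exp (-(N : ℝ)) < |ψ m|) {x : ℤ} (hx : 2 * N ≤ |x|) : |ψ x| ≤ exp (-|(x : ℝ)|) := by
  obtain ⟨k, hk⟩ : ∃ k : ℕ, (k : ℤ) = |x| / 2 := ⟨(|x| / 2).toNat, by omega⟩
  refine (h R k (by omega) E ψ hE hψ).resolve_left (fun hsmall => ?_) x (by omega) (by omega)
  have hNk : (N : ℝ) ≤ k := by exact_mod_cast (by omega : N ≤ k)
  exact (hlt.trans_le (hsmall m (by omega))).not_ge (exp_le_exp.2 (neg_le_neg hNk))

lemma abs_apply_le_exp_mul_exp (h : HasCoreDichotomy g M N₀) (hE : |E| ≤ M)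
    (hψ : IsBoxEigenfunction g R E ψ) (hN : N₀ < N) (hm : 2 * |m| ≤ N)
    (hlt : exp (-(N : ℝ)) < |ψ m|) (x : ℤ) : |ψ x| ≤ exp (2 * N) * exp (-|(x : ℝ)|) := by
  rcases le_or_gt (2 * (N : ℤ)) |x| with hx | hx
  · exact (h.abs_apply_le_exp_of_far hE hψ hN hm hlt hx).trans
      (le_mul_of_one_le_left (exp_pos _).le (one_le_exp (by positivity)))
  · have hx' : |(x : ℝ)| ≤ 2 * N := by exact_mod_cast hx.le
    rw [← exp_add]
    exact (hψ.abs_le_one x).trans (one_le_exp (by linarith))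

end BoxEigenfunction

/-- A normalized box eigenfunction that does not vanish at `m` has comparable mass near the
origin, so that `|ψ m|` is controlled by a weighted square sum. -/
lemma exists_abs_apply_le_mul_sum (h : HasCoreDichotomy g M N₀) (m : ℤ) :
    ∃ C : ℝ, 0 < C ∧ ∀ (R : ℕ) (E : ℝ) (ψ : ℤ → ℝ), |E| ≤ M → IsBoxEigenfunction g R E ψ →
      ∀ s : Finset ℤ, ∑ n ∈ s, ψ n ^ 2 = 1 →
        |ψ m| ≤ C * ∑ n ∈ s, exp (-(|(n : ℝ)| / 2)) * ψ n ^ 2 := by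
  obtain ⟨A, hA⟩ := exists_nat_ge (∑' n : ℤ, exp (-|(n : ℝ)|))
  obtain ⟨P, hP, hmP, hAP⟩ : ∃ P : ℕ, N₀ < P ∧ 2 * |m| ≤ P ∧ A ≤ P :=
    ⟨N₀ + 1 + 2 * m.natAbs + A, by omega, by push_cast [Int.natCast_natAbs]; omega, by omega⟩
  refine ⟨2 * exp (P + 1), by positivity, fun R E ψ hE hψ s hs => ?_⟩
  rcases eq_or_ne (ψ m) 0 with hzero | hne
  · rw [hzero, abs_zero]
    positivity
  obtain ⟨T, hT, hT'⟩ := exists_nat_exp_neg_lt_le (abs_pos.2 hne) (hψ.abs_le_one m)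
  have hlt : exp (-((P + T : ℕ) : ℝ)) < |ψ m| :=
    (exp_le_exp.2 (neg_le_neg (by exact_mod_cast Nat.le_add_left T P))).trans_lt hT
  have hAN : (A : ℝ) ≤ (P + T : ℕ) := by exact_mod_cast (by omega : A ≤ P + T)
  have hmass := exp_neg_div_two_le_sum_exp_mul_sq (hA.trans hAN)
    (fun x => h.abs_apply_le_exp_of_far hE hψ (m := m) (by omega) (by omega) hlt) hs
  calc |ψ m| ≤ exp (1 - T) := hT'
    _ = 2 * exp (P + 1) * (exp (-((P + T : ℕ) : ℝ)) / 2) := by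
        rw [show (1 - T : ℝ) = P + 1 + -((P + T : ℕ) : ℝ) by push_cast; ring, exp_add (P + 1 : ℝ)]
        ring
    _ ≤ _ := by gcongr

lemma exists_sum_abs_dirichletEigenvector_le (h : HasCoreDichotomy g (M + 2) N₀)
    (hg : ∀ n, |g n| ≤ M) (m : ℤ) :
    ∃ C : ℝ, 0 < C ∧
      ∀ R : ℕ, ∑ i, |dirichletEigenvector g (Finset.Icc (-(R : ℤ)) R) i m| ≤ C := by
  obtain ⟨C, hC, hle⟩ := h.exists_abs_apply_le_mul_sum m
  have hs : Summable fun n : ℤ => exp (-(|(n : ℝ)| / 2)) := by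
    simpa [inv_mul_eq_div] using summable_exp_neg_mul_abs (c := 2⁻¹) (by norm_num)
  refine ⟨C * ∑' n : ℤ, exp (-(|(n : ℝ)| / 2)),
    mul_pos hC (hs.tsum_pos (fun n => (exp_pos _).le) 0 (exp_pos _)), fun R => ?_⟩
  set S := Finset.Icc (-(R : ℤ)) R
  calc ∑ i, |dirichletEigenvector g S i m|
      ≤ ∑ i, C * ∑ n ∈ S, exp (-(|(n : ℝ)| / 2)) * dirichletEigenvector g S i n ^ 2 :=
        Finset.sum_le_sum fun i _ =>
          hle R _ _ ((isDirichletEigenvalue_dirichletEigenvalue g i).abs_le hg)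
            (isBoxEigenfunction_dirichletEigenvector g R i) S
            (by simpa [sq] using sum_dirichletEigenvector_mul_dirichletEigenvector g i i)
    _ = C * ∑ n ∈ S, exp (-(|(n : ℝ)| / 2)) := by
        rw [← Finset.mul_sum, Finset.sum_comm]
        congr 1
        refine Finset.sum_congr rfl fun n hn => ?_
        have hcomplete := sum_dirichletEigenvector_apply_mul_apply g hn hn
        rw [if_pos rfl] at hcomplete
        simp_rw [← Finset.mul_sum, sq, hcomplete, mul_one]
    _ ≤ _ := by
        gcongr
        exact hs.sum_le_tsum _ fun n _ => (exp_pos _).le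

end HasCoreDichotomy

/-- Otherwise `|c i * a i| ≤ θ |a i| + t c i ^ 2 + θ |a i| / t` for every `i` and a suitable
`t`. -/
lemma exists_pos_forall_exists_le_abs {C F p : ℝ} (hC : 0 < C) (hF : 0 ≤ F) (hp : 0 < p) :
    ∃ θ : ℝ, 0 < θ ∧ ∀ {ι : Type} [Fintype ι] (a c : ι → ℝ), ∑ i, |a i| ≤ C →
      ∑ i, c i ^ 2 ≤ F → p ≤ |∑ i, c i * a i| → ∃ i, θ ≤ |a i| ∧ θ ≤ |c i| := by
  set t := p / (4 * (F + 1))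
  have ht : 0 < t := by positivity
  have htF : t * F ≤ p / 4 := by
    have : t * (F + 1) = p / 4 := by simp only [t]; field_simp
    linarith
  set θ := p / (4 * (C * (1 + 1 / t)))
  have hθ : 0 < θ := by positivity
  have hθC : θ * (1 + 1 / t) * C = p / 4 := by simp only [θ]; field_simp
  refine ⟨θ, hθ, fun {ι} _ a c ha hc hac => ?_⟩
  by_contra! hsmall
  have hterm : ∀ i, |c i * a i| ≤ θ * (1 + 1 / t) * |a i| + t * c i ^ 2 := fun i => by
    have hsplit : θ * (1 + 1 / t) * |a i| = θ * |a i| + θ * |a i| / t := by ring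
    rw [hsplit, abs_mul, ← sq_abs (c i)]
    rcases le_or_gt θ |a i| with hi | hi
    · have : 0 ≤ θ * |a i| / t + t * |c i| ^ 2 := by positivity
      linarith [mul_le_mul_of_nonneg_right (hsmall i hi).le (abs_nonneg (a i))]
    · have hsq : 0 ≤ ((t * |c i| - |a i| / 2) ^ 2 + 3 / 4 * |a i| ^ 2) / t := by positivity
      have hamgm : ((t * |c i| - |a i| / 2) ^ 2 + 3 / 4 * |a i| ^ 2) / t =
          t * |c i| ^ 2 + |a i| * |a i| / t - |c i| * |a i| := by
        field_simp; ring
      have : |a i| * |a i| / t ≤ θ * |a i| / t := by gcongr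
      have : 0 ≤ θ * |a i| := by positivity
      linarith
  have hsum : |∑ i, c i * a i| ≤ θ * (1 + 1 / t) * C + t * F :=
    calc |∑ i, c i * a i| ≤ ∑ i, (θ * (1 + 1 / t) * |a i| + t * c i ^ 2) :=
          (Finset.abs_sum_le_sum_abs _ _).trans (Finset.sum_le_sum fun i _ => hterm i)
      _ = θ * (1 + 1 / t) * ∑ i, |a i| + t * ∑ i, c i ^ 2 := by
          rw [Finset.sum_add_distrib, Finset.mul_sum, Finset.mul_sum]
      _ ≤ _ := by gcongr
  linarith

/-- An eigenfunction of `H_g` decaying like `exp (-|x|)`. -/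
structure IsLocalizedEigenfunction (g : ℤ → ℝ) (E : ℝ) (φ : ℤ → ℝ) : Prop where
  eqn : IsEigenfunction g E φ
  decay : ∃ A : ℝ, ∀ x : ℤ, |φ x| ≤ A * exp (-|(x : ℝ)|)

lemma exists_tendsto_of_abs_le {ι : Type*} (U : Ultrafilter ι) {x : ι → ℝ} {c : ℝ}
    (hx : ∀ᶠ i in U, |x i| ≤ c) : ∃ a, Tendsto x U (nhds a) := by
  obtain ⟨a, -, ha⟩ := (isCompact_Icc (a := -c) (b := c)).ultrafilter_le_nhds (U.map x)
    (le_principal_iff.2 (hx.mono fun i hi => abs_le.1 hi))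
  exact ⟨a, ha⟩

lemma isEigenfunction_of_tendsto {g : ℤ → ℝ} {l : Filter ℕ} [l.NeBot] (hl : l ≤ atTop)
    {E : ℕ → ℝ} {ψ : ℕ → ℤ → ℝ} {E' : ℝ} {φ : ℤ → ℝ}
    (hψ : ∀ᶠ R in l, IsBoxEigenfunction g R (E R) (ψ R)) (hE : Tendsto E l (nhds E'))
    (hφ : ∀ x, Tendsto (ψ · x) l (nhds (φ x))) : IsEigenfunction g E' φ := by
  intro n
  refine tendsto_nhds_unique_of_eventuallyEq
    (((hφ (n + 1)).add (hφ (n - 1))).add ((hφ n).const_mul (g n))) (hE.mul (hφ n)) ?_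
  filter_upwards [hψ, hl (eventually_ge_atTop n.natAbs)] with R hR hn
  exact hR.eqn n (by rw [← Int.natCast_natAbs]; exact_mod_cast hn)

namespace HasCoreDichotomy

variable {g f : ℤ → ℝ} {M : ℝ} {N₀ : ℕ} {m : ℤ}

lemma exists_boxEigenfunction_correlated (h : HasCoreDichotomy g (M + 2) N₀)
    (hg : ∀ n, |g n| ≤ M) (hf : Summable fun n => f n ^ 2) (hm : f m ≠ 0) :
    ∃ θ : ℝ, 0 < θ ∧ ∀ R : ℕ, |m| ≤ R → ∃ (E : ℝ) (ψ : ℤ → ℝ), |E| ≤ M + 2 ∧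
      IsBoxEigenfunction g R E ψ ∧ θ ≤ |ψ m| ∧ θ ≤ |∑' n, f n * ψ n| := by
  obtain ⟨C, hC, hsum⟩ := h.exists_sum_abs_dirichletEigenvector_le hg m
  obtain ⟨θ, hθ, hθ'⟩ := exists_pos_forall_exists_le_abs hC
    (tsum_nonneg fun n => sq_nonneg (f n)) (abs_pos.2 hm)
  refine ⟨θ, hθ, fun R hR => ?_⟩
  have hmem : m ∈ Finset.Icc (-(R : ℤ)) R := Finset.mem_Icc.2 (abs_le.1 hR)
  obtain ⟨i, hi, hi'⟩ := hθ' (fun i => dirichletEigenvector g _ i m) (dirichletCoeff g _ f)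
    (hsum R)
    (sum_sq_eq_sum_dirichletCoeff_sq.symm.trans_le (hf.sum_le_tsum _ fun n _ => sq_nonneg _))
    (by rw [sum_dirichletCoeff_mul_dirichletEigenvector hmem])
  refine ⟨_, _, (isDirichletEigenvalue_dirichletEigenvalue g i).abs_le hg,
    isBoxEigenfunction_dirichletEigenvector g R i, hi, ?_⟩
  rw [tsum_eq_sum fun n hn => by rw [dirichletEigenvector_of_notMem g i hn, mul_zero]]
  simpa only [dirichletCoeff, mul_comm] using hi'

/-- The eigenfunction is a limit, as `R → ∞`, of box eigenfunctions correlated with `f`: the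
dichotomy makes their decay uniform in `R`, so that neither their mass nor the correlation is lost
in the limit. -/
lemma exists_isLocalizedEigenfunction_tsum_ne_zero (h : HasCoreDichotomy g (M + 2) N₀)
    (hg : ∀ n, |g n| ≤ M) (hf : Summable fun n => f n ^ 2) (hm : f m ≠ 0) :
    ∃ (E : ℝ) (φ : ℤ → ℝ), IsLocalizedEigenfunction g E φ ∧ ∑' n, f n * φ n ≠ 0 := by
  obtain ⟨θ, hθ, hbox⟩ := h.exists_boxEigenfunction_correlated hg hf hm
  choose! E ψ hbox using hbox
  obtain ⟨T, hT⟩ := exists_nat_gt (-log θ)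
  obtain ⟨N, hN, hmN, hTN⟩ : ∃ N : ℕ, N₀ < N ∧ 2 * |m| ≤ N ∧ T ≤ N :=
    ⟨N₀ + 1 + 2 * m.natAbs + T, by omega, by push_cast [Int.natCast_natAbs]; omega, by omega⟩
  have hlt : exp (-(N : ℝ)) < θ := by
    rw [← lt_log_iff_exp_lt hθ]
    linarith [(by exact_mod_cast hTN : (T : ℝ) ≤ N)]
  let U : Ultrafilter ℕ := hyperfilter ℕ
  have hU : (U : Filter ℕ) ≤ atTop := Nat.hyperfilter_le_atTop
  have hlarge : ∀ᶠ R : ℕ in U, |m| ≤ R := hU (by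
    filter_upwards [eventually_ge_atTop m.natAbs] with R hR
    rw [← Int.natCast_natAbs]
    exact_mod_cast hR)
  have hdecay : ∀ᶠ R in U, ∀ x, |ψ R x| ≤ exp (2 * N) * exp (-|(x : ℝ)|) :=
    hlarge.mono fun R hR => h.abs_apply_le_exp_mul_exp (hbox R hR).1 (hbox R hR).2.1 hN hmN
      (hlt.trans_le (hbox R hR).2.2.1)
  obtain ⟨E', hE'⟩ := exists_tendsto_of_abs_le U (hlarge.mono fun R hR => (hbox R hR).1)
  choose φ hφ using fun x =>
    exists_tendsto_of_abs_le U (hlarge.mono fun R hR => (hbox R hR).2.1.abs_le_one x)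
  refine ⟨E', φ, ⟨isEigenfunction_of_tendsto hU (hlarge.mono fun R hR => (hbox R hR).2.1) hE' hφ,
    exp (2 * N), fun x => le_of_tendsto (hφ x).abs (hdecay.mono fun R hR => hR x)⟩, ?_⟩
  have hf_le : ∀ n, |f n| ≤ √(∑' n, f n ^ 2) := fun n =>
    abs_le_sqrt (hf.le_tsum n fun _ _ => sq_nonneg _)
  have hlim := tendsto_tsum_of_dominated_convergence (𝓕 := (U : Filter ℕ))
    (f := fun R n => f n * ψ R n) ((summable_exp_neg_abs.mul_left (exp (2 * N))).mul_left _)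
    (fun n => (hφ n).const_mul (f n)) (hdecay.mono fun R hR n => by
      rw [norm_mul, norm_eq_abs, norm_eq_abs]
      exact mul_le_mul (hf_le n) (hR n) (abs_nonneg _) (sqrt_nonneg _))
  exact abs_pos.1 (hθ.trans_le (ge_of_tendsto hlim.abs (hlarge.mono fun R hR =>
    (hbox R hR).2.2.2)))

end HasCoreDichotomy

/-! ### Anderson localization -/

/-- The Wronskian `φ (n + 1) χ n - φ n χ (n + 1)`. -/
def wronskian (φ χ : ℤ → ℝ) (n : ℤ) : ℝ := φ (n + 1) * χ n - φ n * χ (n + 1)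

lemma summable_mul_of_summable_sq {ι : Type*} {φ χ : ι → ℝ} (hφ : Summable fun n => φ n ^ 2)
    (hχ : Summable fun n => χ n ^ 2) : Summable fun n => φ n * χ n :=
  (hφ.add hχ).of_norm_bounded fun n => by
    rw [norm_mul, norm_eq_abs, norm_eq_abs, ← sq_abs (φ n), ← sq_abs (χ n)]
    nlinarith [two_mul_le_add_sq |φ n| |χ n|, sq_nonneg |φ n|, sq_nonneg |χ n|]

lemma summable_wronskian {φ χ : ℤ → ℝ} (hφ : Summable fun n => φ n ^ 2)
    (hχ : Summable fun n => χ n ^ 2) : Summable (wronskian φ χ) :=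
  have hshift {u : ℤ → ℝ} (hu : Summable fun n => u n ^ 2) : Summable fun n => u (n + 1) ^ 2 :=
    hu.comp_injective (add_left_injective 1)
  (summable_mul_of_summable_sq (hshift hφ) hχ).sub (summable_mul_of_summable_sq hφ (hshift hχ))

namespace IsEigenfunction

variable {f g φ χ : ℤ → ℝ} {E F : ℝ}

lemma sub (hφ : IsEigenfunction g E φ) (hχ : IsEigenfunction g E χ) :
    IsEigenfunction g E fun n => φ n - χ n := fun n => by
  linear_combination hφ n - hχ n

lemma const_mul (hφ : IsEigenfunction g E φ) (c : ℝ) :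
    IsEigenfunction g E fun n => c * φ n := fun n => by
  linear_combination c * hφ n

lemma eq_zero (hφ : IsEigenfunction g E φ) {k : ℤ} (hk : φ k = 0) (hk' : φ (k + 1) = 0) :
    φ = 0 := by
  suffices h : ∀ n, φ n = 0 ∧ φ (n + 1) = 0 from funext fun n => (h n).1
  intro n
  induction n using Int.inductionOn' (b := k) with
  | zero => exact ⟨hk, hk'⟩
  | succ n _ ih =>
    have := hφ (n + 1)
    simp only [add_sub_cancel_right, ih.1, ih.2] at this
    exact ⟨ih.2, by linarith⟩
  | pred n _ ih =>
    have := hφ n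
    simp only [ih.1, ih.2] at this
    exact ⟨by linarith, by simpa using ih.1⟩

lemma wronskian_sub_wronskian (hφ : IsEigenfunction g E φ) (hχ : IsEigenfunction f F χ) (n : ℤ) :
    wronskian φ χ n - wronskian φ χ (n - 1) = (E - F - (g n - f n)) * (φ n * χ n) := by
  simp only [wronskian, sub_add_cancel]
  linear_combination χ n * hφ n - φ n * hχ n

lemma wronskian_eq_zero (hφ : IsEigenfunction g E φ) (hχ : IsEigenfunction g E χ)
    (hφ2 : Summable fun n => φ n ^ 2) (hχ2 : Summable fun n => χ n ^ 2) (n : ℤ) :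
    wronskian φ χ n = 0 := by
  have hstep : ∀ k, wronskian φ χ k = wronskian φ χ (k - 1) := fun k => by
    simpa [sub_eq_zero] using hφ.wronskian_sub_wronskian hχ k
  have hconst : ∀ k, wronskian φ χ k = wronskian φ χ n := fun k => by
    induction k using Int.inductionOn' (b := n) with
    | zero => rfl
    | succ k _ ih => rw [hstep, add_sub_cancel_right, ih]
    | pred k _ ih => rw [← hstep, ih]
  exact tendsto_nhds_unique (tendsto_const_nhds.congr fun k => (hconst k).symm)
    (summable_wronskian hφ2 hχ2).tendsto_cofinite_zero

lemma exists_eq_const_mul (hφ : IsEigenfunction g E φ) (hχ : IsEigenfunction g E χ)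
    (hφ2 : Summable fun n => φ n ^ 2) (hχ2 : Summable fun n => χ n ^ 2) (hne : φ ≠ 0) :
    ∃ c : ℝ, ∀ n, χ n = c * φ n := by
  obtain ⟨k, hk⟩ := Function.ne_iff.1 hne
  rw [Pi.zero_apply] at hk
  have hw := hφ.wronskian_eq_zero hχ hφ2 hχ2 k
  have hzero := (hχ.sub (hφ.const_mul (χ k / φ k))).eq_zero (k := k) (by field_simp; ring)
    (by simp only [wronskian] at hw; field_simp; linarith)
  exact ⟨χ k / φ k, fun n => sub_eq_zero.1 (congrFun hzero n)⟩

lemma tsum_mul_eq_zero (hφ : IsEigenfunction g E φ) (hχ : IsEigenfunction g F χ)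
    (hφ2 : Summable fun n => φ n ^ 2) (hχ2 : Summable fun n => χ n ^ 2) (hne : E ≠ F) :
    ∑' n, φ n * χ n = 0 := by
  have hw := summable_wronskian hφ2 hχ2
  have hshift : ∑' n, wronskian φ χ (n - 1) = ∑' n, wronskian φ χ n :=
    (Equiv.subRight (1 : ℤ)).tsum_eq (wronskian φ χ)
  have hsum : ∑' n, (wronskian φ χ n - wronskian φ χ (n - 1)) = 0 :=
    (hw.tsum_sub (hw.comp_injective (sub_left_injective (b := 1)))).trans
      (sub_eq_zero.2 hshift.symm)
  simp_rw [hφ.wronskian_sub_wronskian hχ, sub_self, sub_zero, tsum_mul_left] at hsum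
  exact (mul_eq_zero.1 hsum).resolve_left (sub_ne_zero.2 hne)

end IsEigenfunction

section HilbertBasis

variable {ι κ 𝕜 E : Type*} [RCLike 𝕜] [NormedAddCommGroup E] [InnerProductSpace 𝕜 E]

lemma countable_of_hilbertBasis [Countable κ] (b : HilbertBasis ι 𝕜 E) (c : HilbertBasis κ 𝕜 E) :
    Countable ι := by
  refine Set.countable_univ_iff.1 ((Set.countable_iUnion fun k =>
    (b.summable_inner_mul_inner (c k) (c k)).countable_support).mono fun i _ => ?_)
  by_contra hi
  have hzero : c.repr (b i) = 0 := lp.ext (funext fun k => by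
    have hk : inner 𝕜 (c k) (b i) * inner 𝕜 (b i) (c k) = 0 := by
      by_contra hk
      exact hi (Set.mem_iUnion.2 ⟨k, hk⟩)
    simpa [HilbertBasis.repr_apply_apply] using
      (mul_eq_zero.1 hk).elim id inner_eq_zero_symm.1)
  exact b.orthonormal.ne_zero i (c.repr.map_eq_zero_iff.1 hzero)

lemma infinite_of_hilbertBasis [Infinite κ] (b : HilbertBasis ι 𝕜 E) (c : HilbertBasis κ 𝕜 E) :
    Infinite ι := by
  refine not_finite_iff_infinite.1 fun hfin => ?_
  have := Fintype.ofFinite ι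
  have := b.toOrthonormalBasis.toBasis.finiteDimensional_of_finite
  have := c.orthonormal.linearIndependent.finite
  exact not_finite κ

lemma exists_hilbertBasis_equiv [Countable κ] [Infinite κ] (b : HilbertBasis ι 𝕜 E)
    (c : HilbertBasis κ 𝕜 E) [CompleteSpace E] :
    ∃ (e : ℕ ≃ ι) (b' : HilbertBasis ℕ 𝕜 E), ∀ n, b' n = b (e n) := by
  have := countable_of_hilbertBasis b c
  have := infinite_of_hilbertBasis b c
  obtain ⟨e⟩ := nonempty_equiv_of_countable (α := ℕ) (β := ι)
  refine ⟨e, .mk (b.orthonormal.comp e e.injective) ?_, fun n => by simp⟩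
  rw [e.surjective.range_comp, b.dense_span]

end HilbertBasis

/-- The Hilbert space `ℓ²(ℤ)`. -/
abbrev EllTwo := lp (fun _ : ℤ => ℝ) 2

namespace EllTwo

lemma inner_eq_tsum_mul (f h : EllTwo) : inner ℝ f h = ∑' n, f n * h n := by
  simp [lp.inner_eq_tsum, mul_comm]

lemma hasSum_sq (f : EllTwo) : HasSum (fun n => f n ^ 2) (‖f‖ ^ 2) := by
  simpa [sq] using lp.hasSum_inner (𝕜 := ℝ) f f

lemma exists_hilbertBasis_nat {ι : Type*} (Φ : HilbertBasis ι ℝ EllTwo) :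
    ∃ (e : ℕ ≃ ι) (Ψ : HilbertBasis ℕ ℝ EllTwo), ∀ s, Ψ s = Φ (e s) :=
  exists_hilbertBasis_equiv Φ (.ofRepr (.refl ℝ EllTwo))

end EllTwo

namespace IsLocalizedEigenfunction

variable {g φ χ : ℤ → ℝ} {E : ℝ}

lemma summable_sq (h : IsLocalizedEigenfunction g E φ) : Summable fun n => φ n ^ 2 := by
  obtain ⟨A, hA⟩ := h.decay
  refine ((summable_exp_neg_mul_abs two_pos).mul_left (A ^ 2)).of_nonneg_of_le
    (fun n => sq_nonneg _) fun n => ?_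
  calc φ n ^ 2 = |φ n| ^ 2 := (sq_abs _).symm
    _ ≤ (A * exp (-|(n : ℝ)|)) ^ 2 := by gcongr; exact hA n
    _ = A ^ 2 * exp (-(2 * |(n : ℝ)|)) := by
        rw [mul_pow, ← exp_nat_mul, mul_neg, Nat.cast_ofNat]

lemma exists_norm_eq_one (h : IsLocalizedEigenfunction g E φ) (hne : φ ≠ 0) :
    ∃ χ : EllTwo, IsLocalizedEigenfunction g E χ ∧ ‖χ‖ = 1 := by
  let φ' : EllTwo := ⟨φ, memℓp_gen (by simpa using h.summable_sq)⟩
  have hφ' : φ' ≠ 0 := fun h0 => hne (congrArg (fun χ : EllTwo => (χ : ℤ → ℝ)) h0)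
  refine ⟨‖φ'‖⁻¹ • φ', ⟨h.eqn.const_mul ‖φ'‖⁻¹, ?_⟩, norm_smul_inv_norm hφ'⟩
  obtain ⟨A, hA⟩ := h.decay
  refine ⟨‖φ'‖⁻¹ * A, fun x => ?_⟩
  calc |‖φ'‖⁻¹ * φ x| = ‖φ'‖⁻¹ * |φ x| := by rw [abs_mul, abs_inv, abs_norm]
    _ ≤ ‖φ'‖⁻¹ * A * exp (-|(x : ℝ)|) := by
        rw [mul_assoc]
        gcongr
        exact hA x

end IsLocalizedEigenfunction

namespace HasCoreDichotomy

variable {g : ℤ → ℝ} {M : ℝ} {N₀ : ℕ}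

lemma exists_hilbertBasis (h : HasCoreDichotomy g (M + 2) N₀) (hg : ∀ n, |g n| ≤ M) :
    ∃ (S : Set ℝ) (Φ : HilbertBasis S ℝ EllTwo), ∀ E : S, IsLocalizedEigenfunction g E (Φ E) := by
  let S : Set ℝ := {E | ∃ φ : EllTwo, IsLocalizedEigenfunction g E φ ∧ ‖φ‖ = 1}
  choose Φ hΦ hnorm using fun E : S => E.2
  have hne : ∀ E, (Φ E : ℤ → ℝ) ≠ 0 := fun E h0 => by
    simpa [lp.ext (f := Φ E) (g := 0) h0] using hnorm E
  have horth : Orthonormal ℝ Φ := ⟨hnorm, fun E F hEF =>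
    (EllTwo.inner_eq_tsum_mul _ _).trans ((hΦ E).eqn.tsum_mul_eq_zero (hΦ F).eqn
      (hΦ E).summable_sq (hΦ F).summable_sq (Subtype.coe_injective.ne hEF))⟩
  have hbot : (Submodule.span ℝ (Set.range Φ))ᗮ = ⊥ := by
    refine (Submodule.eq_bot_iff _).2 fun f hf => lp.ext (funext fun m => ?_)
    by_contra hm
    obtain ⟨E, φ, hφ, hfφ⟩ :=
      h.exists_isLocalizedEigenfunction_tsum_ne_zero hg (EllTwo.hasSum_sq f).summable hm
    have hφ0 : φ ≠ 0 := fun h0 => hfφ (by simp [h0])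
    let E' : S := ⟨E, hφ.exists_norm_eq_one hφ0⟩
    obtain ⟨c, hc⟩ := (hΦ E').eqn.exists_eq_const_mul hφ.eqn (hΦ E').summable_sq hφ.summable_sq
      (hne E')
    have hf0 : ∑' n, Φ E' n * f n = 0 := by
      rw [← EllTwo.inner_eq_tsum_mul]
      exact hf _ (Submodule.subset_span ⟨E', rfl⟩)
    refine hfφ ?_
    calc ∑' n, f n * φ n = ∑' n, c * (Φ E' n * f n) := tsum_congr fun n => by rw [hc]; ring
      _ = 0 := by rw [tsum_mul_left, hf0, mul_zero]
  exact ⟨S, .mkOfOrthogonalEqBot horth hbot, fun E => by simpa using hΦ E⟩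

theorem hasAndersonLocalization (h : HasCoreDichotomy g (M + 2) N₀) (hg : ∀ n, |g n| ≤ M) :
    HasAndersonLocalization g := by
  obtain ⟨S, Φ, hΦ⟩ := h.exists_hilbertBasis hg
  obtain ⟨e, Ψ, hΨ⟩ := EllTwo.exists_hilbertBasis_nat Φ
  have hloc : ∀ s, IsLocalizedEigenfunction g (e s) (Ψ s) := fun s => hΨ s ▸ hΦ (e s)
  refine ⟨Ψ, fun _ => 0, 1, one_pos, fun s => ⟨e s, (hloc s).eqn⟩, fun s => ?_⟩
  simpa using (hloc s).decay

end HasCoreDichotomy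

/-! ### Almost reflection symmetric potentials -/

lemma tsum_abs_mul_le {ι : Type*} {φ χ : ι → ℝ} (hφ : Summable fun n => φ n ^ 2)
    (hχ : Summable fun n => χ n ^ 2) :
    ∑' n, |φ n * χ n| ≤ (∑' n, φ n ^ 2 + ∑' n, χ n ^ 2) / 2 := by
  rw [← hφ.tsum_add hχ, ← tsum_div_const]
  refine (summable_mul_of_summable_sq hφ hχ).abs.tsum_le_tsum (fun n => ?_)
    ((hφ.add hχ).div_const 2)
  rw [abs_mul, ← sq_abs (φ n), ← sq_abs (χ n)]
  linarith [two_mul_le_add_sq |φ n| |χ n|]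

lemma abs_le_pow_mul_of_recurrence {u : ℤ → ℝ} {K η : ℝ} {a : ℤ} (hK : 0 ≤ K) (hη : 0 ≤ η)
    (hu : ∀ n, |u (n + 1) + u (n - 1)| ≤ K * |u n| + η) (ha : |u a| ≤ η)
    (ha' : |u (a + 1)| ≤ (K + 2) * η) (k : ℕ) : |u (a + k)| ≤ (K + 2) ^ k * η := by
  suffices h : |u (a + k)| ≤ (K + 2) ^ k * η ∧ |u (a + k + 1)| ≤ (K + 2) ^ (k + 1) * η from h.1
  induction k with
  | zero => simpa using ⟨ha, ha'⟩
  | succ k ih =>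
    push_cast
    rw [← add_assoc]
    refine ⟨ih.2, ?_⟩
    have hone : η ≤ (K + 2) ^ k * η := le_mul_of_one_le_left hη (one_le_pow₀ (by linarith))
    have hstep := hu (a + k + 1)
    rw [add_sub_cancel_right] at hstep
    calc |u (a + k + 1 + 1)| ≤ |u (a + k + 1 + 1) + u (a + k)| + |u (a + k)| := by
          simpa using abs_sub (u (a + k + 1 + 1) + u (a + k)) (u (a + k))
      _ ≤ K * ((K + 2) ^ (k + 1) * η) + η + (K + 2) ^ k * η := by
          gcongr
          · exact hstep.trans (by gcongr; exact ih.2)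
          · exact ih.1
      _ ≤ K * ((K + 2) ^ (k + 1) * η) + (K + 2) * ((K + 2) ^ k * η) := by
          nlinarith [mul_nonneg hK (hη.trans hone)]
      _ ≤ (K + 2) ^ (k + 1 + 1) * η := by
          have : 0 ≤ (K + 2) ^ k * η := hη.trans hone
          rw [pow_succ _ (k + 1), pow_succ]
          nlinarith [mul_nonneg hK this]

lemma abs_le_or_abs_le_of_abs_mul_le_sq {x y η : ℝ} (hη : 0 ≤ η) (hxy : |x * y| ≤ η ^ 2) :
    |x| ≤ η ∨ |y| ≤ η := by
  rw [abs_mul] at hxy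
  by_contra! h
  nlinarith [h.1, h.2]

namespace IsEigenfunction

variable {f g φ χ : ℤ → ℝ} {E M η : ℝ} {a n : ℤ}

lemma reflect (hφ : IsEigenfunction g E φ) (n : ℤ) :
    IsEigenfunction (fun m => g (n - m)) E fun m => φ (n - m) := fun m => by
  have hsucc : n - (m + 1) = n - m - 1 := by ring
  have hpred : n - (m - 1) = n - m + 1 := by ring
  simp only [hsucc, hpred]
  linarith [hφ (n - m)]

lemma abs_energy_le (hφ : IsEigenfunction g E φ) (hg : ∀ n, |g n| ≤ M)
    (hφ2 : Summable fun n => φ n ^ 2) (hne : φ ≠ 0) : |E| ≤ M + 2 := by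
  obtain ⟨k, hk⟩ := Function.ne_iff.1 hne
  have hsmall : ∀ᶠ n in cocompact ℤ, φ n ^ 2 ≤ φ k ^ 2 := by
    rw [cocompact_eq_cofinite]
    exact hφ2.tendsto_cofinite_zero.eventually_le_const (sq_pos_of_ne_zero hk)
  obtain ⟨x, hx⟩ := (continuous_of_discreteTopology (f := fun n => φ n ^ 2)).exists_forall_ge' k
    hsmall
  exact abs_le_add_two_of_forall_abs_le hg (hφ x) (fun n => sq_le_sq.1 (hx n)) fun h0 =>
    (sq_pos_of_ne_zero hk).not_ge ((hx k).trans_eq (by rw [h0, zero_pow two_ne_zero]))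

/-- The Wronskian vanishes at `-∞` and changes by at most `η * |φ k * χ k|` at each `k`. -/
lemma abs_wronskian_le (hφ : IsEigenfunction g E φ) (hχ : IsEigenfunction f E χ)
    (hfg : ∀ n, |g n - f n| ≤ η) (hφ2 : Summable fun n => φ n ^ 2)
    (hχ2 : Summable fun n => χ n ^ 2) (n : ℤ) :
    |wronskian φ χ n| ≤ η * ∑' k, |φ k * χ k| := by
  have hη : 0 ≤ η := (abs_nonneg _).trans (hfg 0)
  have hinj : Function.Injective fun i : ℕ => n - (i : ℤ) := fun i j hij => by simpa using hij
  have habs := (summable_mul_of_summable_sq hφ2 hχ2).abs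
  have hbound : ∀ k : ℕ, |wronskian φ χ n - wronskian φ χ (n - k)| ≤ η * ∑' k, |φ k * χ k| := by
    intro k
    calc |wronskian φ χ n - wronskian φ χ (n - k)|
        = |∑ i ∈ Finset.range k, (wronskian φ χ (n - i) - wronskian φ χ (n - (i + 1 : ℕ)))| := by
          rw [Finset.sum_range_sub' (fun i : ℕ => wronskian φ χ (n - i)), Nat.cast_zero, sub_zero]
      _ ≤ ∑ i ∈ Finset.range k, η * |φ (n - i) * χ (n - i)| := by
          refine (Finset.abs_sum_le_sum_abs _ _).trans (Finset.sum_le_sum fun i _ => ?_)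
          rw [Nat.cast_succ, ← sub_sub, hφ.wronskian_sub_wronskian hχ, sub_self, zero_sub, neg_mul,
            abs_neg, abs_mul]
          gcongr
          exact hfg _
      _ ≤ η * ∑' k, |φ k * χ k| := by
          rw [← Finset.mul_sum]
          gcongr
          exact ((habs.comp_injective hinj).sum_le_tsum _ fun i _ => abs_nonneg _).trans
            (tsum_comp_le_tsum_of_inj habs (fun _ => abs_nonneg _) hinj)
  have hlim : Tendsto (fun k : ℕ => wronskian φ χ (n - k)) atTop (nhds 0) := by
    rw [← Nat.cofinite_eq_atTop]
    exact (summable_wronskian hφ2 hχ2).tendsto_cofinite_zero.comp hinj.tendsto_cofinite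
  simpa using le_of_tendsto (tendsto_const_nhds.sub hlim).abs (.of_forall hbound)

/-- At the centre of the reflection `m ↦ n - m` the Wronskian of `φ` with its reflection is a
product of the symmetric and the antisymmetric part of `φ`, so one of the two is small. -/
lemma exists_sign_of_abs_wronskian_le (hφ : IsEigenfunction g E φ) (hg : ∀ n, |g n| ≤ M)
    (hE : |E| ≤ M + 2) (hη : 0 ≤ η) (hn : n = 2 * a ∨ n = 2 * a + 1)
    (hW : |wronskian φ (fun m => φ (n - m)) a| ≤ η ^ 2) :
    ∃ τ : ℝ, |τ| = 1 ∧ |φ a - τ * φ (n - a)| ≤ 2 * η ∧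
      |φ (a + 1) - τ * φ (n - (a + 1))| ≤ (2 * M + 4) * (2 * η) := by
  have hM : 0 ≤ M := (abs_nonneg _).trans (hg 0)
  have hMη : η ≤ (2 * M + 4) * (2 * η) := by nlinarith
  rcases hn with rfl | rfl
  · have ha : 2 * a - a = a := by ring
    have ha' : 2 * a - (a + 1) = a - 1 := by ring
    rw [wronskian, ha, ha', mul_comm, ← mul_sub] at hW
    rw [ha, ha']
    rcases abs_le_or_abs_le_of_abs_mul_le_sq hη hW with h | h
    · have hsum : φ (a + 1) - -1 * φ (a - 1) = (E - g a) * φ a := by linarith [hφ a]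
      refine ⟨-1, by simp, ?_, ?_⟩
      · rw [show φ a - -1 * φ a = 2 * φ a by ring, abs_mul, abs_two]
        gcongr
      · rw [hsum, abs_mul]
        calc |E - g a| * |φ a| ≤ (2 * M + 2) * η := by
              gcongr
              linarith [abs_sub E (g a), hg a]
          _ ≤ (2 * M + 4) * (2 * η) := by nlinarith
    · exact ⟨1, by simp, by simpa using hη, by simpa using h.trans hMη⟩
  · have ha : 2 * a + 1 - a = a + 1 := by ring
    have ha' : 2 * a + 1 - (a + 1) = a := by ring
    rw [wronskian, ha, ha', show φ (a + 1) * φ (a + 1) - φ a * φ a =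
      (φ (a + 1) - φ a) * (φ (a + 1) + φ a) by ring] at hW
    rw [ha, ha']
    rcases abs_le_or_abs_le_of_abs_mul_le_sq hη hW with h | h
    · refine ⟨1, by simp, ?_, by simpa using h.trans hMη⟩
      rw [one_mul, abs_sub_comm]
      linarith
    · refine ⟨-1, by simp, ?_, ?_⟩
      · rw [neg_one_mul, sub_neg_eq_add, add_comm]
        linarith
      · rw [neg_one_mul, sub_neg_eq_add]
        exact h.trans hMη

lemma exists_sign_abs_sub_reflect_le (hφ : IsEigenfunction g E φ) (hg : ∀ n, |g n| ≤ M)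
    (hφ1 : HasSum (fun n => φ n ^ 2) 1) (hη : 0 ≤ η) (hη1 : η ≤ 1)
    (hn : n = 2 * a ∨ n = 2 * a + 1) (hdefect : ∀ m, |g (n - m) - g m| ≤ η ^ 2) :
    ∃ τ : ℝ, |τ| = 1 ∧
      ∀ k : ℕ, |φ (a + k) - τ * φ (n - (a + k))| ≤ (2 * M + 4) ^ k * (2 * η) := by
  have hM : 0 ≤ M := (abs_nonneg _).trans (hg 0)
  have hE : |E| ≤ M + 2 := hφ.abs_energy_le hg hφ1.summable (by rintro rfl; simpa using hφ1.tsum_eq)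
  have hψ := hφ.reflect n
  have hψ1 : HasSum (fun m => φ (n - m) ^ 2) 1 := (Equiv.subLeft n).hasSum_iff.2 hφ1
  have hW : |wronskian φ (fun m => φ (n - m)) a| ≤ η ^ 2 := by
    refine (hφ.abs_wronskian_le hψ (fun m => (abs_sub_comm _ _).trans_le (hdefect m)) hφ1.summable
      hψ1.summable a).trans (mul_le_of_le_one_right (sq_nonneg η) ?_)
    simpa [hφ1.tsum_eq, hψ1.tsum_eq] using tsum_abs_mul_le hφ1.summable hψ1.summable
  obtain ⟨τ, hτ, ha, ha'⟩ := hφ.exists_sign_of_abs_wronskian_le hg hE hη hn hW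
  refine ⟨τ, hτ, fun k => ?_⟩
  have hP : 2 * M + 4 = 2 * M + 2 + 2 := by ring
  rw [hP] at ha' ⊢
  refine abs_le_pow_mul_of_recurrence (u := fun m => φ m - τ * φ (n - m)) (by positivity)
    (by positivity) (fun m => ?_) ha ha' k
  calc |φ (m + 1) - τ * φ (n - (m + 1)) + (φ (m - 1) - τ * φ (n - (m - 1)))|
      = |(E - g m) * (φ m - τ * φ (n - m)) + τ * ((g (n - m) - g m) * φ (n - m))| := by
        congr 1
        linear_combination hφ m - τ * hψ m
    _ ≤ |E - g m| * |φ m - τ * φ (n - m)| + |g (n - m) - g m| * |φ (n - m)| := by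
        refine (abs_add_le _ _).trans_eq ?_
        rw [abs_mul, abs_mul τ, hτ, one_mul, abs_mul]
    _ ≤ (2 * M + 2) * |φ m - τ * φ (n - m)| + η ^ 2 * 1 := by
        gcongr
        · linarith [abs_sub E (g m), hg m]
        · exact hdefect m
        · exact (sq_le_one_iff_abs_le_one _).1 (le_hasSum hψ1 m fun _ _ => sq_nonneg _)
    _ ≤ (2 * M + 2) * |φ m - τ * φ (n - m)| + 2 * η := by nlinarith

end IsEigenfunction

/-! ### Absence of SULE -/

lemma limsup_le_of_eventually_le_of_nonneg {ι : Type*} {l : Filter ι} {u : ι → ℝ} {c : ℝ}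
    (hc : 0 ≤ c) (hu : ∀ᶠ i in l, u i ≤ c) : limsup u l ≤ c := by
  rw [limsup_eq]
  by_cases hbdd : BddBelow {a | ∀ᶠ i in l, u i ≤ a}
  · exact csInf_le hbdd hu
  · -- the infimum of a set of reals that is not bounded below is `0`
    rwa [Real.sInf_of_not_bddBelow hbdd]

lemma frequently_reflDefect_le {g : ℤ → ℝ} {b : ℝ} (hb : 0 ≤ b) (hg : b < deltaPot g) :
    ∃ᶠ n : ℤ in cofinite, reflDefect g n ≤ exp (-(b * |(n : ℝ)|)) := by
  by_contra! hlarge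
  refine hg.not_ge (limsup_le_of_eventually_le_of_nonneg hb ?_)
  filter_upwards [hlarge] with n hn
  have hlog := (lt_log_iff_exp_lt ((exp_pos _).trans hn)).2 hn
  exact div_le_of_le_mul₀ (abs_nonneg _) hb (by rw [reflDefect] at hlog; linarith)

namespace EllTwo

variable {ι : Type*}

lemma hasSum_sq_apply_index (Φ : HilbertBasis ι ℝ EllTwo) (m : ℤ) :
    HasSum (fun s => Φ s m ^ 2) 1 := by
  classical
  simpa [lp.inner_single_right, lp.inner_single_left, real_inner_comm, sq] using
    Φ.hasSum_inner_mul_inner (lp.single 2 m (1 : ℝ)) (lp.single 2 m (1 : ℝ))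

lemma hasSum_sq_apply (Φ : HilbertBasis ι ℝ EllTwo) (s : ι) :
    HasSum (fun m => Φ s m ^ 2) 1 := by
  simpa [Φ.orthonormal.1 s] using hasSum_sq (Φ s)

variable {w : ℤ → ℝ}

lemma summable_mul_sq_apply (Φ : HilbertBasis ι ℝ EllTwo) (hw : ∀ x, 0 ≤ w x) (hsum : Summable w)
    (s : ι) : Summable fun x => w x * Φ s x ^ 2 :=
  hsum.of_nonneg_of_le (fun x => mul_nonneg (hw x) (sq_nonneg _)) fun x =>
    mul_le_of_le_one_right (hw x) (le_hasSum (hasSum_sq_apply Φ s) x fun _ _ => sq_nonneg _)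

lemma summable_tsum_mul_sq_apply (Φ : HilbertBasis ι ℝ EllTwo) (hw : ∀ x, 0 ≤ w x)
    (hsum : Summable w) : Summable fun s => ∑' x, w x * Φ s x ^ 2 := by
  have hinner := summable_mul_sq_apply Φ hw hsum
  refine summable_of_sum_le (c := ∑' x, w x)
    (fun s => tsum_nonneg fun x => mul_nonneg (hw x) (sq_nonneg _)) fun F => ?_
  rw [← Summable.tsum_finsetSum fun s _ => hinner s]
  refine Summable.tsum_le_tsum (fun x => ?_) (summable_sum fun s _ => hinner s) hsum
  rw [← Finset.mul_sum]
  exact mul_le_of_le_one_right (hw x)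
    (sum_le_hasSum F (fun _ _ => sq_nonneg _) (hasSum_sq_apply_index Φ x))

end EllTwo

/-- Jensen's inequality for `x ↦ x⁻¹`, from its tangent line at `B`. -/
lemma inv_le_of_hasSum_inv_mul {ι : Type*} {p w v : ι → ℝ} {A B : ℝ} (hp : ∀ i, 0 ≤ p i)
    (hp1 : HasSum p 1) (hw : ∀ i, 0 < w i) (hwv : ∀ i, w i * p i ≤ v i) (hB : 0 < B)
    (hv : HasSum v B) (hA : HasSum (fun i => (w i)⁻¹ * p i) A) : B⁻¹ ≤ A := by
  have htangent : ∀ i, 2 * B⁻¹ * p i - B⁻¹ ^ 2 * v i ≤ (w i)⁻¹ * p i := fun i => by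
    have hline : 2 * B⁻¹ - B⁻¹ ^ 2 * w i ≤ (w i)⁻¹ := by
      have hsq := mul_nonneg (hw i).le (sq_nonneg ((w i)⁻¹ - B⁻¹))
      have hcancel := mul_inv_cancel₀ (hw i).ne'
      linear_combination hsq + ((w i)⁻¹ - 2 * B⁻¹) * hcancel
    nlinarith [mul_le_mul_of_nonneg_right hline (hp i),
      mul_le_mul_of_nonneg_left (hwv i) (sq_nonneg B⁻¹)]
  calc B⁻¹ = 2 * B⁻¹ * 1 - B⁻¹ ^ 2 * B := by field_simp; norm_num
    _ ≤ A := hasSum_le htangent ((hp1.mul_left _).sub (hv.mul_left _)) hA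

lemma half_abs_le_abs_sub_or_reflect {a n c : ℤ} {k : ℕ} (hn : n = 2 * a ∨ n = 2 * a + 1)
    (hk : 1 ≤ k) : (k : ℝ) / 2 ≤ |((a + k : ℤ) : ℝ) - c| ∨
      (k : ℝ) / 2 ≤ |((n - (a + k) : ℤ) : ℝ) - c| := by
  have hdist : (k : ℤ) ≤ 2 * |a + k - c| ∨ (k : ℤ) ≤ 2 * |n - (a + k) - c| := by
    rcases abs_cases (a + k - c) with h | h <;> rcases abs_cases (n - (a + k) - c) with h' | h' <;>
      omega
  refine hdist.imp (fun h => ?_) fun h => ?_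
  all_goals
    have hcast := (Int.cast_le (R := ℝ)).2 h
    push_cast at hcast ⊢
    linarith

lemma abs_half_add_le {n : ℤ} {k : ℕ} (hn : 2 ≤ |n|) (hk : (k : ℝ) ≤ |(n : ℝ)| / 4 + 1) :
    |((n / 2 + k : ℤ) : ℝ)| ≤ 2 * |(n : ℝ)| := by
  have hhalf : 2 * |n / 2| ≤ |n| + 1 := by
    rcases abs_cases n with h | h <;> rcases abs_cases (n / 2) with h' | h' <;> omega
  have hhalf' : 2 * |((n / 2 : ℤ) : ℝ)| ≤ |(n : ℝ)| + 1 := by exact_mod_cast hhalf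
  have hn' : (2 : ℝ) ≤ |(n : ℝ)| := by exact_mod_cast hn
  have htri := abs_add_le ((n / 2 : ℤ) : ℝ) k
  rw [Nat.abs_cast] at htri
  rw [Int.cast_add, Int.cast_natCast]
  linarith

lemma abs_apply_le_of_abs_sub_reflect_le {φ : ℤ → ℝ} {a c n : ℤ} {k : ℕ} {D γ r τ : ℝ}
    (hγ : 0 ≤ γ) (hn : n = 2 * a ∨ n = 2 * a + 1) (hk : 1 ≤ k)
    (hdecay : ∀ m : ℤ, |φ m| ≤ D * exp (-γ * |(m : ℝ) - c|)) (hτ : |τ| = 1)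
    (hrefl : |φ (a + k) - τ * φ (n - (a + k))| ≤ r) :
    |φ (a + k)| ≤ D * exp (-(γ * k / 2)) + r := by
  have hD : 0 ≤ D := by simpa using (abs_nonneg _).trans (hdecay c)
  have hfar : ∀ m : ℤ, (k : ℝ) / 2 ≤ |(m : ℝ) - c| → |φ m| ≤ D * exp (-(γ * k / 2)) :=
    fun m hm => (hdecay m).trans (by gcongr; nlinarith)
  rcases half_abs_le_abs_sub_or_reflect (c := c) hn hk with hdist | hdist
  · linarith [hfar _ hdist, abs_nonneg (φ (a + k) - τ * φ (n - (a + k)))]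
  · have htri := abs_sub_abs_le_abs_sub (φ (a + k)) (τ * φ (n - (a + k)))
    rw [abs_mul, hτ, one_mul] at htri
    linarith [hfar _ hdist]

/-- The distance `k` to the centre of a reflection is chosen proportional to `x`, large enough for
the decay `exp (-γ k / 2)`, small enough for `exp (-b x / 2)` to beat the growth `P ^ k`. -/
lemma exists_rate_forall_exists_nat {P b γ : ℝ} (hP : 1 < P) (hb : 0 < b) (hγ : 0 < γ) :
    ∃ κ, 0 < κ ∧ κ ≤ γ / 8 ∧ ∀ x, 0 ≤ x → ∃ k : ℕ, 1 ≤ k ∧ (k : ℝ) ≤ x / 4 + 1 ∧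
      exp (-(γ * k / 2)) ≤ exp (-(κ * x)) ∧ P ^ k * exp (-(b * x / 2)) ≤ P * exp (-(κ * x)) := by
  have hlogP : 0 < log P := log_pos hP
  set c := min (b / (4 * log P)) (1 / 4)
  have hc : 0 < c := lt_min (by positivity) (by norm_num)
  have hclog : c * (4 * log P) ≤ b := (le_div_iff₀ (by positivity)).1 (min_le_left _ _)
  have hc4 : c ≤ 1 / 4 := min_le_right _ _
  set κ := min (γ * c / 2) (b / 4)
  have hκγ : κ ≤ γ * c / 2 := min_le_left _ _
  have hκb : κ ≤ b / 4 := min_le_right _ _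
  refine ⟨κ, lt_min (by positivity) (by positivity), by nlinarith, fun x hx =>
    ⟨⌊c * x⌋₊ + 1, by omega, ?_, exp_le_exp.2 ?_, ?_⟩⟩
  · push_cast
    nlinarith [Nat.floor_le (mul_nonneg hc.le hx)]
  · push_cast
    nlinarith [Nat.lt_floor_add_one (c * x), mul_le_mul_of_nonneg_right hκγ hx]
  · have hfloor := mul_le_mul_of_nonneg_right (Nat.floor_le (mul_nonneg hc.le hx)) hlogP.le
    have hκx := mul_le_mul_of_nonneg_right hκb hx
    have hcx := mul_le_mul_of_nonneg_right hclog hx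
    rw [pow_succ', mul_assoc, ← rpow_natCast, rpow_def_of_pos (by linarith), ← exp_add]
    gcongr
    linarith

lemma exp_mul_exp_neg_sq (x y : ℝ) : (exp x * exp (-y)) ^ 2 = exp (2 * (x - y)) := by
  rw [← exp_add, ← exp_nat_mul, Nat.cast_two, sub_eq_add_neg]

lemma sq_le_of_le_exp_near {C D y κ t x : ℝ} (hD : 0 ≤ D) (hκ : 0 ≤ κ) (ht : 0 ≤ t)
    (htx : t ≤ 4 * x) (hy : |y| ≤ C * exp (κ / 12 * t) * exp (-(κ * x)) + D * exp (-(κ * x))) :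
    y ^ 2 ≤ (C + D) ^ 2 * (exp (-(κ * x)) * exp (-(κ / 12 * t))) := by
  have hone : 1 ≤ exp (κ / 12 * t) := one_le_exp (by positivity)
  calc y ^ 2 = |y| ^ 2 := (sq_abs y).symm
    _ ≤ ((C + D) * (exp (κ / 12 * t) * exp (-(κ * x)))) ^ 2 := by
        gcongr
        nlinarith [mul_le_mul_of_nonneg_left hone
          (mul_nonneg hD (exp_pos (-(κ * x))).le)]
    _ = (C + D) ^ 2 * exp (2 * (κ / 12 * t - κ * x)) := by rw [mul_pow, exp_mul_exp_neg_sq]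
    _ ≤ (C + D) ^ 2 * (exp (-(κ * x)) * exp (-(κ / 12 * t))) := by
        rw [← exp_add]
        gcongr
        nlinarith

lemma sq_le_of_le_exp_far {C y κ γ t x d : ℝ} (hκ : 0 ≤ κ) (hκγ : κ ≤ γ / 8) (ht : 0 ≤ t)
    (htx : 4 * x ≤ t) (hd : t / 2 ≤ d) (hy : |y| ≤ C * exp (κ / 12 * t) * exp (-γ * d)) :
    y ^ 2 ≤ C ^ 2 * (exp (-(κ * x)) * exp (-(κ / 12 * t))) := by
  calc y ^ 2 = |y| ^ 2 := (sq_abs y).symm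
    _ ≤ (C * exp (κ / 12 * t) * exp (-γ * d)) ^ 2 := by gcongr
    _ = C ^ 2 * exp (2 * (κ / 12 * t - γ * d)) := by
        rw [mul_assoc, mul_pow, neg_mul, exp_mul_exp_neg_sq]
    _ ≤ C ^ 2 * (exp (-(κ * x)) * exp (-(κ / 12 * t))) := by
        rw [← exp_add]
        gcongr
        have := mul_le_mul_of_nonneg_left hd (show 0 ≤ γ by linarith)
        nlinarith [mul_le_mul_of_nonneg_right hκγ ht]

/-- `Φ` is a basis of eigenfunctions of `H_g` witnessing SULE, with localization centres `ns` and
decay rate `γ`; the data of `HasSULE` made explicit. -/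
structure IsSULEBasis (g : ℤ → ℝ) (Φ : HilbertBasis ℕ ℝ EllTwo) (ns : ℕ → ℤ) (γ : ℝ) : Prop where
  rate_pos : 0 < γ
  isEigenfunction : ∀ s, ∃ E, IsEigenfunction g E fun n => Φ s n
  exists_abs_le : ∀ ε, 0 < ε → ∃ C, ∀ (s : ℕ) (n : ℤ),
    |Φ s n| ≤ C * exp (ε * |(ns s : ℝ)|) * exp (-γ * |(n : ℝ) - ns s|)

namespace IsSULEBasis

variable {g : ℤ → ℝ} {Φ : HilbertBasis ℕ ℝ EllTwo} {ns : ℕ → ℤ} {b κ γ M : ℝ}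

lemma exists_pos_abs_le (h : IsSULEBasis g Φ ns γ) {ε : ℝ} (hε : 0 < ε) : ∃ C, 0 < C ∧
    ∀ (s : ℕ) (n : ℤ), |Φ s n| ≤ C * exp (ε * |(ns s : ℝ)|) * exp (-γ * |(n : ℝ) - ns s|) := by
  obtain ⟨C, hC⟩ := h.exists_abs_le ε hε
  exact ⟨max C 1, by positivity, fun s n => (hC s n).trans (by gcongr; exact le_max_left _ _)⟩

lemma exists_exp_mul_sq_le (h : IsSULEBasis g Φ ns γ) (hκ : 0 < κ) (hκγ : κ ≤ γ) :
    ∃ C, 0 < C ∧ ∀ s (x : ℤ), exp (κ / 2 * |(x : ℝ)|) * Φ s x ^ 2 ≤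
      C * exp (κ * |(ns s : ℝ)|) * exp (-(γ * |((x - ns s : ℤ) : ℝ)|)) := by
  obtain ⟨C, hC, hdecay⟩ := h.exists_pos_abs_le (show 0 < κ / 4 by positivity)
  refine ⟨C ^ 2, by positivity, fun s x => ?_⟩
  calc exp (κ / 2 * |(x : ℝ)|) * Φ s x ^ 2
      ≤ exp (κ / 2 * |(x : ℝ)|) *
          (C * exp (κ / 4 * |(ns s : ℝ)|) * exp (-γ * |(x : ℝ) - ns s|)) ^ 2 := by
        rw [← sq_abs (Φ s x)]
        gcongr
        exact hdecay s x
    _ = C ^ 2 * exp (κ / 2 * |(x : ℝ)| + 2 * (κ / 4 * |(ns s : ℝ)| - γ * |(x : ℝ) - ns s|)) := by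
        rw [mul_assoc C, mul_pow, neg_mul, exp_mul_exp_neg_sq, exp_add]
        ring
    _ ≤ C ^ 2 * exp (κ * |(ns s : ℝ)| + -(γ * |((x - ns s : ℤ) : ℝ)|)) := by
        rw [Int.cast_sub]
        gcongr C ^ 2 * exp ?_
        have htri : |(x : ℝ)| ≤ |(x : ℝ) - ns s| + |(ns s : ℝ)| := by
          simpa using abs_add_le ((x : ℝ) - ns s) (ns s)
        have hdist := abs_nonneg ((x : ℝ) - ns s)
        nlinarith [mul_le_mul_of_nonneg_right hκγ hdist, mul_le_mul_of_nonneg_left htri hκ.le,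
          mul_nonneg hκ.le hdist]
    _ = C ^ 2 * exp (κ * |(ns s : ℝ)|) * exp (-(γ * |((x - ns s : ℤ) : ℝ)|)) := by
        rw [exp_add, mul_assoc]

/-- A basis function centred at `ns s` has mass at least of order `exp (-κ * |ns s|)` with respect
to the finite weight `exp (-κ * |x| / 2)`, and by Parseval these masses are summable. -/
lemma summable_exp_neg_mul_abs_center (h : IsSULEBasis g Φ ns γ) (hκ : 0 < κ) :
    Summable fun s => exp (-(κ * |(ns s : ℝ)|)) := by
  wlog hκγ : κ ≤ γ generalizing κ
  · refine (this h.rate_pos le_rfl).of_nonneg_of_le (fun s => (exp_pos _).le) fun s => ?_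
    gcongr
    exact (not_le.1 hκγ).le
  obtain ⟨C, hC, hmajor⟩ := h.exists_exp_mul_sq_le hκ hκγ
  set G := ∑' n : ℤ, exp (-(γ * |(n : ℝ)|))
  have hG : HasSum (fun n : ℤ => exp (-(γ * |(n : ℝ)|))) G :=
    (summable_exp_neg_mul_abs h.rate_pos).hasSum
  have hG_pos : 0 < G := hG.summable.tsum_pos (fun n => (exp_pos _).le) 0 (exp_pos _)
  have hweight := summable_exp_neg_mul_abs (half_pos hκ)
  refine ((EllTwo.summable_tsum_mul_sq_apply Φ (fun x => (exp_pos _).le) hweight).mul_left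
    (C * G)).of_nonneg_of_le (fun s => (exp_pos _).le) fun s => ?_
  have hmass : HasSum (fun x : ℤ => (exp (κ / 2 * |(x : ℝ)|))⁻¹ * Φ s x ^ 2)
      (∑' x : ℤ, exp (-(κ / 2 * |(x : ℝ)|)) * Φ s x ^ 2) := by
    simpa only [exp_neg] using
      (EllTwo.summable_mul_sq_apply Φ (fun x => (exp_pos _).le) hweight s).hasSum
  have hinv := inv_le_of_hasSum_inv_mul (fun x => sq_nonneg (Φ s x)) (EllTwo.hasSum_sq_apply Φ s)
    (fun x : ℤ => exp_pos (κ / 2 * |(x : ℝ)|)) (hmajor s) (by positivity)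
    (((Equiv.subRight (ns s)).hasSum_iff.2 hG).mul_left (C * exp (κ * |(ns s : ℝ)|))) hmass
  calc exp (-(κ * |(ns s : ℝ)|)) = C * G * (C * exp (κ * |(ns s : ℝ)|) * G)⁻¹ := by
        rw [exp_neg]
        field_simp
    _ ≤ C * G * ∑' x : ℤ, exp (-(κ / 2 * |(x : ℝ)|)) * Φ s x ^ 2 := by gcongr

/-- Each `Φ s` is almost symmetric or antisymmetric under `m ↦ n - m`, so it is as large at a point
`m` at distance `≍ |n|` from the centre of reflection as at the mirror image of `m`; being localized
at a single centre, it is small at `m`. -/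
lemma exists_forall_sq_apply_le (h : IsSULEBasis g Φ ns γ) (hg : ∀ n, |g n| ≤ M) (hb : 0 < b) :
    ∃ κ ε C, 0 < κ ∧ 0 < ε ∧ ∀ n : ℤ, 2 ≤ |n| →
      (∀ m, |g (n - m) - g m| ≤ exp (-(b * |(n : ℝ)|))) →
      ∃ m, ∀ s, Φ s m ^ 2 ≤ C * (exp (-(κ * |(n : ℝ)|)) * exp (-(ε * |(ns s : ℝ)|))) := by
  have hM : 0 ≤ M := (abs_nonneg _).trans (hg 0)
  obtain ⟨κ, hκ, hκγ, hrate⟩ :=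
    exists_rate_forall_exists_nat (show 1 < 2 * M + 4 by linarith) hb h.rate_pos
  obtain ⟨C, hC, hdecay⟩ := h.exists_pos_abs_le (show 0 < κ / 12 by positivity)
  refine ⟨κ, κ / 12, (C + 2 * (2 * M + 4)) ^ 2, hκ, by positivity, fun n hn hdefect => ?_⟩
  obtain ⟨k, hk, hkn, hexp, hpow⟩ := hrate |(n : ℝ)| (abs_nonneg _)
  refine ⟨n / 2 + k, fun s => ?_⟩
  have hhalf : n = 2 * (n / 2) ∨ n = 2 * (n / 2) + 1 := by omega
  rcases le_total |(ns s : ℝ)| (4 * |(n : ℝ)|) with hnear | hfar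
  · obtain ⟨E, hE⟩ := h.isEigenfunction s
    obtain ⟨τ, hτ, hrefl⟩ := hE.exists_sign_abs_sub_reflect_le hg (EllTwo.hasSum_sq_apply Φ s)
      (exp_pos (-(b * |(n : ℝ)| / 2))).le (exp_le_one_iff.2 (neg_nonpos.2 (by positivity))) hhalf
      (fun m => (hdefect m).trans_eq (by rw [← exp_nat_mul]; push_cast; ring_nf))
    refine sq_le_of_le_exp_near (by positivity) hκ.le (abs_nonneg _) hnear
      ((abs_apply_le_of_abs_sub_reflect_le h.rate_pos.le hhalf hk (hdecay s) hτ
        (hrefl k)).trans ?_)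
    have hdecay_k := mul_le_mul_of_nonneg_left hexp
      (show 0 ≤ C * exp (κ / 12 * |(ns s : ℝ)|) by positivity)
    linarith
  · refine (sq_le_of_le_exp_far hκ.le hκγ (abs_nonneg _) hfar ?_ (hdecay s _)).trans ?_
    · rw [abs_sub_comm]
      linarith [abs_sub_abs_le_abs_sub (ns s : ℝ) (n / 2 + k : ℤ), abs_half_add_le hn hkn]
    · gcongr
      linarith

end IsSULEBasis

theorem not_hasSULE_of_deltaPot_pos {g : ℤ → ℝ} {M : ℝ} (hg : ∀ n, |g n| ≤ M)
    (hδ : 0 < deltaPot g) : ¬ HasSULE g := by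
  rintro ⟨Φ, ns, γ, hγ, heigen, hdecay⟩
  have hΦ : IsSULEBasis g Φ ns γ := ⟨hγ, heigen, hdecay⟩
  obtain ⟨κ, ε, C, hκ, hε, hsmall⟩ := hΦ.exists_forall_sq_apply_le hg (half_pos hδ)
  set T := ∑' s, exp (-(ε * |(ns s : ℝ)|))
  have hsum : HasSum (fun s => exp (-(ε * |(ns s : ℝ)|))) T :=
    (hΦ.summable_exp_neg_mul_abs_center hε).hasSum
  have hlim : Tendsto (fun n : ℤ => C * (exp (-(κ * |(n : ℝ)|)) * T)) cofinite (nhds 0) := by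
    simpa using ((tendsto_exp_neg_atTop_nhds_zero.comp
      (tendsto_abs_intCast_cofinite.const_mul_atTop hκ)).mul_const T).const_mul C
  have hlarge : ∀ᶠ n : ℤ in cofinite, 2 ≤ |n| := by
    filter_upwards [tendsto_abs_intCast_cofinite.eventually_ge_atTop 2] with n hn
    exact_mod_cast hn
  obtain ⟨n, hdefect, hn, hlt⟩ := ((frequently_reflDefect_le (half_pos hδ).le
    (half_lt_self hδ)).and_eventually (hlarge.and (hlim.eventually_lt_const one_pos))).exists
  obtain ⟨m, hm⟩ := hsmall n hn fun m => (abs_sub_le_reflDefect hg n m).trans hdefect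
  exact hlt.not_ge (hasSum_le hm (EllTwo.hasSum_sq_apply_index Φ m)
    ((hsum.mul_left _).mul_left C))

theorem exists_localized_without_SULE
    (b L₀ : ℝ) (hb : 0 < b) (hbL : b < L₀) :
    ∃ g : ℤ → ℝ, (∃ M : ℝ, ∀ n : ℤ, |g n| ≤ M) ∧
      deltaPot g = b ∧
      (∀ E : ℝ, L₀ ≤ LyapSup g E) ∧
      HasAndersonLocalization g ∧
      ¬ HasSULE g := by
  obtain ⟨q, K, h, hL⟩ := exists_largeCoupling hb L₀
  have hbound := h.admissible.abs_potential_le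
  have hδ : deltaPot h.potential = b := h.admissible.deltaPot_potential hb
  exact ⟨h.potential, ⟨_, hbound⟩, hδ, h.le_lyapSup hL,
    h.hasCoreDichotomy.hasAndersonLocalization hbound,
    not_hasSULE_of_deltaPot_pos hbound (hb.trans_eq hδ.symm)⟩
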